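/- arXiv:2501.07090 — 2 statements merged into one kernel-verified Lean document; each statement's English description precedes it below -/
import Mathlib

section
/- If an equilateral convex pentagon (all five side lengths equal) admits a monohedral tiling of the Euclidean plane, then for some labeling of its interior angles A, B, C, D, E at consecutive vertices in cyclic order (possibly with the orientation reversed), at least one of the following holds: A + B + C = 360° (Type 1), or A + B + D = 360° (Type 2), or both 2B + A = 360° and 2E + C = 360° (Type 7). -/
open EuclideanGeometry

noncomputable section

/-- The Euclidean plane. -/
abbrev Plane : Type := EuclideanSpace ℝ (Fin 2)

/-- A convex polygon with `n` vertices: `n` points of the plane in strictly convex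
position, labeled in cyclic order (each segment joining cyclically consecutive
vertices lies on the boundary of the convex hull). -/
structure ConvexPolygon (n : ℕ) [NeZero n] where
  V : Fin n → Plane
  strictlyConvex : ∀ i : Fin n, V i ∉ convexHull ℝ (V '' {j | j ≠ i})
  cyclic : ∀ i : Fin n, segment ℝ (V i) (V (i + 1)) ⊆ frontier (convexHull ℝ (Set.range V))

namespace ConvexPolygon

variable {n : ℕ} [NeZero n]

/-- The polygon, as a subset of the plane (the convex hull of its vertices). -/
def carrier (P : ConvexPolygon n) : Set Plane := convexHull ℝ (Set.range P.V)

/-- The interior angle (in radians) at the `i`-th vertex. -/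
def angle (P : ConvexPolygon n) (i : Fin n) : ℝ :=
  EuclideanGeometry.angle (P.V (i - 1)) (P.V i) (P.V (i + 1))

/-- The length of the side joining the `i`-th vertex to the next one. -/
def side (P : ConvexPolygon n) (i : Fin n) : ℝ := dist (P.V i) (P.V (i + 1))

end ConvexPolygon

/-- A convex pentagon.  Its angles `A, B, C, D, E` are `angle 0, …, angle 4` and
its sides `a, b, c, d, e` are `side 0, …, side 4`. -/
abbrev ConvexPentagon := ConvexPolygon 5

/-- `t` is an isometric copy of `P`. -/
def IsIsometricCopy (t P : Set Plane) : Prop :=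
  ∃ g : Plane ≃ᵢ Plane, t = g '' P

/-- `T` is a monohedral tiling of the plane by isometric copies of `P`:
the tiles cover the plane and have pairwise disjoint interiors. -/
def IsMonohedralTiling (P : Set Plane) (T : Set (Set Plane)) : Prop :=
  (∀ t ∈ T, IsIsometricCopy t P) ∧ ⋃₀ T = Set.univ ∧
    T.Pairwise fun t s => interior t ∩ interior s = ∅

/-- `x` is a vertex (extreme point) of the convex polygonal tile `t`. -/
def IsVertexOf (x : Plane) (t : Set Plane) : Prop := x ∈ Set.extremePoints ℝ t

/-- `e` is an edge (a full side) of the convex polygonal tile `t`: a segment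
joining two distinct vertices of `t` that lies on the boundary of `t`. -/
def IsEdgeOf (e t : Set Plane) : Prop :=
  ∃ x y : Plane, x ≠ y ∧ IsVertexOf x t ∧ IsVertexOf y t ∧
    e = segment ℝ x y ∧ e ⊆ frontier t

/-- A tiling by convex polygons is edge-to-edge if any two distinct tiles meet in
the empty set, a common vertex, or a common edge. -/
def IsEdgeToEdge (T : Set (Set Plane)) : Prop :=
  ∀ t ∈ T, ∀ s ∈ T, t ≠ s →
    t ∩ s = ∅ ∨
    (∃ x : Plane, t ∩ s = {x} ∧ IsVertexOf x t ∧ IsVertexOf x s) ∨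
    (∃ e : Set Plane, t ∩ s = e ∧ IsEdgeOf e t ∧ IsEdgeOf e s)

/-- A tiling is periodic if translations by two linearly independent vectors map
every tile onto a tile. -/
def IsPeriodic (T : Set (Set Plane)) : Prop :=
  ∃ u v : Plane, LinearIndependent ℝ ![u, v] ∧
    (∀ t ∈ T, (fun x => x + u) '' t ∈ T) ∧ (∀ t ∈ T, (fun x => x + v) '' t ∈ T)

/-- An isometry is a symmetry of the tiling `T` if it maps the tiles of `T` onto
the tiles of `T`. -/
def IsSymmetryOf (g : Plane ≃ᵢ Plane) (T : Set (Set Plane)) : Prop :=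
  (fun t => g '' t) '' T = T

/-- A tiling is isohedral if its symmetry group acts transitively on the tiles. -/
def IsIsohedral (T : Set (Set Plane)) : Prop :=
  ∀ t ∈ T, ∀ s ∈ T, ∃ g : Plane ≃ᵢ Plane, IsSymmetryOf g T ∧ g '' t = s

/-- Two tiles are equivalent if some symmetry of the tiling maps one onto the other. -/
def SymEquiv (T : Set (Set Plane)) (t s : Set Plane) : Prop :=
  ∃ g : Plane ≃ᵢ Plane, IsSymmetryOf g T ∧ g '' t = s

/-- A direct (orientation-preserving) isometry of the plane: an affine isometry
whose linear part has positive determinant. -/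
def IsDirectIsometry (g : Plane ≃ᵢ Plane) : Prop :=
  ∃ (L : Plane ≃ₗᵢ[ℝ] Plane) (w : Plane),
    0 < LinearMap.det (L.toLinearEquiv : Plane →ₗ[ℝ] Plane) ∧ ∀ x, g x = L x + w

/-- Relabeling of the vertices of a pentagon: a cyclic shift by `k`, with the
orientation reversed when `r = true`. -/
def relabel (k : Fin 5) (r : Bool) (i : Fin 5) : Fin 5 := if r then k - i else k + i

/-!
If two angles of the pentagon sum to `π`, the other three sum to `2π`, which is Type 1 or Type 2.
Otherwise three corners filling the full angle at a point of the tiling are never of three different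
kinds, so they are two copies of an angle `x` and one of an angle `y`.

Give each corner `α` of a tile the charge `1 - 2 α / π`, so that a tile has total charge `-1`. Where
corners fill a full angle or half of one, their charges add up to something nonnegative, except that
three corners filling a full angle have total charge `-1`. Averaging over large discs shows that
if `w ≥ 0` is a weight on the corners with total weight at least `1` on each such triple, then the
total weight of a tile is at least `1`. Since a nonnegative weight can be chosen freely subject to
the triples that the angles allow, this forces many angle relations `2 x + y = 2 π`.

An equilateral pentagon has two degrees of freedom, and its closing equation restricts which of
these relations can hold together. Label the angles so that `A` is the largest and `C ≥ D`; then
`A ≥ C ≥ D ≥ E ≥ B`. What remains is either `2 A + B = 2 C + E = 2 π`, which is Type 7, or that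
`2 A + B = 2 π` and `2 C + D = 2 π` are the only relations. The last case is excluded by a weight
that depends on the neighbouring tiles and has total `3 / 4` on each tile.
-/

namespace EquilateralTiling

open Real Set

/-! ### Interior angles of an equilateral convex pentagon -/

/-- The interior angles of an equilateral convex pentagon, in cyclic order.  The closing condition
says that the five unit sides add up to zero: consecutive sides turn by `π` minus an angle, which is
where the alternating signs come from, and `φ` is the arbitrary direction they are measured in. -/
structure EquilateralAngles (A B C D E : ℝ) : Prop where
  A_mem : A ∈ Ioo 0 π
  B_mem : B ∈ Ioo 0 π
  C_mem : C ∈ Ioo 0 π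
  D_mem : D ∈ Ioo 0 π
  E_mem : E ∈ Ioo 0 π
  sum_eq : A + B + C + D + E = 3 * π
  cos_closing : ∀ φ : ℝ, cos φ - cos (φ - B) + cos (φ - B - C) - cos (φ - B - C - D)
    + cos (φ - B - C - D - E) = 0

lemma zero_le_sin_half_iff {x : ℝ} (hx : x ∈ Ioo (-π) π) : 0 ≤ sin (x / 2) ↔ 0 ≤ x := by
  refine ⟨fun h ↦ ?_, fun h ↦ sin_nonneg_of_nonneg_of_le_pi (by linarith) (by linarith [hx.2])⟩
  by_contra! hneg
  exact h.not_gt (sin_neg_of_neg_of_neg_pi_lt (by linarith) (by linarith [hx.1, pi_pos]))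

lemma cos_two_pi_div_three : cos (2 * π / 3) = -(1 / 2) := by
  rw [show 2 * π / 3 = π - π / 3 by ring, cos_pi_sub, cos_pi_div_three]

lemma cos_add_two_pi_div_three_sub_cos (x : ℝ) :
    cos (2 * π / 3 + (2 * π / 3 - x)) - cos (2 * π / 3 - x) = -√3 * sin x := by
  rw [show 2 * π / 3 + (2 * π / 3 - x) = (π / 3 - x) + π by ring, cos_add_pi,
    show 2 * π / 3 - x = π - (π / 3 + x) by ring, cos_pi_sub, cos_add, cos_sub, cos_pi_div_three,
    sin_pi_div_three]
  ring

lemma sin_lt_of_cos_eq {t : ℝ} (ht : 0 < t) (htπ : t < π / 6)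
    (h : cos (π / 3 - 2 * t) = 1 - √3 * sin t) : sin t < 0.153 := by
  by_contra! hge
  have hsqrt : 1.732 < √3 := lt_sqrt_of_sq_lt (by norm_num)
  have hs : sin t < 1 / 2 := by
    rw [← sin_pi_div_six]
    exact sin_lt_sin_of_lt_of_le_pi_div_two (by linarith) (by linarith) htπ
  have hc : 0 < cos t := cos_pos_of_mem_Ioo ⟨by linarith, by linarith⟩
  have hone := sin_sq_add_cos_sq t
  rw [cos_sub, cos_pi_div_three, sin_pi_div_three, cos_two_mul, sin_two_mul] at h
  have hcos : 1 - sin t ^ 2 ≤ cos t := by nlinarith [cos_le_one t]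
  have hle : 1.732 * (sin t * (2 - sin t ^ 2)) ≤ 1 / 2 + sin t ^ 2 := by
    rw [show 1 / 2 + sin t ^ 2 = √3 * (sin t * (1 + cos t)) by linear_combination hone - h]
    have : 0 ≤ 2 - sin t ^ 2 := by nlinarith
    gcongr
    linarith
  nlinarith [mul_nonneg (sub_nonneg.2 hge) (sub_nonneg.2 hs.le),
    mul_nonneg (mul_nonneg (sub_nonneg.2 hge) (sub_nonneg.2 hs.le)) (by linarith : 0 ≤ sin t)]

lemma lt_cos_pi_div_three_add {t : ℝ} (ht : 0 < t) (htπ : 3 * t < π / 2) (h : sin t < 0.153) :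
    0.04 < cos (π / 3 + 3 * t) := by
  have hsqrt : √3 < 1.733 := by rw [sqrt_lt' (by norm_num)]; norm_num
  have hs : 0 < sin t := sin_pos_of_pos_of_lt_pi ht (by linarith)
  have hs3 : 0 < sin (3 * t) := sin_pos_of_pos_of_lt_pi (by linarith) (by linarith)
  have hc3 : 0 < cos (3 * t) := cos_pos_of_mem_Ioo ⟨by linarith, htπ⟩
  have hs3_lt : sin (3 * t) < 0.459 := by nlinarith [sin_three_mul t, pow_pos hs 3]
  have hc3_gt : 0.888 < cos (3 * t) := by nlinarith [sin_sq_add_cos_sq (3 * t)]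
  have hprod : √3 * sin (3 * t) ≤ 1.733 * 0.459 := by gcongr
  rw [cos_add, cos_pi_div_three, sin_pi_div_three]
  linarith

lemma sqrt_three_mul_sin_four_mul_lt {t : ℝ} (ht : 0 < t) (htπ : 3 * t < π / 2)
    (h : sin t < 0.153) : √3 * sin (4 * t) < 1.04 := by
  have hsqrt : √3 < 1.733 := by rw [sqrt_lt' (by norm_num)]; norm_num
  have hs : 0 < sin t := sin_pos_of_pos_of_lt_pi ht (by linarith)
  have hsin : sin (4 * t) = 4 * (sin t * (1 - 2 * sin t ^ 2)) * cos t := by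
    rw [show 4 * t = 2 * (2 * t) by ring, sin_two_mul (2 * t), sin_two_mul, cos_two_mul, cos_sq']
    ring
  have hpoly : sin t * (1 - 2 * sin t ^ 2) ≤ 0.15 := by nlinarith [pow_pos hs 3]
  have hpos : 0 ≤ sin t * (1 - 2 * sin t ^ 2) := mul_nonneg hs.le (by nlinarith)
  have hle : sin (4 * t) ≤ 0.6 := by
    rw [hsin]
    nlinarith [cos_le_one t]
  nlinarith [sqrt_nonneg 3]

-- At `2 * x = π / 4`, squaring the equation would make `√3` rational.
lemma two_mul_ne_pi_div_four {x : ℝ} (h : 3 * cos x - √3 * sin x = 2) : 2 * x ≠ π / 4 := by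
  intro hx
  have hsqrt : √3 ^ 2 = 3 := sq_sqrt (by norm_num)
  have h2 : √2 ^ 2 = 2 := sq_sqrt (by norm_num)
  have hcos := cos_two_mul x
  have hsin := sin_two_mul x
  rw [hx, cos_pi_div_four] at hcos
  rw [hx, sin_pi_div_four] at hsin
  have hirr : 3 * √2 * (√3 - 1) = 4 := by
    linear_combination 6 * √3 * hsin - 2 * (3 * cos x - √3 * sin x + 2) * h
      + 2 * sin x ^ 2 * hsqrt + 6 * sin_sq_add_cos_sq x - 6 * hcos
  have hrat : √3 = 14 / 9 := by
    have : (3 * √2 * (√3 - 1)) ^ 2 = 16 := by rw [hirr]; norm_num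
    linear_combination -1 / 36 * this + 1 / 4 * (√3 - 1) ^ 2 * h2 + 1 / 2 * hsqrt
  rw [hrat] at hsqrt
  norm_num at hsqrt

namespace EquilateralAngles

variable {A B C D E : ℝ}

lemma rotate (h : EquilateralAngles A B C D E) : EquilateralAngles B C D E A where
  A_mem := h.B_mem
  B_mem := h.C_mem
  C_mem := h.D_mem
  D_mem := h.E_mem
  E_mem := h.A_mem
  sum_eq := by linarith [h.sum_eq]
  cos_closing φ := by
    have hφ := h.cos_closing (φ + B)
    have hlast : φ - C - D - E - A = φ + B - π - 2 * π := by linarith [h.sum_eq]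
    rw [add_sub_cancel_right] at hφ
    rw [hlast, cos_sub_two_pi, cos_sub_pi]
    linarith

lemma reverse (h : EquilateralAngles A B C D E) : EquilateralAngles A E D C B where
  A_mem := h.A_mem
  B_mem := h.E_mem
  C_mem := h.D_mem
  D_mem := h.C_mem
  E_mem := h.B_mem
  sum_eq := by linarith [h.sum_eq]
  cos_closing φ := by
    have hφ := h.cos_closing (B + C + D + E - φ)
    rw [show B + C + D + E - φ - B - C - D - E = -φ by ring,
      show B + C + D + E - φ - B - C - D = -(φ - E) by ring,
      show B + C + D + E - φ - B - C = -(φ - E - D) by ring,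
      show B + C + D + E - φ - B = -(φ - E - D - C) by ring,
      show B + C + D + E - φ = -(φ - E - D - C - B) by ring] at hφ
    simp only [cos_neg] at hφ
    linarith

lemma sin_closing (h : EquilateralAngles A B C D E) (φ : ℝ) :
    sin φ - sin (φ - B) + sin (φ - B - C) - sin (φ - B - C - D)
      + sin (φ - B - C - D - E) = 0 := by
  have hφ := h.cos_closing (φ - π / 2)
  simp only [sub_right_comm φ (π / 2), sub_right_comm _ (π / 2), cos_sub_pi_div_two] at hφ
  exact hφ

-- Both sides are the squared length of the diagonal that separates the first vertex from the
-- third and fourth.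
lemma diagonal_sq_eq (h : EquilateralAngles A B C D E) :
    3 - 2 * cos C - 2 * cos D + 2 * cos (C + D) = 2 - 2 * cos A := by
  have hcos := h.cos_closing B
  have hsin := h.sin_closing B
  rw [show B - B - C - D - E = -(C + D + E) by ring, show B - B - C - D = -(C + D) by ring,
    show B - B - C = -C by ring, sub_self] at hcos hsin
  simp only [cos_neg, sin_neg, cos_zero, sin_zero] at hcos hsin
  have hA : cos A = -cos (B + (C + D + E)) := by
    rw [show B + (C + D + E) = (π - A) + 2 * π by linarith [h.sum_eq], cos_add_two_pi, cos_pi_sub,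
      neg_neg]
  have hD : cos D = cos (C + D) * cos C + sin (C + D) * sin C := by
    rw [← cos_sub, add_sub_cancel_left]
  have hx : cos (C + D) - cos C + 1 = cos B + cos (C + D + E) := by linarith
  have hy : sin (C + D) - sin C = sin (C + D + E) - sin B := by linarith
  have hsq : (cos (C + D) - cos C + 1) ^ 2 + (sin (C + D) - sin C) ^ 2
      = (cos B + cos (C + D + E)) ^ 2 + (sin (C + D + E) - sin B) ^ 2 := by rw [hx, hy]
  rw [hA, hD, cos_add B]
  linarith [sin_sq_add_cos_sq B, sin_sq_add_cos_sq C, sin_sq_add_cos_sq (C + D),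
    sin_sq_add_cos_sq (C + D + E)]

lemma two_mul_sin_half_mul_sin_half_sub (h : EquilateralAngles A B C D E) :
    2 * sin (D / 2) * sin ((C - E) / 2) = sin ((A - B) / 2) := by
  have hsum := h.sum_eq
  have hφ := h.cos_closing (π / 2 - (A - B) / 2)
  have h₁ : cos (π / 2 - (A - B) / 2 - B) = sin ((A + B) / 2) := by
    rw [← cos_pi_div_two_sub]; congr 1; ring
  have h₂ : cos (π / 2 - (A - B) / 2 - B - C) = -cos (D / 2 - (C - E) / 2) := by
    rw [← cos_sub_pi]; congr 1; linarith
  have h₃ : cos (π / 2 - (A - B) / 2 - B - C - D) = -cos (D / 2 + (C - E) / 2) := by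
    rw [← cos_add_pi, ← cos_neg]; congr 1; linarith
  have h₄ : cos (π / 2 - (A - B) / 2 - B - C - D - E) = sin ((A + B) / 2) := by
    rw [← cos_sub_pi_div_two, ← cos_add_two_pi]; congr 1; linarith
  rw [cos_pi_div_two_sub, h₁, h₂, h₃, h₄, cos_add, cos_sub] at hφ
  linarith

lemma E_le_C_iff (h : EquilateralAngles A B C D E) : E ≤ C ↔ B ≤ A := by
  have hsin : 0 < 2 * sin (D / 2) :=
    mul_pos two_pos (sin_pos_of_pos_of_lt_pi (by linarith [h.D_mem.1]) (by linarith [h.D_mem.2,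
      pi_pos]))
  rw [← sub_nonneg, ← zero_le_sin_half_iff ⟨by linarith [h.C_mem.1, h.E_mem.2],
    by linarith [h.C_mem.2, h.E_mem.1]⟩, ← mul_nonneg_iff_of_pos_left hsin,
    h.two_mul_sin_half_mul_sin_half_sub, zero_le_sin_half_iff ⟨by linarith [h.A_mem.1, h.B_mem.2],
    by linarith [h.A_mem.2, h.B_mem.1]⟩, sub_nonneg]

lemma E_eq_C_iff (h : EquilateralAngles A B C D E) : E = C ↔ B = A := by
  rw [le_antisymm_iff, le_antisymm_iff, h.E_le_C_iff, h.rotate.reverse.E_le_C_iff]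

lemma two_mul_D_add_C_lt (h : EquilateralAngles A B C D E) (hDC : D ≤ C) :
    2 * D + C < 2 * π := by
  by_contra! hge
  have hCD : cos D ≤ cos (C + D) := by
    rw [← cos_two_pi_sub (C + D)]
    exact cos_le_cos_of_nonneg_of_le_pi (by linarith [h.C_mem.2, h.D_mem.2]) h.D_mem.2.le
      (by linarith)
  have hC : cos C ≤ -(1 / 2) := by
    rw [← cos_two_pi_div_three]
    exact cos_le_cos_of_nonneg_of_le_pi (by linarith [pi_pos]) h.C_mem.2.le (by linarith)
  have hA : -1 < cos A := by
    rw [← cos_pi]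
    exact cos_lt_cos_of_nonneg_of_le_pi h.A_mem.1.le le_rfl h.A_mem.2
  linarith [h.diagonal_sq_eq]

lemma pi_lt_B_add_C (h : EquilateralAngles A B C D E) (hDC : D ≤ C) : π < B + C := by
  by_contra! hle
  have hB := h.B_mem
  have hC := h.C_mem
  have hE : 1 / 2 ≤ cos E := by
    have hdiag := h.rotate.rotate.rotate.rotate.diagonal_sq_eq
    have hnonneg : 0 ≤ cos ((B + C) / 2) :=
      cos_nonneg_of_neg_pi_div_two_le_of_le (by linarith [hB.1, hC.1]) (by linarith)
    have hdiff : cos ((B + C) / 2) ≤ cos ((C - B) / 2) := by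
      rw [← cos_abs ((C - B) / 2)]
      refine cos_le_cos_of_nonneg_of_le_pi (abs_nonneg _) (by linarith [pi_pos]) ?_
      rw [abs_le]
      constructor <;> linarith [hB.1, hC.1]
    have hsum : cos (B + C) = 2 * cos ((B + C) / 2) ^ 2 - 1 := by
      rw [← cos_two_mul]; congr 1; ring
    have hprod : cos B + cos C = 2 * cos ((B + C) / 2) * cos ((C - B) / 2) := by
      rw [cos_add_cos, ← cos_neg ((B - C) / 2), ← neg_div, neg_sub]
    nlinarith
  have hE' : E ≤ π / 3 := by
    by_contra! hlt
    have := cos_lt_cos_of_nonneg_of_le_pi (by linarith [pi_pos]) h.E_mem.2.le hlt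
    rw [cos_pi_div_three] at this
    linarith
  linarith [h.two_mul_D_add_C_lt hDC, h.sum_eq, h.A_mem.2]

/-! ### Coincidences excluded by the closing condition -/

lemma two_mul_C_add_D_ne (h : EquilateralAngles A B C D E) (hCA : C < A)
    (hA : 2 * A + E = 2 * π) : 2 * C + D ≠ 2 * π := by
  intro hC
  have hsum := h.sum_eq
  have hA' := h.A_mem.2
  have hD' := h.D_mem.2
  have := h.E_mem.2
  have := pi_pos
  set s := (A - C) / 2 with hs
  set m := (A + C) / 2 with hm
  have hcos := h.cos_closing m
  have hsin := h.sin_closing m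
  rw [show m - B - C - D - E = s + 2 * m + π - 2 * π - 2 * π by linarith,
    show m - B - C - D = -s + π - 2 * π by linarith,
    show m - B - C = (s - 2 * m) + π by linarith, show m - B = -m + π by linarith] at hcos hsin
  simp only [cos_sub_two_pi, sin_sub_two_pi, cos_add_pi, sin_add_pi, cos_neg, sin_neg, cos_add s,
    sin_add s, cos_sub s, sin_sub s] at hcos hsin
  have hs_pos : 0 < sin s := sin_pos_of_pos_of_lt_pi (by linarith) (by linarith)
  have hcs_pos : 0 < cos s := cos_pos_of_mem_Ioo ⟨by linarith, by linarith⟩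
  have hc2m : cos (2 * m) = -(1 / 2) := by
    have : sin s * (1 + 2 * cos (2 * m)) = 0 := by linarith
    linarith [(mul_eq_zero.1 this).resolve_left hs_pos.ne']
  rw [hc2m] at hcos
  have hcm : cos m = -cos s := by linarith
  have hcs : cos s = 1 / 2 := by
    have := cos_two_mul m
    rw [hc2m, hcm] at this
    nlinarith
  have hm_eq : m = 2 * π / 3 := injOn_cos ⟨by linarith, by linarith⟩ ⟨by linarith, by linarith⟩
    (by rw [cos_two_pi_div_three, hcm, hcs])
  have hs_eq : s = π / 3 := injOn_cos ⟨by linarith, by linarith⟩ ⟨by linarith, by linarith⟩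
    (by rw [cos_pi_div_three, hcs])
  linarith

lemma two_mul_C_add_B_ne (h : EquilateralAngles A B C D E) (hD : 2 * D + A = 2 * π) :
    2 * C + B ≠ 2 * π := by
  intro hC
  have hsum := h.sum_eq
  have hcos := h.cos_closing (-C)
  have hsin := h.sin_closing (-C)
  rw [show -C - B - C - D - E = -(C + 2 * D) + π - 2 * π by linarith,
    show -C - B - C - D = -D - 2 * π by linarith, show -C - B - C = 0 - 2 * π by linarith,
    show -C - B = C - 2 * π by linarith] at hcos hsin
  simp only [cos_sub_two_pi, sin_sub_two_pi, cos_add_pi, sin_add_pi, cos_neg, sin_neg, cos_zero,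
    sin_zero] at hcos hsin
  have hcosD : cos D < 0 :=
    cos_neg_of_pi_div_two_lt_of_lt (by linarith [h.A_mem.2]) (by linarith [h.D_mem.2, pi_pos])
  have hgt : 1 < cos (C + 2 * D) := by linarith
  exact hgt.not_ge (cos_le_one _)

lemma D_add_E_eq_pi (h : EquilateralAngles A B C D E) (hC : 2 * C + E = 2 * π)
    (hD : 2 * D + A = 2 * π) : D + E = π := by
  have hsum := h.sum_eq
  have hsin := h.sin_closing (C + D)
  rw [show C + D - B - C - D - E = (C - D) + π - 2 * π by linarith,
    show C + D - B - C - D = -(C + D) + π by linarith,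
    show C + D - B - C = -C + π by linarith, show C + D - B = π by linarith] at hsin
  simp only [sin_sub_two_pi, sin_add_pi, sin_neg, sin_pi] at hsin
  have hprod : sin (D / 2) * cos (C - D / 2) = 0 := by
    have hC' : sin C = sin ((C - D / 2) + D / 2) := by rw [sub_add_cancel]
    have hCD : sin (C - D) = sin ((C - D / 2) - D / 2) := by congr 1; ring
    rw [hC', hCD, sin_add (C - D / 2), sin_sub (C - D / 2)] at hsin
    linarith
  have hsinD : 0 < sin (D / 2) :=
    sin_pos_of_pos_of_lt_pi (by linarith [h.D_mem.1]) (by linarith [h.D_mem.2, pi_pos])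
  have hcos : cos (C - D / 2) = cos (π / 2) := by
    rw [cos_pi_div_two, (mul_eq_zero.1 hprod).resolve_left hsinD.ne']
  have := injOn_cos ⟨by linarith [h.E_mem.2, h.D_mem.2], by linarith [h.C_mem.2, h.D_mem.1]⟩
    ⟨by linarith [pi_pos], by linarith [pi_pos]⟩ hcos
  linarith

lemma two_mul_A_add_B_ne_of_two_mul_C_add_D (h : EquilateralAngles A B C D E)
    (hC : 2 * C + D = 2 * π) (hD : 2 * D + A = 2 * π) : 2 * A + B ≠ 2 * π := by
  intro hA
  have hsum := h.sum_eq
  obtain ⟨u, rfl⟩ : ∃ u, D = 2 * u := ⟨D / 2, by ring⟩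
  have hcos := h.cos_closing (2 * (4 * u))
  have hsin := h.sin_closing (2 * (4 * u))
  rw [show 2 * (4 * u) - B - C - 2 * u - E = 4 * u + π - 2 * π by linarith,
    show 2 * (4 * u) - B - C - 2 * u = -u + π by linarith,
    show 2 * (4 * u) - B - C = u + π by linarith,
    show 2 * (4 * u) - B = 0 + 2 * π by linarith] at hcos hsin
  simp only [cos_sub_two_pi, sin_sub_two_pi, cos_add_two_pi, sin_add_two_pi, cos_add_pi, sin_add_pi,
    cos_neg, sin_neg, cos_zero, sin_zero, cos_two_mul (4 * u), sin_two_mul (4 * u)] at hcos hsin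
  have hquad : 2 * cos (4 * u) ^ 2 - cos (4 * u) - 2 = 0 := by linarith
  have hc4 : cos (4 * u) = 2 * cos (2 * u) ^ 2 - 1 := by rw [← cos_two_mul]; ring_nf
  have hc2 := cos_two_mul u
  have hsq : sin (4 * u) ^ 2 * (2 * cos (4 * u) - 1) ^ 2 = 4 * sin u ^ 2 := by
    rw [← mul_pow, show sin (4 * u) * (2 * cos (4 * u) - 1) = 2 * sin u by linarith]
    ring
  have hsq4 : sin (4 * u) ^ 2 = -cos (4 * u) / 2 := by linarith [sin_sq_add_cos_sq (4 * u)]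
  have hlin : cos (4 * u) = cos (2 * u) - 1 / 2 := by
    rw [hsq4, show (2 * cos (4 * u) - 1) ^ 2 = 5 - 2 * cos (4 * u) by linarith] at hsq
    nlinarith [sin_sq_add_cos_sq u]
  rw [hlin] at hc4 hquad
  have hval : cos (2 * u) = -1 / 4 := by linarith
  rw [hval] at hc4
  norm_num at hc4

lemma two_mul_A_add_E_ne_of_C_eq (h : EquilateralAngles A B C D E) (hDC : D ≤ C)
    (hC : C = 2 * π / 3) (hD : 2 * D + A = 2 * π) : 2 * A + E ≠ 2 * π := by
  intro hA
  have hsum := h.sum_eq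
  have hπ := pi_pos
  have hE := h.E_mem
  set t := 2 * π / 3 - D with ht
  have hcos := h.cos_closing 0
  have hsin := h.sin_closing 0
  rw [show 0 - B - C - D - E = 2 * t + 2 * π / 3 + π - 2 * π - 2 * π by linarith,
    show 0 - B - C - D = -(2 * t + 2 * π / 3 + π) by linarith,
    show 0 - B - C = -(3 * t + π) by linarith,
    show 0 - B = -(π / 3 + 3 * t) by linarith] at hcos hsin
  simp only [cos_sub_two_pi, sin_sub_two_pi, cos_add_pi, sin_add_pi, cos_neg, sin_neg, cos_zero,
    sin_zero, cos_add (π / 3), sin_add (π / 3), cos_pi_div_three, sin_pi_div_three] at hcos hsin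
  have hsqrt : √3 ^ 2 = 3 := sq_sqrt (by norm_num)
  have hone := sin_sq_add_cos_sq (3 * t)
  have h3t : 3 * cos (3 * t) - √3 * sin (3 * t) = 2 := by linarith
  have h2t : 4 * sin (2 * t + 2 * π / 3) = 3 * sin (3 * t) + √3 * cos (3 * t) := by linarith
  have hsq : sin (2 * t + 2 * π / 3) ^ 2 = 1 / 2 := by
    have : (4 * sin (2 * t + 2 * π / 3)) ^ 2 + (3 * cos (3 * t) - √3 * sin (3 * t)) ^ 2 = 12 := by
      rw [h2t]
      linear_combination (9 + √3 ^ 2) * hone + hsqrt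
    rw [h3t] at this
    linarith
  have hcos2 : cos (2 * (2 * t + 2 * π / 3) - π) = cos (π / 2) := by
    rw [cos_sub_pi, cos_two_mul, cos_pi_div_two]
    linarith [sin_sq_add_cos_sq (2 * t + 2 * π / 3)]
  have h6t : 2 * (3 * t) = π / 4 := by
    have := injOn_cos ⟨by linarith, by linarith [hE.1]⟩ ⟨by linarith, by linarith⟩ hcos2
    linarith
  exact two_mul_ne_pi_div_four h3t h6t

lemma two_mul_A_add_B_ne_of_C_eq (h : EquilateralAngles A B C D E) (hDC : D ≤ C) (hED : E ≤ D)
    (hC : C = 2 * π / 3) (hD : 2 * D + A = 2 * π) : 2 * A + B ≠ 2 * π := by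
  intro hA
  have hsum := h.sum_eq
  have hB := h.B_mem.1
  have := pi_pos
  obtain ⟨t, rfl⟩ : ∃ t, D = 2 * π / 3 - t := ⟨2 * π / 3 - D, by ring⟩
  have ht : 0 < t := by linarith [h.two_mul_D_add_C_lt hDC]
  have hdiagA := h.diagonal_sq_eq
  have hdiagE := h.rotate.rotate.rotate.rotate.diagonal_sq_eq
  rw [show A = π - (π / 3 - 2 * t) by linarith, cos_pi_sub, hC] at hdiagA
  rw [show E = π / 3 + 3 * t by linarith, show B = 2 * π / 3 - 4 * t by linarith, hC,
    add_comm (2 * π / 3 - 4 * t)] at hdiagE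
  have hcos2t : cos (π / 3 - 2 * t) = 1 - √3 * sin t := by
    linarith [cos_add_two_pi_div_three_sub_cos t, cos_two_pi_div_three]
  have hsin4t : √3 * sin (4 * t) = 1 + cos (π / 3 + 3 * t) := by
    linarith [cos_add_two_pi_div_three_sub_cos (4 * t), cos_two_pi_div_three]
  have hsin := sin_lt_of_cos_eq ht (by linarith) hcos2t
  linarith [lt_cos_pi_div_three_add ht (by linarith) hsin,
    sqrt_three_mul_sin_four_mul_lt ht (by linarith) hsin]

end EquilateralAngles

/-! ### Which nodes can occur -/

/-- The conclusion of the averaging argument for a pentagon with angles `a`: a nonnegative weight on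
the corners that is at least one at every conceivable node with corners `x, x, y` has total weight
at least one. -/
def IsNodeBalanced (a : Fin 5 → ℝ) : Prop :=
  ∀ w : Fin 5 → ℝ, (∀ i, 0 ≤ w i) → (∀ x y, 2 * a x + a y = 2 * π → 1 ≤ 2 * w x + w y) →
    1 ≤ ∑ i, w i

/-- Only the corner triples `A, A, B` and `C, C, D` can sum to `2π`. -/
def OnlyAABAndCCD (a : Fin 5 → ℝ) : Prop :=
  ∀ x y, 2 * a x + a y = 2 * π → x = 0 ∧ y = 1 ∨ x = 2 ∧ y = 3

/-- The angles `A, B, C, D, E = a 0, …, a 4` of an equilateral convex pentagon, labeled so that `A`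
is the largest and `D ≤ C`.  For the maximality of `A` it is enough to ask `C ≤ A`. -/
structure SortedAngles (a : Fin 5 → ℝ) : Prop
    extends EquilateralAngles (a 0) (a 1) (a 2) (a 3) (a 4) where
  C_le_A : a 2 ≤ a 0
  D_le_C : a 3 ≤ a 2

namespace SortedAngles

variable {a : Fin 5 → ℝ}

lemma E_le_D (h : SortedAngles a) : a 4 ≤ a 3 :=
  h.rotate.rotate.rotate.E_le_C_iff.1 h.C_le_A

lemma B_le_E (h : SortedAngles a) : a 1 ≤ a 4 :=
  h.rotate.rotate.E_le_C_iff.2 h.D_le_C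

lemma C_eq_A_iff (h : SortedAngles a) : a 2 = a 0 ↔ a 4 = a 3 :=
  h.rotate.rotate.rotate.E_eq_C_iff

lemma D_eq_C_iff (h : SortedAngles a) : a 3 = a 2 ↔ a 1 = a 4 :=
  h.rotate.rotate.E_eq_C_iff.symm

lemma le_A (h : SortedAngles a) (i : Fin 5) : a i ≤ a 0 := by
  have := h.C_le_A
  have := h.D_le_C
  have := h.E_le_D
  have := h.B_le_E
  fin_cases i <;> simp only [Fin.reduceFinMk, Fin.zero_eta, Fin.mk_one] <;> linarith

lemma eq_of_two_mul_add_eq (h : SortedAngles a) {x y : Fin 5} (hxy : 2 * a x + a y = 2 * π) :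
    x = 0 ∨ x = 2 ∨ x = 3 ∧ y = 0 := by
  have hDC := h.two_mul_D_add_C_lt h.D_le_C
  have hBC := h.pi_lt_B_add_C h.D_le_C
  have hsum := h.sum_eq
  have hED := h.E_le_D
  have hBE := h.B_le_E
  have hy := h.le_A y
  match x with
  | 0 => exact .inl rfl
  | 1 => linarith [h.D_le_C]
  | 2 => exact .inr (.inl rfl)
  | 3 =>
    refine .inr (.inr ⟨rfl, ?_⟩)
    by_contra hne
    have hyC : a y ≤ a 2 := by
      match y with
      | 0 => exact absurd rfl hne
      | 1 | 2 | 3 | 4 => linarith [h.D_le_C]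
    linarith
  | 4 => linarith [h.D_le_C]

lemma one_le_three_weights (h : SortedAngles a) (hbal : IsNodeBalanced a) {u v w : ℝ} (hu : 0 ≤ u)
    (hv : 0 ≤ v) (hw : 0 ≤ w)
    (hA : ∀ y, 2 * a 0 + a y = 2 * π → 1 ≤ 2 * u + (![u, 0, v, w, 0] : Fin 5 → ℝ) y)
    (hC : ∀ y, 2 * a 2 + a y = 2 * π → 1 ≤ 2 * v + (![u, 0, v, w, 0] : Fin 5 → ℝ) y)
    (hD : 2 * a 3 + a 0 = 2 * π → 1 ≤ 2 * w + u) : 1 ≤ u + v + w := by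
  have hsum := hbal ![u, 0, v, w, 0] (fun i ↦ by fin_cases i <;> simp [hu, hv, hw]) fun x y hxy ↦ by
    obtain rfl | rfl | ⟨rfl, rfl⟩ := h.eq_of_two_mul_add_eq hxy
    exacts [hA y hxy, hC y hxy, hD hxy]
  simpa [Fin.sum_univ_five] using hsum

lemma exists_two_mul_C_add (h : SortedAngles a) (hbal : IsNodeBalanced a) :
    ∃ z, 2 * a 2 + a z = 2 * π := by
  by_contra! hC
  have := h.one_le_three_weights hbal (u := 1 / 2) (v := 0) (w := 1 / 4) (by norm_num) le_rfl
    (by norm_num) (fun y _ ↦ by fin_cases y <;> norm_num) (fun y hy ↦ absurd hy (hC y))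
    (by norm_num)
  norm_num at this

lemma C_ne_of_two_mul_D_add_A (h : SortedAngles a) (hbal : IsNodeBalanced a)
    (hD : 2 * a 3 + a 0 = 2 * π) : a 2 ≠ 2 * π / 3 := by
  intro hC
  have hDC := h.two_mul_D_add_C_lt h.D_le_C
  have hED := h.E_le_D
  have hBE := h.B_le_E
  obtain ⟨y, hy⟩ : ∃ y, 2 * a 0 + a y = 2 * π := by
    by_contra! hA
    have := h.one_le_three_weights hbal (u := 0) (v := 1 / 3) (w := 1 / 2) le_rfl (by norm_num)
      (by norm_num) (fun y hy ↦ absurd hy (hA y))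
      (fun y hy ↦ by
        match y with
        | 2 => exact (by norm_num : (1 : ℝ) ≤ 2 * (1 / 3) + 1 / 3)
        | 3 => exact (by norm_num : (1 : ℝ) ≤ 2 * (1 / 3) + 1 / 2)
        | 0 | 1 | 4 => linarith) (by norm_num)
    norm_num at this
  match y with
  | 1 => exact h.two_mul_A_add_B_ne_of_C_eq h.D_le_C hED hC hD hy
  | 4 => exact h.two_mul_A_add_E_ne_of_C_eq h.D_le_C hC hD hy
  | 0 | 2 | 3 => linarith

lemma two_mul_C_add_D_ne_of_two_mul_D_add_A (h : SortedAngles a) (hbal : IsNodeBalanced a)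
    (hD : 2 * a 3 + a 0 = 2 * π) : 2 * a 2 + a 3 ≠ 2 * π := by
  intro hC
  have hDC := h.two_mul_D_add_C_lt h.D_le_C
  have hCA : a 2 < a 0 := by linarith
  have hED : a 4 < a 3 := h.E_le_D.lt_of_ne fun heq ↦ hCA.ne (h.C_eq_A_iff.2 heq)
  have hBE := h.B_le_E
  obtain ⟨y, hy⟩ : ∃ y, 2 * a 0 + a y = 2 * π := by
    by_contra! hA
    have := h.one_le_three_weights hbal (u := 0) (v := 1 / 4) (w := 1 / 2) le_rfl (by norm_num)
      (by norm_num) (fun y hy ↦ absurd hy (hA y))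
      (fun y hy ↦ by
        match y with
        | 3 => exact (by norm_num : (1 : ℝ) ≤ 2 * (1 / 4) + 1 / 2)
        | 0 | 1 | 2 | 4 => linarith) (by norm_num)
    norm_num at this
  match y with
  | 1 => exact h.two_mul_A_add_B_ne_of_two_mul_C_add_D hC hD hy
  | 4 => exact h.two_mul_C_add_D_ne hCA hy hC
  | 0 | 2 | 3 => linarith

lemma two_mul_D_add_A_ne (h : SortedAngles a) (hbal : IsNodeBalanced a)
    (hπ : ∀ i j, i ≠ j → a i + a j ≠ π) : 2 * a 3 + a 0 ≠ 2 * π := by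
  intro hD
  obtain ⟨z, hz⟩ := h.exists_two_mul_C_add hbal
  match z with
  | 0 =>
    have hBE : a 1 = a 4 := h.D_eq_C_iff.1 (by linarith)
    exact hπ 1 4 (by decide) (by linarith [h.sum_eq, hBE])
  | 1 => exact h.two_mul_C_add_B_ne hD hz
  | 2 => exact h.C_ne_of_two_mul_D_add_A hbal hD (by linarith)
  | 3 => exact h.two_mul_C_add_D_ne_of_two_mul_D_add_A hbal hD hz
  | 4 => exact hπ 3 4 (by decide) (h.D_add_E_eq_pi hz hD)

lemma exists_two_mul_A_add (h : SortedAngles a) (hbal : IsNodeBalanced a)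
    (hD : 2 * a 3 + a 0 ≠ 2 * π) : ∃ y, 2 * a 0 + a y = 2 * π := by
  by_contra! hA
  have := h.one_le_three_weights hbal (u := 0) (v := 1 / 2) (w := 0) le_rfl (by norm_num) le_rfl
    (fun y hy ↦ absurd hy (hA y)) (fun y _ ↦ by fin_cases y <;> norm_num) (fun hy ↦ absurd hy hD)
  norm_num at this

lemma A_ne_or_C_ne (h : SortedAngles a) (hbal : IsNodeBalanced a)
    (hD : 2 * a 3 + a 0 ≠ 2 * π) : a 0 ≠ 2 * π / 3 ∨ a 2 ≠ 2 * π / 3 := by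
  by_contra! hAC
  have hDC := h.two_mul_D_add_C_lt h.D_le_C
  have hED := h.E_le_D
  have hBE := h.B_le_E
  have hAC_node (y : Fin 5) (hy : a y = 2 * π / 3) :
      1 ≤ 2 * (1 / 3) + (![1 / 3, 0, 1 / 3, 0, 0] : Fin 5 → ℝ) y := by
    match y with
    | 0 | 2 => exact (by norm_num : (1 : ℝ) ≤ 2 * (1 / 3) + 1 / 3)
    | 1 | 3 | 4 => linarith
  have := h.one_le_three_weights hbal (u := 1 / 3) (v := 1 / 3) (w := 0) (by norm_num)
    (by norm_num) le_rfl (fun y hy ↦ hAC_node y (by linarith))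
    (fun y hy ↦ hAC_node y (by linarith)) (fun hy ↦ absurd hy hD)
  norm_num at this

lemma A_ne_C (h : SortedAngles a) (hbal : IsNodeBalanced a)
    (hπ : ∀ i j, i ≠ j → a i + a j ≠ π) : a 0 ≠ a 2 := by
  intro hAC
  have := h.C_eq_A_iff.1 hAC.symm
  have hsum := h.sum_eq
  obtain ⟨y, hy⟩ := h.exists_two_mul_A_add hbal (h.two_mul_D_add_A_ne hbal hπ)
  have h120 := h.A_ne_or_C_ne hbal (h.two_mul_D_add_A_ne hbal hπ)
  match y with
  | 0 | 2 => obtain hne | hne := h120 <;> exact hne (by linarith)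
  | 1 => exact hπ 3 4 (by decide) (by linarith)
  | 3 => exact hπ 1 4 (by decide) (by linarith)
  | 4 => exact hπ 1 3 (by decide) (by linarith)

lemma two_mul_C_add_A_ne (h : SortedAngles a) (hbal : IsNodeBalanced a)
    (hD : 2 * a 3 + a 0 ≠ 2 * π) (hCA : a 2 < a 0) : 2 * a 2 + a 0 ≠ 2 * π := by
  intro hC
  have hED := h.E_le_D
  have hBE := h.B_le_E
  have hDC := h.D_le_C
  have := h.one_le_three_weights hbal (u := 1 / 2) (v := 1 / 4) (w := 0) (by norm_num)
    (by norm_num) le_rfl (fun y _ ↦ by fin_cases y <;> norm_num)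
    (fun y hy ↦ by
      match y with
      | 0 => exact (by norm_num : (1 : ℝ) ≤ 2 * (1 / 4) + 1 / 2)
      | 1 | 2 | 3 | 4 => linarith) (fun hy ↦ absurd hy hD)
  norm_num at this

lemma C_ne (h : SortedAngles a) (hbal : IsNodeBalanced a)
    (hD : 2 * a 3 + a 0 ≠ 2 * π) (hCA : a 2 < a 0) : a 2 ≠ 2 * π / 3 := by
  intro hC
  have hDC := h.two_mul_D_add_C_lt h.D_le_C
  have hED := h.E_le_D
  have hBE := h.B_le_E
  have := h.one_le_three_weights hbal (u := 1 / 2) (v := 1 / 3) (w := 0) (by norm_num)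
    (by norm_num) le_rfl (fun y _ ↦ by fin_cases y <;> norm_num)
    (fun y hy ↦ by
      match y with
      | 2 => exact (by norm_num : (1 : ℝ) ≤ 2 * (1 / 3) + 1 / 3)
      | 0 | 1 | 3 | 4 => linarith) (fun hy ↦ absurd hy hD)
  norm_num at this

lemma onlyAABAndCCD (h : SortedAngles a) (hD : 2 * a 3 + a 0 ≠ 2 * π) (hCA : a 2 < a 0)
    (hA : 2 * a 0 + a 1 = 2 * π) (hC : 2 * a 2 + a 3 = 2 * π) : OnlyAABAndCCD a := by
  intro x y hxy
  have hED : a 4 < a 3 := h.E_le_D.lt_of_ne fun heq ↦ hCA.ne (h.C_eq_A_iff.2 heq)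
  have hDC := h.two_mul_D_add_C_lt h.D_le_C
  have hBE : a 1 < a 4 := h.B_le_E.lt_of_ne fun heq ↦ by linarith [h.D_eq_C_iff.2 heq]
  obtain rfl | rfl | ⟨rfl, rfl⟩ := h.eq_of_two_mul_add_eq hxy
  · match y with
    | 1 => exact .inl ⟨rfl, rfl⟩
    | 0 | 2 | 3 | 4 => linarith
  · match y with
    | 3 => exact .inr ⟨rfl, rfl⟩
    | 0 | 1 | 2 | 4 => linarith
  · exact absurd hxy hD

theorem two_mul_A_add_B_and_two_mul_C_add_E (h : SortedAngles a) (hbal : IsNodeBalanced a)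
    (hπ : ∀ i j, i ≠ j → a i + a j ≠ π) (honly : ¬ OnlyAABAndCCD a) :
    2 * a 0 + a 1 = 2 * π ∧ 2 * a 2 + a 4 = 2 * π := by
  have hD := h.two_mul_D_add_A_ne hbal hπ
  have hCA : a 2 < a 0 := h.C_le_A.lt_of_ne' (h.A_ne_C hbal hπ)
  have hED := h.E_le_D
  have hBE := h.B_le_E
  have hDC := h.D_le_C
  have hCA_node := h.two_mul_C_add_A_ne hbal hD hCA
  have hC := h.C_ne hbal hD hCA
  obtain ⟨y, hy⟩ := h.exists_two_mul_A_add hbal hD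
  obtain ⟨z, hz⟩ := h.exists_two_mul_C_add hbal
  match z with
  | 0 => exact absurd hz hCA_node
  | 2 => exact absurd (by linarith) hC
  | 1 =>
    match y with
    | 0 | 1 | 2 | 3 | 4 => linarith
  | 3 =>
    match y with
    | 1 => exact absurd (h.onlyAABAndCCD hD hCA hy hz) honly
    | 4 => exact absurd hz (h.two_mul_C_add_D_ne hCA hy)
    | 0 | 2 | 3 => linarith
  | 4 =>
    match y with
    | 1 => exact ⟨hy, hz⟩
    | 0 | 2 | 3 | 4 => linarith

end SortedAngles

/-! ### Tilings by congruent convex bodies -/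

section Tilings

open MeasureTheory Metric Filter Topology Module

/-- A convex body: a compact convex set with nonempty interior. -/
structure IsConvexBody {E : Type*} [NormedAddCommGroup E] [NormedSpace ℝ E] (K : Set E) :
    Prop where
  convex : Convex ℝ K
  isCompact : IsCompact K
  nonempty_interior : (interior K).Nonempty

/-- The copies `g t '' K` of `K` tile the space: they cover it, and their interiors are pairwise
disjoint. -/
structure IsTilingBy {E ι : Type*} [PseudoEMetricSpace E] (K : Set E) (g : ι → E ≃ᵢ E) :
    Prop where
  exists_mem (x : E) : ∃ t, x ∈ g t '' K
  disjoint_interior {s t : ι} (hst : s ≠ t) :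
    Disjoint (interior (g s '' K)) (interior (g t '' K))

variable {E : Type*} [NormedAddCommGroup E] [InnerProductSpace ℝ E]

lemma IsConvexBody.image {K : Set E} (hK : IsConvexBody K) (g : E ≃ᵢ E) :
    IsConvexBody (g '' K) where
  convex := hK.convex.affine_image g.toRealAffineIsometryEquiv.toAffineEquiv.toAffineMap
  isCompact := hK.isCompact.image g.continuous
  nonempty_interior := by
    rw [← g.coe_toHomeomorph, ← g.toHomeomorph.image_interior]
    exact hK.nonempty_interior.image _

lemma IsConvexBody.dist_le_diam {K : Set E} (hK : IsConvexBody K) (g : E ≃ᵢ E) {x y : E}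
    (hx : x ∈ g '' K) (hy : y ∈ g '' K) : dist x y ≤ diam K :=
  g.diam_image K ▸ dist_le_diam_of_mem (hK.image g).isCompact.isBounded hx hy

lemma IsTilingBy.disjoint_interior_tile {K : Set E} {ι : Type*} {g : ι → E ≃ᵢ E}
    (hT : IsTilingBy K g) (hK : IsConvexBody K)
    {s t : ι} (hst : s ≠ t) : Disjoint (interior (g s '' K)) (g t '' K) := by
  have hKt := hK.image (g t)
  rw [← hKt.isCompact.isClosed.closure_eq,
    ← hKt.convex.closure_interior_eq_closure_of_nonempty_interior hKt.nonempty_interior]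
  exact (hT.disjoint_interior hst).closure_right isOpen_interior

variable [FiniteDimensional ℝ E] [MeasurableSpace E] [BorelSpace E]

lemma measurePreserving_isometryEquiv (g : E ≃ᵢ E) : MeasurePreserving g := by
  have hg : (g : E → E) = (· + g 0) ∘ g.toRealLinearIsometryEquiv := by
    ext x
    simp
  rw [hg]
  exact (measurePreserving_add_right volume (g 0)).comp
    g.toRealLinearIsometryEquiv.measurePreserving

lemma volume_image_isometryEquiv (g : E ≃ᵢ E) (S : Set E) : volume (g '' S) = volume S := by
  rw [← (measurePreserving_isometryEquiv g).measure_preimage_emb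
    g.toHomeomorph.measurableEmbedding, preimage_image_eq _ g.injective]

variable {K : Set E} {ι : Type*} {g : ι → E ≃ᵢ E}

namespace IsConvexBody

lemma volume_frontier (hK : IsConvexBody K) : volume (frontier K) = 0 :=
  hK.convex.addHaar_frontier volume

lemma volume_interior (hK : IsConvexBody K) : volume (interior K) = volume K :=
  measure_congr (interior_ae_eq_of_null_frontier hK.volume_frontier)

lemma volume_ne_zero (hK : IsConvexBody K) : volume K ≠ 0 :=
  hK.volume_interior ▸ (isOpen_interior.measure_pos volume hK.nonempty_interior).ne'

lemma volume_inter_eq_zero {L : Set E} (hK : IsConvexBody K) (hL : IsConvexBody L)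
    (hKL : Disjoint (interior K) (interior L)) : volume (K ∩ L) = 0 := by
  refine measure_mono_null (t := frontier K ∪ frontier L) ?_
    (measure_union_null hK.volume_frontier hL.volume_frontier)
  rintro z ⟨hzK, hzL⟩
  rw [hK.isCompact.isClosed.frontier_eq, hL.isCompact.isClosed.frontier_eq]
  by_cases hz : z ∈ interior K
  · exact .inr ⟨hzL, disjoint_left.1 hKL hz⟩
  · exact .inl ⟨hzK, hz⟩

end IsConvexBody

namespace IsTilingBy

lemma card_mul_volume_le (hT : IsTilingBy K g) (hK : IsConvexBody K) {S : Finset ι} {U : Set E}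
    (hU : ∀ t ∈ S, g t '' K ⊆ U) : S.card * volume K ≤ volume U :=
  calc S.card * volume K = ∑ t ∈ S, volume (interior (g t '' K)) := by
        simp_rw [(hK.image _).volume_interior, volume_image_isometryEquiv, Finset.sum_const,
          nsmul_eq_mul]
    _ = volume (⋃ t ∈ S, interior (g t '' K)) :=
        (measure_biUnion_finset (fun _ _ _ _ hst ↦ hT.disjoint_interior hst)
          fun _ _ ↦ isOpen_interior.measurableSet).symm
    _ ≤ volume U := measure_mono (iUnion₂_subset fun t ht ↦ interior_subset.trans (hU t ht))

lemma finite_setOf_inter_closedBall (hT : IsTilingBy K g) (hK : IsConvexBody K) (x : E) (R : ℝ) :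
    {t | (g t '' K ∩ closedBall x R).Nonempty}.Finite := by
  by_contra hinf
  obtain ⟨n, hn⟩ := ENNReal.exists_nat_mul_gt hK.volume_ne_zero
    (measure_closedBall_lt_top (μ := volume) (x := x) (r := diam K + R)).ne
  obtain ⟨S, hS, rfl⟩ := Set.Infinite.exists_subset_card_eq hinf n
  refine hn.not_ge (hT.card_mul_volume_le hK fun t ht y hy ↦ ?_)
  obtain ⟨z, hz, hzR⟩ := hS ht
  exact (dist_triangle y z x).trans (add_le_add (hK.dist_le_diam _ hy hz) hzR)

lemma exists_finset_tiles (hT : IsTilingBy K g) (hK : IsConvexBody K) (x : E) :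
    ∃ N : Finset ι, ∀ t, t ∈ N ↔ x ∈ g t '' K := by
  have hfin : {t | x ∈ g t '' K}.Finite := by
    simpa [Set.Nonempty] using hT.finite_setOf_inter_closedBall hK x 0
  exact ⟨hfin.toFinset, fun t ↦ hfin.mem_toFinset⟩

lemma eventually_mem_of_mem (hT : IsTilingBy K g) (hK : IsConvexBody K) (x : E) :
    ∀ᶠ z in 𝓝 x, ∀ t, z ∈ g t '' K → x ∈ g t '' K := by
  have hfin := hT.finite_setOf_inter_closedBall hK x 1
  have havoid : ∀ᶠ z in 𝓝 x, ∀ t ∈ hfin.toFinset, z ∈ g t '' K → x ∈ g t '' K := by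
    refine (Filter.eventually_all_finset _).2 fun t _ ↦ ?_
    by_cases hx : x ∈ g t '' K
    · exact .of_forall fun _ _ ↦ hx
    · filter_upwards [(hK.image (g t)).isCompact.isClosed.isOpen_compl.mem_nhds hx] with z hz hzt
      exact absurd hzt hz
  filter_upwards [havoid, closedBall_mem_nhds x one_pos] with z hz hz1 t hzt
  exact hz t (hfin.mem_toFinset.2 ⟨z, hzt, hz1⟩) hzt

lemma volume_closedBall_le_card_mul (hT : IsTilingBy K g) {S : Finset ι} {x : E} {R : ℝ}
    (hS : ∀ t, (g t '' K ∩ closedBall x R).Nonempty → t ∈ S) :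
    volume (closedBall x R) ≤ S.card * volume K :=
  calc volume (closedBall x R) ≤ volume (⋃ t ∈ S, g t '' K) := by
        refine measure_mono fun z hz ↦ ?_
        obtain ⟨t, ht⟩ := hT.exists_mem z
        exact mem_iUnion₂.2 ⟨t, hS t ⟨z, ht, hz⟩, ht⟩
    _ ≤ ∑ t ∈ S, volume (g t '' K) := measure_biUnion_finset_le _ _
    _ = S.card * volume K := by
        simp_rw [volume_image_isometryEquiv, Finset.sum_const, nsmul_eq_mul]

lemma card_boundary_mul_volume_le (hT : IsTilingBy K g) (hK : IsConvexBody K) {B : Finset ι} {R : ℝ}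
    (hR : diam K < R) (hmeet : ∀ t ∈ B, (g t '' K ∩ closedBall 0 R).Nonempty)
    (hout : ∀ t ∈ B, ¬ g t '' K ⊆ closedBall 0 R) :
    B.card * volume K ≤
      ENNReal.ofReal ((R + diam K) ^ finrank ℝ E - (R - diam K) ^ finrank ℝ E) *
        volume (ball (0 : E) 1) := by
  have hD : 0 ≤ diam K := diam_nonneg
  have hannulus : volume (closedBall (0 : E) (R + diam K) \ ball 0 (R - diam K)) =
      ENNReal.ofReal ((R + diam K) ^ finrank ℝ E - (R - diam K) ^ finrank ℝ E) *
        volume (ball (0 : E) 1) := by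
    rw [measure_sdiff (ball_subset_closedBall.trans (closedBall_subset_closedBall (by linarith)))
      measurableSet_ball.nullMeasurableSet measure_ball_lt_top.ne,
      Measure.addHaar_closedBall _ _ (by linarith),
      Measure.addHaar_ball_of_pos _ (0 : E) (r := R - diam K) (by linarith),
      ENNReal.ofReal_sub _ (pow_nonneg (by linarith) _),
      ENNReal.sub_mul fun _ _ ↦ measure_ball_lt_top.ne]
  rw [← hannulus]
  refine hT.card_mul_volume_le hK fun t ht y hy ↦ ?_
  obtain ⟨z, hz, hzR⟩ := hmeet t ht
  obtain ⟨u, hu, huR⟩ := not_subset.1 (hout t ht)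
  have hyz := hK.dist_le_diam (g t) hy hz
  have huy := hK.dist_le_diam (g t) hu hy
  rw [mem_closedBall] at hzR huR
  rw [Set.mem_sdiff, mem_closedBall, mem_ball]
  constructor <;> linarith [dist_triangle y z 0, dist_triangle u y 0]

theorem exists_card_boundary_le (hT : IsTilingBy K g) (hK : IsConvexBody K) {ε : ℝ} (hε : 0 < ε) :
    ∃ R > 0, ∀ S B : Finset ι, (∀ t, t ∈ S ↔ (g t '' K ∩ closedBall 0 R).Nonempty) → B ⊆ S →
      (∀ t ∈ B, ¬ g t '' K ⊆ closedBall 0 R) → B.card ≤ ε * S.card := by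
  set d := finrank ℝ E
  obtain ⟨s, hsε, hs0, hs1⟩ : ∃ s : ℝ, (1 + s) ^ d - (1 - s) ^ d < ε ∧ 0 < s ∧ s < 1 := by
    have hlim : Tendsto (fun s : ℝ ↦ (1 + s) ^ d - (1 - s) ^ d) (𝓝[>] 0) (𝓝 0) := by
      refine (Continuous.tendsto' (by fun_prop) 0 0 (by simp)).mono_left nhdsWithin_le_nhds
    exact ((hlim.eventually_lt_const hε).and (Ioo_mem_nhdsGT one_pos)).exists
  set R := (diam K + 1) / s with hR
  have hD : 0 ≤ diam K := diam_nonneg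
  have hDsR : diam K < s * R := by rw [hR]; field_simp; linarith
  have hR0 : 0 < R := by positivity
  have hsR : s * R < R := by nlinarith
  refine ⟨R, hR0, fun S B hS hBS hout ↦ ?_⟩
  have hannulus : (R + diam K) ^ d - (R - diam K) ^ d ≤ ε * R ^ d :=
    calc (R + diam K) ^ d - (R - diam K) ^ d ≤ (R + s * R) ^ d - (R - s * R) ^ d := by
          gcongr
      _ = ((1 + s) ^ d - (1 - s) ^ d) * R ^ d := by
          rw [sub_mul, ← mul_pow, ← mul_pow]; ring
      _ ≤ ε * R ^ d := by gcongr
  have hcard : B.card * volume K ≤ ENNReal.ofReal ε * S.card * volume K :=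
    calc B.card * volume K
        ≤ ENNReal.ofReal ((R + diam K) ^ d - (R - diam K) ^ d) * volume (ball (0 : E) 1) :=
          hT.card_boundary_mul_volume_le hK (by linarith) (fun t ht ↦ (hS t).1 (hBS ht)) hout
      _ ≤ ENNReal.ofReal ε * volume (closedBall (0 : E) R) := by
          rw [Measure.addHaar_closedBall _ _ hR0.le, ← mul_assoc, ← ENNReal.ofReal_mul hε.le]
          gcongr
      _ ≤ ENNReal.ofReal ε * S.card * volume K := by
          rw [mul_assoc]
          gcongr
          exact hT.volume_closedBall_le_card_mul fun t ↦ (hS t).2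
  have hle := (ENNReal.mul_le_mul_iff_left hK.volume_ne_zero hK.isCompact.measure_lt_top.ne).1 hcard
  rwa [← ENNReal.ofReal_natCast, ← ENNReal.ofReal_natCast, ← ENNReal.ofReal_mul hε.le,
    ENNReal.ofReal_le_ofReal_iff (by positivity)] at hle

lemma exists_ne_mem_frontier (hT : IsTilingBy K g) (hK : IsConvexBody K) {t : ι} {x : E}
    (hx : x ∈ frontier (g t '' K)) : ∃ s ≠ t, x ∈ frontier (g s '' K) := by
  have hout : ∃ᶠ z in 𝓝 x, z ∉ g t '' K :=
    mem_closure_iff_frequently.1 (frontier_eq_closure_inter_closure.subset hx).2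
  obtain ⟨z, hzt, hz⟩ := (hout.and_eventually (hT.eventually_mem_of_mem hK x)).exists
  obtain ⟨s, hs⟩ := hT.exists_mem z
  have hst : s ≠ t := by
    rintro rfl
    exact hzt hs
  exact ⟨s, hst, subset_closure (hz s hs), fun hxs ↦
    disjoint_left.1 (hT.disjoint_interior_tile hK hst) hxs
      ((hK.image (g t)).isCompact.isClosed.frontier_subset hx)⟩

end IsTilingBy

end Tilings

/-! ### Local angles of plane sets -/

section LocalAngles

open MeasureTheory Metric Filter Topology
open scoped ComplexConjugate

/-- The two-dimensional cross product: twice the signed area of the triangle `0, u, w`. -/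
def cross (u w : ℂ) : ℝ := u.re * w.im - u.im * w.re

lemma cross_mul_mul (c u w : ℂ) : cross (c * u) (c * w) = Complex.normSq c * cross u w := by
  simp only [cross, Complex.mul_re, Complex.mul_im, Complex.normSq_apply]
  ring

lemma cross_ofReal_mul_left (r : ℝ) (u w : ℂ) : cross (r * u) w = r * cross u w := by
  simp only [cross, Complex.re_ofReal_mul, Complex.im_ofReal_mul]
  ring

lemma cross_ofReal_mul_right (r : ℝ) (u w : ℂ) : cross u (r * w) = r * cross u w := by
  simp only [cross, Complex.re_ofReal_mul, Complex.im_ofReal_mul]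
  ring

lemma volume_ball_eq (x : ℂ) {r : ℝ} (hr : 0 ≤ r) :
    volume (ball x r) = ENNReal.ofReal (π * r ^ 2) := by
  rw [Complex.volume_ball, mul_comm π, ENNReal.ofReal_mul (by positivity), ENNReal.ofReal_pow hr,
    ← NNReal.coe_real_pi, ENNReal.ofReal_coe_nnreal]

/-- The set `S` has angle `θ` at `x`: small discs about `x` meet `S` in the area of a circular
sector of opening angle `θ`. -/
def HasAngleAt (S : Set ℂ) (x : ℂ) (θ : ℝ) : Prop :=
  ∀ᶠ r in 𝓝[>] 0, volume (S ∩ ball x r) = ENNReal.ofReal (θ / 2 * r ^ 2)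

lemma eventually_ball_subset {x : ℂ} {S : Set ℂ} (hS : S ∈ 𝓝 x) :
    ∀ᶠ r in 𝓝[>] (0 : ℝ), ball x r ⊆ S := by
  obtain ⟨δ, hδ, hball⟩ := Metric.mem_nhds_iff.1 hS
  filter_upwards [Ioo_mem_nhdsGT hδ] with r hr
  exact (ball_subset_ball hr.2.le).trans hball

namespace HasAngleAt

variable {S T : Set ℂ} {x : ℂ} {θ : ℝ}

lemma of_mem_nhds (hS : S ∈ 𝓝 x) : HasAngleAt S x (2 * π) := by
  filter_upwards [eventually_ball_subset hS, self_mem_nhdsWithin] with r hr hr0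
  rw [inter_eq_self_of_subset_right hr, volume_ball_eq x hr0.le,
    mul_div_cancel_left₀ _ two_ne_zero]

lemma congr (hS : HasAngleAt S x θ) (hST : ∀ᶠ z in 𝓝 x, z ∈ T ↔ z ∈ S) : HasAngleAt T x θ := by
  filter_upwards [hS, eventually_ball_subset hST] with r hr hball
  rw [← hr]
  congr 1
  ext z
  exact and_congr_left fun hz ↦ hball hz

lemma image (hS : HasAngleAt S x θ) (g : ℂ ≃ᵢ ℂ) : HasAngleAt (g '' S) (g x) θ := by
  filter_upwards [hS] with r hr
  rw [← g.image_ball, ← image_inter g.injective, volume_image_isometryEquiv, hr]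

end HasAngleAt

lemma IsTilingBy.sum_angle_eq {K : Set ℂ} {ι : Type*} {g : ι → ℂ ≃ᵢ ℂ} (hT : IsTilingBy K g)
    (hK : IsConvexBody K) {x : ℂ} {N : Finset ι} (hN : ∀ t, t ∈ N ↔ x ∈ g t '' K) {θ : ι → ℝ}
    (hθ0 : ∀ t ∈ N, 0 ≤ θ t) (hθ : ∀ t ∈ N, HasAngleAt (g t '' K) x (θ t)) :
    ∑ t ∈ N, θ t = 2 * π := by
  obtain ⟨r, ⟨hvol, hball⟩, hr⟩ := ((((Filter.eventually_all_finset N).2 hθ).and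
    (eventually_ball_subset (hT.eventually_mem_of_mem hK x))).and self_mem_nhdsWithin).exists
  have hcover : ball x r = ⋃ t ∈ N, g t '' K ∩ ball x r := by
    refine subset_antisymm (fun z hz ↦ ?_) (iUnion₂_subset fun _ _ ↦ inter_subset_right)
    obtain ⟨t, ht⟩ := hT.exists_mem z
    exact mem_iUnion₂.2 ⟨t, (hN t).2 (hball hz t ht), ht, hz⟩
  have hsum : volume (ball x r) = ∑ t ∈ N, volume (g t '' K ∩ ball x r) := by
    conv_lhs => rw [hcover]
    refine measure_biUnion_finset₀ (fun t _ s _ hts ↦ ?_) fun t _ ↦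
      ((hK.image (g t)).isCompact.measurableSet.inter measurableSet_ball).nullMeasurableSet
    exact measure_mono_null (inter_subset_inter inter_subset_left inter_subset_left)
      ((hK.image _).volume_inter_eq_zero (hK.image _) (hT.disjoint_interior hts))
  have hr2 : 0 < r ^ 2 := pow_pos hr 2
  have hterm (t) (ht : t ∈ N) : 0 ≤ θ t / 2 * r ^ 2 := by have := hθ0 t ht; positivity
  rw [volume_ball_eq x hr.le, Finset.sum_congr rfl hvol,
    ← ENNReal.ofReal_sum_of_nonneg hterm,
    ENNReal.ofReal_eq_ofReal_iff (by positivity) (Finset.sum_nonneg hterm), ← Finset.sum_mul,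
    ← Finset.sum_div] at hsum
  linarith [mul_right_cancel₀ hr2.ne' hsum]

/-- The sector of opening angle `θ` between the rays of arguments `0` and `θ`, for `θ ≤ π`. -/
def sector (θ : ℝ) : Set ℂ := {z | 0 ≤ cross 1 z ∧ 0 ≤ cross z (Complex.exp (θ * Complex.I))}

lemma polarCoord_symm_mem_sector_iff {θ ρ φ : ℝ} (hθ : θ ∈ Ioc 0 π) (hρ : 0 < ρ)
    (hφ : φ ∈ Ioo (-π) π) : Complex.polarCoord.symm (ρ, φ) ∈ sector θ ↔ φ ∈ Icc 0 θ := by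
  have him : cross 1 (Complex.polarCoord.symm (ρ, φ)) = ρ * sin φ := by
    simp [cross, Complex.polarCoord_symm_apply, -Complex.ofReal_cos, -Complex.ofReal_sin]
  have hcross : cross (Complex.polarCoord.symm (ρ, φ)) (Complex.exp (θ * Complex.I)) =
      ρ * sin (θ - φ) := by
    rw [sin_sub]
    simp [cross, Complex.polarCoord_symm_apply, Complex.exp_ofReal_mul_I_re,
      Complex.exp_ofReal_mul_I_im, -Complex.ofReal_cos, -Complex.ofReal_sin]
    ring
  rw [sector, mem_ofPred_eq, him, hcross, mul_nonneg_iff_of_pos_left hρ,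
    mul_nonneg_iff_of_pos_left hρ]
  obtain ⟨hφ1, hφ2⟩ := hφ
  obtain ⟨hθ0, hθπ⟩ := hθ
  constructor
  · rintro ⟨hsin, hsin_sub⟩
    constructor <;> by_contra! hlt
    · exact hsin.not_gt (sin_neg_of_neg_of_neg_pi_lt hlt hφ1)
    · exact hsin_sub.not_gt (sin_neg_of_neg_of_neg_pi_lt (by linarith) (by linarith))
  · rintro ⟨h0, hle⟩
    exact ⟨sin_nonneg_of_nonneg_of_le_pi h0 hφ2.le,
      sin_nonneg_of_nonneg_of_le_pi (by linarith) (by linarith)⟩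

lemma lintegral_Ioo_ofReal {r : ℝ} (hr : 0 ≤ r) :
    ∫⁻ ρ in Ioo 0 r, ENNReal.ofReal ρ = ENNReal.ofReal (r ^ 2 / 2) := by
  rw [← ofReal_integral_eq_lintegral_ofReal (f := fun ρ ↦ ρ)
      ((continuous_id.integrableOn_Icc (a := 0) (b := r)).mono_set Ioo_subset_Icc_self)
      ((ae_restrict_mem measurableSet_Ioo).mono fun ρ hρ ↦ hρ.1.le),
    ← integral_Ioc_eq_integral_Ioo, ← intervalIntegral.integral_of_le hr]
  simp

lemma measurableSet_sector (θ : ℝ) : MeasurableSet (sector θ) := by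
  have hleft : Continuous fun z ↦ cross 1 z := by unfold cross; fun_prop
  have hright : Continuous fun z ↦ cross z (Complex.exp (θ * Complex.I)) := by
    unfold cross; fun_prop
  exact (isClosed_le continuous_const hleft).measurableSet.inter
    (isClosed_le continuous_const hright).measurableSet

lemma volume_sector_inter_ball {θ r : ℝ} (hθ : θ ∈ Ioc 0 π) (hr : 0 ≤ r) :
    volume (sector θ ∩ ball 0 r) = ENNReal.ofReal (θ / 2 * r ^ 2) := by
  have hpolar : EqOn
      (fun p ↦ ENNReal.ofReal p.1 •
        (sector θ ∩ ball 0 r).indicator (1 : ℂ → ENNReal) (Complex.polarCoord.symm p))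
      ((Iio r ×ˢ Icc 0 θ).indicator fun p ↦ ENNReal.ofReal p.1) polarCoord.target := by
    rintro ⟨ρ, φ⟩ ⟨hρ, hφ⟩
    have hiff : Complex.polarCoord.symm (ρ, φ) ∈ sector θ ∩ ball 0 r ↔
        (ρ, φ) ∈ Iio r ×ˢ Icc 0 θ := by
      rw [mem_inter_iff, polarCoord_symm_mem_sector_iff hθ hρ hφ, mem_ball_zero_iff,
        Complex.norm_polarCoord_symm, abs_of_pos hρ, and_comm]
      rfl
    by_cases hmem : (ρ, φ) ∈ Iio r ×ˢ Icc 0 θ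
    · simp only [indicator_of_mem hmem, indicator_of_mem (hiff.2 hmem), Pi.one_apply, smul_eq_mul,
        mul_one]
    · simp only [indicator_of_notMem hmem, indicator_of_notMem (mt hiff.1 hmem), smul_zero]
  have hbox : MeasurableSet (Iio r ×ˢ Icc 0 θ) := measurableSet_Iio.prod measurableSet_Icc
  have hinter : (Iio r ×ˢ Icc 0 θ) ∩ polarCoord.target = Ioo 0 r ×ˢ (Icc 0 θ ∩ Ioo (-π) π) := by
    rw [polarCoord_target, prod_inter_prod, inter_comm (Iio r), Ioi_inter_Iio]
  have harc : volume (Icc 0 θ ∩ Ioo (-π) π) = ENNReal.ofReal θ := by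
    rw [measure_congr (ae_eq_rfl.inter Ioo_ae_eq_Icc), Icc_inter_Icc,
      max_eq_left (by linarith [pi_pos]), min_eq_left hθ.2, Real.volume_Icc, sub_zero]
  calc volume (sector θ ∩ ball 0 r)
      = ∫⁻ p in polarCoord.target, (Iio r ×ˢ Icc 0 θ).indicator (fun p ↦ ENNReal.ofReal p.1) p := by
        rw [← lintegral_indicator_one ((measurableSet_sector θ).inter measurableSet_ball),
          ← Complex.lintegral_comp_polarCoord_symm,
          setLIntegral_congr_fun polarCoord.open_target.measurableSet hpolar]
    _ = ∫⁻ p in Ioo 0 r ×ˢ (Icc 0 θ ∩ Ioo (-π) π), ENNReal.ofReal p.1 := by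
        rw [lintegral_indicator hbox, Measure.restrict_restrict hbox, hinter]
    _ = ENNReal.ofReal (r ^ 2 / 2) * ENNReal.ofReal θ := by
        rw [Measure.volume_eq_prod, ← Measure.prod_restrict, lintegral_prod _ (by fun_prop)]
        simp only [lintegral_const, Measure.restrict_apply, MeasurableSet.univ, univ_inter, harc]
        rw [lintegral_mul_const _ (by fun_prop), lintegral_Ioo_ofReal hr]
    _ = ENNReal.ofReal (θ / 2 * r ^ 2) := by
        rw [← ENNReal.ofReal_mul (by positivity)]
        congr 1
        ring

lemma hasAngleAt_sector {θ : ℝ} (hθ : θ ∈ Ioc 0 π) : HasAngleAt (sector θ) 0 θ := by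
  filter_upwards [self_mem_nhdsWithin] with r hr using volume_sector_inter_ball hθ (le_of_lt hr)

lemma HasAngleAt.of_exp_cone {S : Set ℂ} {x u : ℂ} {θ : ℝ} (hθ : θ ∈ Ioc 0 π) (hu : u ≠ 0)
    (hS : ∀ᶠ z in 𝓝 x, z ∈ S ↔
      0 ≤ cross u (z - x) ∧ 0 ≤ cross (z - x) (u * Complex.exp (θ * Complex.I))) :
    HasAngleAt S x θ := by
  set c : Circle := Circle.exp u.arg
  have huc : u = ‖u‖ * c := (Complex.norm_mul_exp_arg_mul_I u).symm
  have hcross (v w : ℂ) : cross (c * v) (c * w) = cross v w := by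
    rw [cross_mul_mul, Circle.normSq_coe, one_mul]
  let g : ℂ ≃ᵢ ℂ := (rotation c).toIsometryEquiv.trans (IsometryEquiv.addRight x)
  have hg (y : ℂ) : g y = c * y + x := rfl
  have himage : HasAngleAt (g '' sector θ) x θ := by
    simpa [hg] using (hasAngleAt_sector hθ).image g
  refine himage.congr (hS.mono fun z hz ↦ hz.trans ?_)
  obtain ⟨y, rfl⟩ := g.surjective z
  have hleft : cross u (g y - x) = ‖u‖ * cross 1 y := by
    rw [hg, add_sub_cancel_right, huc, cross_ofReal_mul_left, ← hcross 1 y, mul_one, ← huc]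
  have hright : cross (g y - x) (u * Complex.exp (θ * Complex.I)) =
      ‖u‖ * cross y (Complex.exp (θ * Complex.I)) := by
    rw [hg, add_sub_cancel_right, huc, mul_assoc, cross_ofReal_mul_right, hcross, ← huc]
  have hpos := norm_pos_iff.2 hu
  rw [hleft, hright, mul_nonneg_iff_of_pos_left hpos, mul_nonneg_iff_of_pos_left hpos,
    g.injective.mem_set_image]
  rfl

lemma HasAngleAt.of_halfPlane {S : Set ℂ} {x u : ℂ} (hu : u ≠ 0)
    (hS : ∀ᶠ z in 𝓝 x, z ∈ S ↔ 0 ≤ cross u (z - x)) : HasAngleAt S x π := by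
  refine .of_exp_cone ⟨pi_pos, le_rfl⟩ hu (hS.mono fun z hz ↦ hz.trans ?_)
  have hopposite : cross (z - x) (u * Complex.exp (π * Complex.I)) = cross u (z - x) := by
    rw [Complex.exp_pi_mul_I, mul_neg_one, cross, cross, Complex.neg_re, Complex.neg_im]
    ring
  rw [hopposite, and_self_iff]

lemma left_ne_zero_of_cross_pos {u w : ℂ} (h : 0 < cross u w) : u ≠ 0 := by
  rintro rfl
  simp [cross] at h

lemma right_ne_zero_of_cross_pos {u w : ℂ} (h : 0 < cross u w) : w ≠ 0 := by
  rintro rfl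
  simp [cross] at h

lemma cross_eq_normSq_mul_im_div {u : ℂ} (hu : u ≠ 0) (w : ℂ) :
    cross u w = Complex.normSq u * (w / u).im := by
  have h := cross_mul_mul u 1 (w / u)
  rw [mul_one, mul_div_cancel₀ _ hu] at h
  rw [h]
  simp [cross]

lemma angle_eq_arg_div_of_cross_pos {u w : ℂ} (h : 0 < cross u w) :
    InnerProductGeometry.angle u w = (w / u).arg := by
  have hu : u ≠ 0 := left_ne_zero_of_cross_pos h
  have hw : w ≠ 0 := right_ne_zero_of_cross_pos h
  rw [cross_eq_normSq_mul_im_div hu] at h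
  rw [InnerProductGeometry.angle_comm, Complex.angle_eq_abs_arg hw hu, abs_of_nonneg]
  exact Complex.arg_nonneg_iff.2 (pos_of_mul_pos_right h (Complex.normSq_nonneg u)).le

lemma angle_mem_Ioo_of_cross_pos {u w : ℂ} (h : 0 < cross u w) :
    InnerProductGeometry.angle u w ∈ Ioo 0 π := by
  have hu : u ≠ 0 := left_ne_zero_of_cross_pos h
  rw [angle_eq_arg_div_of_cross_pos h]
  rw [cross_eq_normSq_mul_im_div hu] at h
  have him : 0 < (w / u).im := pos_of_mul_pos_right h (Complex.normSq_nonneg u)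
  exact ⟨(Complex.arg_nonneg_iff.2 him.le).lt_of_ne' fun h0 ↦
      him.ne' (Complex.arg_eq_zero_iff.1 h0).2,
    (Complex.arg_le_pi _).lt_of_ne fun hπ ↦ him.ne' (Complex.arg_eq_pi_iff.1 hπ).2⟩

lemma norm_mul_exp_angle_of_cross_pos {u w : ℂ} (h : 0 < cross u w) :
    ‖u‖ * w = ‖w‖ * (u * Complex.exp (InnerProductGeometry.angle u w * Complex.I)) := by
  have hu : u ≠ 0 := left_ne_zero_of_cross_pos h
  have hu' : (‖u‖ : ℂ) ≠ 0 := by exact_mod_cast norm_ne_zero_iff.2 hu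
  have hpolar := Complex.norm_mul_exp_arg_mul_I (w / u)
  rw [angle_eq_arg_div_of_cross_pos h]
  rw [norm_div, Complex.ofReal_div] at hpolar
  field_simp at hpolar ⊢
  exact hpolar.symm

lemma HasAngleAt.of_cone {S : Set ℂ} {x u w : ℂ} (huw : 0 < cross u w)
    (hS : ∀ᶠ z in 𝓝 x, z ∈ S ↔ 0 ≤ cross u (z - x) ∧ 0 ≤ cross (z - x) w) :
    HasAngleAt S x (InnerProductGeometry.angle u w) := by
  have hu : u ≠ 0 := left_ne_zero_of_cross_pos huw
  have hw : w ≠ 0 := right_ne_zero_of_cross_pos huw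
  refine .of_exp_cone (Ioo_subset_Ioc_self (angle_mem_Ioo_of_cross_pos huw)) hu
    (hS.mono fun z hz ↦ hz.trans (and_congr_right fun _ ↦ ?_))
  rw [← mul_nonneg_iff_of_pos_left (norm_pos_iff.2 hu), ← cross_ofReal_mul_right,
    norm_mul_exp_angle_of_cross_pos huw, cross_ofReal_mul_right,
    mul_nonneg_iff_of_pos_left (norm_pos_iff.2 hw)]

end LocalAngles

/-! ### Averaging over the nodes of a tiling -/

section Averaging

open MeasureTheory Metric Filter Topology

/-- A convex tile with corners `V i` and interior angles `a i`: the part of the structure of a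
convex polygon that can be seen from its local angles. -/
structure IsConvexTile {κ : Type*} [Fintype κ] (V : κ → ℂ) (a : κ → ℝ) (K : Set ℂ) : Prop
    extends IsConvexBody K where
  injective : Function.Injective V
  corner_mem (i : κ) : V i ∈ K
  angle_mem (i : κ) : a i ∈ Ioo 0 π
  sum_angle : ∑ i, a i = (Fintype.card κ - 2) * π
  hasAngleAt_corner (i : κ) : HasAngleAt K (V i) (a i)
  hasAngleAt_side {x : ℂ} (hx : x ∈ frontier K) (hxV : x ∉ range V) : HasAngleAt K x π

/-- `Q` is the set of all corners `(t, i)`, the `i`-th corner of the tile `t`, at the point `x`. -/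
def IsCornerSet {κ ι : Type*} (V : κ → ℂ) (g : ι → ℂ ≃ᵢ ℂ) (x : ℂ) (Q : Finset (ι × κ)) : Prop :=
  ∀ p, p ∈ Q ↔ g p.1 (V p.2) = x

/-- `Q` is the set of all corners at the point `x`, and every tile containing `x` has a corner
there. -/
structure IsFullNode {κ ι : Type*} (V : κ → ℂ) (K : Set ℂ) (g : ι → ℂ ≃ᵢ ℂ) (x : ℂ)
    (Q : Finset (ι × κ)) : Prop where
  isCornerSet : IsCornerSet V g x Q
  exists_corner {t : ι} (ht : x ∈ g t '' K) : ∃ i, (t, i) ∈ Q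

/-- A nonnegative weight on the corners of the tiles that is at least one at each full node with
exactly three corners. -/
structure IsNodeWeight {κ ι : Type*} (V : κ → ℂ) (K : Set ℂ) (g : ι → ℂ ≃ᵢ ℂ) (w : ι → κ → ℝ) :
    Prop where
  nonneg (t : ι) (i : κ) : 0 ≤ w t i
  one_le {x : ℂ} {Q : Finset (ι × κ)} (hQ : IsFullNode V K g x Q) (hcard : Q.card = 3) :
    1 ≤ ∑ p ∈ Q, w p.1 p.2

variable {κ ι : Type*} {V : κ → ℂ} {a : κ → ℝ} {K : Set ℂ} {g : ι → ℂ ≃ᵢ ℂ} {x : ℂ}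
  {Q : Finset (ι × κ)}

lemma IsCornerSet.injOn_fst (hQ : IsCornerSet V g x Q) (hV : Function.Injective V) :
    InjOn Prod.fst (Q : Set (ι × κ)) := by
  rintro ⟨t, i⟩ hi ⟨_, j⟩ hj rfl
  have hij := ((hQ _).1 hi).trans ((hQ _).1 hj).symm
  exact Prod.ext rfl (hV ((g t).injective hij))

namespace IsConvexTile

variable [Fintype κ]

lemma hasAngleAt_image_of_ne_corner (hK : IsConvexTile V a K) (g : ℂ ≃ᵢ ℂ) (hx : x ∈ g '' K)
    (hxV : ∀ i, g (V i) ≠ x) : ∃ θ, (θ = π ∨ θ = 2 * π) ∧ HasAngleAt (g '' K) x θ := by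
  obtain ⟨y, hy, rfl⟩ := hx
  by_cases hint : y ∈ interior K
  · exact ⟨_, .inr rfl, (HasAngleAt.of_mem_nhds (mem_interior_iff_mem_nhds.1 hint)).image g⟩
  · refine ⟨π, .inl rfl, (hK.hasAngleAt_side ⟨subset_closure hy, hint⟩ ?_).image g⟩
    rintro ⟨i, rfl⟩
    exact hxV i rfl

lemma exists_sum_corner_add_sum (hK : IsConvexTile V a K) (hT : IsTilingBy K g)
    (hQ : IsCornerSet V g x Q) : ∃ (S : Finset ι) (θ : ι → ℝ),
      (∀ t, t ∈ S ↔ x ∈ g t '' K ∧ ∀ i, (t, i) ∉ Q) ∧ (∀ t ∈ S, θ t = π ∨ θ t = 2 * π) ∧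
        ∑ p ∈ Q, a p.2 + ∑ t ∈ S, θ t = 2 * π := by
  classical
  obtain ⟨N, hN⟩ := hT.exists_finset_tiles hK.toIsConvexBody x
  have hangle : ∀ t ∈ N, ∃ θ, HasAngleAt (g t '' K) x θ ∧ 0 ≤ θ ∧ (∀ i, (t, i) ∈ Q → θ = a i) ∧
      ((∀ i, (t, i) ∉ Q) → θ = π ∨ θ = 2 * π) := by
    intro t ht
    by_cases hcorner : ∃ i, (t, i) ∈ Q
    · obtain ⟨i, hi⟩ := hcorner
      refine ⟨a i, (hQ _).1 hi ▸ (hK.hasAngleAt_corner i).image (g t), (hK.angle_mem i).1.le,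
        fun j hj ↦ ?_, fun hnone ↦ absurd hi (hnone i)⟩
      exact congrArg (fun p ↦ a p.2) (hQ.injOn_fst hK.injective hi hj rfl)
    · push Not at hcorner
      obtain ⟨θ, hθπ, hθ⟩ := hK.hasAngleAt_image_of_ne_corner (g t) ((hN t).1 ht)
        fun i hi ↦ hcorner i ((hQ _).2 hi)
      exact ⟨θ, hθ, by obtain rfl | rfl := hθπ <;> positivity, fun i hi ↦ absurd hi (hcorner i),
        fun _ ↦ hθπ⟩
  choose! θ hθ hθ0 hθa hθπ using hangle
  have hsub : Q.image Prod.fst ⊆ N := by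
    refine Finset.image_subset_iff.2 fun p hp ↦ (hN _).2 ?_
    exact (hQ p).1 hp ▸ mem_image_of_mem _ (hK.corner_mem p.2)
  have hmem (t : ι) : t ∈ N \ Q.image Prod.fst ↔ x ∈ g t '' K ∧ ∀ i, (t, i) ∉ Q := by
    simp [hN]
  refine ⟨N \ Q.image Prod.fst, θ, hmem,
    fun t ht ↦ hθπ t (Finset.sdiff_subset ht) ((hmem t).1 ht).2, ?_⟩
  rw [← hT.sum_angle_eq hK.toIsConvexBody hN hθ0 hθ, ← Finset.sum_sdiff hsub, add_comm,
    Finset.sum_image (hQ.injOn_fst hK.injective)]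
  exact congrArg _ (Finset.sum_congr rfl fun p hp ↦
    (hθa _ (hsub (Finset.mem_image_of_mem _ hp)) _ hp).symm)

lemma sum_angle_of_isFullNode (hK : IsConvexTile V a K) (hT : IsTilingBy K g)
    (hQ : IsFullNode V K g x Q) : ∑ p ∈ Q, a p.2 = 2 * π := by
  obtain ⟨S, θ, hS, -, hsum⟩ := hK.exists_sum_corner_add_sum hT hQ.isCornerSet
  have hempty : S = ∅ := Finset.eq_empty_of_forall_notMem fun t ht ↦ by
    obtain ⟨i, hi⟩ := hQ.exists_corner ((hS t).1 ht).1
    exact ((hS t).1 ht).2 i hi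
  simpa [hempty] using hsum

lemma isFullNode_or_sum_angle_eq_pi (hK : IsConvexTile V a K) (hT : IsTilingBy K g)
    (hQ : IsCornerSet V g x Q) (hne : Q.Nonempty) : IsFullNode V K g x Q ∨ ∑ p ∈ Q, a p.2 = π := by
  obtain ⟨S, θ, hS, hθ, hsum⟩ := hK.exists_sum_corner_add_sum hT hQ
  have hpos : 0 < ∑ p ∈ Q, a p.2 := Finset.sum_pos (fun p _ ↦ (hK.angle_mem p.2).1) hne
  have hcard : S.card < 2 := by
    have hle : S.card • π ≤ ∑ t ∈ S, θ t := Finset.card_nsmul_le_sum _ _ _ fun t ht ↦ by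
      obtain h | h := hθ t ht <;> linarith [pi_pos]
    rw [nsmul_eq_mul] at hle
    have : (S.card : ℝ) < 2 := lt_of_mul_lt_mul_right (by linarith) pi_pos.le
    exact_mod_cast this
  obtain hzero | hone : S.card = 0 ∨ S.card = 1 := by omega
  · refine .inl ⟨hQ, fun {t} ht ↦ ?_⟩
    by_contra! hnone
    simpa [Finset.card_eq_zero.1 hzero] using (hS t).2 ⟨ht, hnone⟩
  · obtain ⟨t, rfl⟩ := Finset.card_eq_one.1 hone
    rw [Finset.sum_singleton] at hsum
    obtain h | h := hθ t (Finset.mem_singleton_self t)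
    · exact .inr (by linarith)
    · linarith

/-- The angular excess of a corner, in units of `π / 2`, plus its weight.  Its sum over all corners
of one tile is `4 - n` plus the weight of the tile, while its sum over a node is nonnegative. -/
def weightedExcess (a : κ → ℝ) (w : ι → κ → ℝ) (p : ι × κ) : ℝ := 1 - 2 * a p.2 / π + w p.1 p.2

variable {w : ι → κ → ℝ}

lemma sum_weightedExcess_node_nonneg (hK : IsConvexTile V a K) (hT : IsTilingBy K g)
    (hw : IsNodeWeight V K g w) (hQ : IsCornerSet V g x Q) : 0 ≤ ∑ p ∈ Q, weightedExcess a w p := by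
  obtain rfl | hne := Q.eq_empty_or_nonempty
  · simp
  have hsum : ∑ p ∈ Q, weightedExcess a w p =
      Q.card - 2 * (∑ p ∈ Q, a p.2) / π + ∑ p ∈ Q, w p.1 p.2 := by
    simp only [weightedExcess, Finset.sum_add_distrib, Finset.sum_sub_distrib, Finset.sum_const,
      nsmul_one, Finset.mul_sum, Finset.sum_div]
  have hlt : ∑ p ∈ Q, a p.2 < Q.card * π := by
    simpa using Finset.sum_lt_sum_of_nonempty hne fun p _ ↦ (hK.angle_mem p.2).2
  have hw0 : 0 ≤ ∑ p ∈ Q, w p.1 p.2 := Finset.sum_nonneg fun p _ ↦ hw.nonneg _ _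
  obtain hfull | hhalf := hK.isFullNode_or_sum_angle_eq_pi hT hQ hne
  · have h2π := hK.sum_angle_of_isFullNode hT hfull
    rw [h2π] at hlt
    have hcard : 2 < Q.card := by exact_mod_cast lt_of_mul_lt_mul_right hlt pi_pos.le
    have h4 : 2 * (2 * π) / π = 4 := by field_simp; norm_num
    rw [hsum, h2π, h4]
    obtain h3 | h3 : Q.card = 3 ∨ 4 ≤ Q.card := by omega
    · have := hw.one_le hfull h3
      rw [h3]
      push_cast
      linarith
    · have : (4 : ℝ) ≤ Q.card := by exact_mod_cast h3
      linarith
  · rw [hhalf] at hlt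
    have hcard : 1 < Q.card := by
      exact_mod_cast lt_of_mul_lt_mul_right ((one_mul π).trans_lt hlt) pi_pos.le
    have : (2 : ℝ) ≤ Q.card := by exact_mod_cast hcard
    rw [hsum, hhalf, mul_div_cancel_right₀ _ pi_ne_zero]
    linarith

lemma sum_weightedExcess_tile (hK : IsConvexTile V a K) (t : ι) :
    ∑ i, weightedExcess a w (t, i) = 4 - Fintype.card κ + ∑ i, w t i := by
  simp only [weightedExcess, Finset.sum_add_distrib, Finset.sum_sub_distrib, Finset.sum_const,
    Finset.card_univ, nsmul_one, ← Finset.mul_sum, ← Finset.sum_div, hK.sum_angle]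
  field_simp
  ring

lemma neg_one_le_weightedExcess (hK : IsConvexTile V a K) (hw : IsNodeWeight V K g w)
    (p : ι × κ) : -1 ≤ weightedExcess a w p := by
  have : 2 * a p.2 / π ≤ 2 := by
    rw [div_le_iff₀ pi_pos]
    linarith [(hK.angle_mem p.2).2]
  have := hw.nonneg p.1 p.2
  unfold weightedExcess
  linarith

lemma neg_card_le_sum_weightedExcess (hK : IsConvexTile V a K) (hT : IsTilingBy K g)
    (hw : IsNodeWeight V K g w) {S B : Finset ι} {R : ℝ}
    (hS : ∀ t, t ∈ S ↔ (g t '' K ∩ closedBall 0 R).Nonempty)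
    (hB : ∀ t, t ∈ B ↔ t ∈ S ∧ ¬ g t '' K ⊆ closedBall 0 R) :
    -(Fintype.card κ * B.card : ℝ) ≤ ∑ t ∈ S, ∑ i, weightedExcess a w (t, i) := by
  classical
  set P := S ×ˢ (Finset.univ : Finset κ)
  have hinside : 0 ≤ ∑ p ∈ P with g p.1 (V p.2) ∈ closedBall 0 R, weightedExcess a w p := by
    rw [← Finset.sum_fiberwise_of_maps_to fun p hp ↦
      Finset.mem_image_of_mem (fun p : ι × κ ↦ g p.1 (V p.2)) hp]
    refine Finset.sum_nonneg fun x hx ↦ ?_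
    obtain ⟨p, hp, rfl⟩ := Finset.mem_image.1 hx
    refine hK.sum_weightedExcess_node_nonneg hT hw (x := g p.1 (V p.2)) fun q ↦ ?_
    rw [Finset.mem_filter, and_iff_right_iff_imp]
    intro hq
    have hqR : g q.1 (V q.2) ∈ closedBall 0 R := hq ▸ (Finset.mem_filter.1 hp).2
    exact Finset.mem_filter.2 ⟨Finset.mem_product.2 ⟨(hS _).2
      ⟨_, mem_image_of_mem _ (hK.corner_mem q.2), hqR⟩, Finset.mem_univ _⟩, hqR⟩
  have houtside : {p ∈ P | g p.1 (V p.2) ∉ closedBall 0 R} ⊆ B ×ˢ Finset.univ := fun p hp ↦ by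
    obtain ⟨hpP, hpR⟩ := Finset.mem_filter.1 hp
    refine Finset.mem_product.2 ⟨(hB _).2 ⟨(Finset.mem_product.1 hpP).1, fun hsub ↦ ?_⟩,
      Finset.mem_univ _⟩
    exact hpR (hsub (mem_image_of_mem _ (hK.corner_mem p.2)))
  have hcard : (({p ∈ P | g p.1 (V p.2) ∉ closedBall 0 R} : Finset _).card : ℝ) ≤
      Fintype.card κ * B.card := by
    rw [mul_comm]
    exact_mod_cast (Finset.card_le_card houtside).trans_eq (Finset.card_product _ _)
  have hbound := Finset.card_nsmul_le_sum {p ∈ P | g p.1 (V p.2) ∉ closedBall 0 R}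
    (weightedExcess a w) (-1) fun p _ ↦ hK.neg_one_le_weightedExcess hw p
  rw [nsmul_eq_mul, mul_neg_one] at hbound
  rw [← Finset.sum_product', ← Finset.sum_filter_add_sum_filter_not P
    (fun p ↦ g p.1 (V p.2) ∈ closedBall 0 R)]
  linarith

theorem card_sub_four_le (hK : IsConvexTile V a K) (hT : IsTilingBy K g)
    (hw : IsNodeWeight V K g w) {c : ℝ} (hc : ∀ t, ∑ i, w t i ≤ c) : Fintype.card κ - 4 ≤ c := by
  classical
  by_contra! hlt
  set n : ℝ := (Fintype.card κ : ℝ)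
  have hn : 0 ≤ n := Nat.cast_nonneg _
  obtain ⟨R, hR, hcard⟩ := hT.exists_card_boundary_le hK.toIsConvexBody
    (ε := (n - 4 - c) / (n + 1)) (by apply div_pos <;> linarith)
  have hfin := hT.finite_setOf_inter_closedBall hK.toIsConvexBody 0 R
  set S := hfin.toFinset
  set B := {t ∈ S | ¬ g t '' K ⊆ closedBall 0 R}
  have hS (t : ι) : t ∈ S ↔ (g t '' K ∩ closedBall 0 R).Nonempty := hfin.mem_toFinset
  have hB (t : ι) : t ∈ B ↔ t ∈ S ∧ ¬ g t '' K ⊆ closedBall 0 R := Finset.mem_filter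
  have hSpos : (0 : ℝ) < S.card := by
    obtain ⟨t, ht⟩ := hT.exists_mem 0
    exact_mod_cast Finset.card_pos.2 ⟨t, (hS t).2 ⟨0, ht, mem_closedBall_self hR.le⟩⟩
  have hBS := hcard S B hS (Finset.filter_subset _ _) fun t ht ↦ ((hB t).1 ht).2
  have hupper : ∑ t ∈ S, ∑ i, weightedExcess a w (t, i) ≤ S.card * (4 - n + c) := by
    rw [← nsmul_eq_mul]
    refine Finset.sum_le_card_nsmul _ _ _ fun t _ ↦ ?_
    rw [hK.sum_weightedExcess_tile]
    linarith [hc t]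
  have hlower := hK.neg_card_le_sum_weightedExcess hT hw hS hB
  rw [div_mul_eq_mul_div, le_div_iff₀ (by positivity)] at hBS
  have hB0 : (B.card : ℝ) = 0 := le_antisymm (by linarith) (Nat.cast_nonneg _)
  have hδS : 0 < (n - 4 - c) * S.card := mul_pos (by linarith) hSpos
  rw [hB0] at hlower
  linarith

end IsConvexTile

end Averaging

/-! ### Pentagonal nodes -/

section PentagonNodes

variable {V : Fin 5 → ℂ} {a : Fin 5 → ℝ} {K : Set ℂ} {ι : Type*} {g : ι → ℂ ≃ᵢ ℂ} {x : ℂ}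
  {Q : Finset (ι × Fin 5)}

lemma sum_add_sum_eq_of_injective {a : Fin 5 → ℝ} {e : Fin 5 → Fin 5} (he : Function.Injective e) :
    a (e 0) + a (e 1) + a (e 2) + a (e 3) + a (e 4) = ∑ i, a i := by
  refine (Fin.sum_univ_five (a ∘ e)).symm.trans ?_
  exact (Equiv.ofBijective e he.bijective_of_finite).sum_comp a

lemma eq_or_eq_or_eq_of_add_add_eq_two_pi (hsum : ∑ i, a i = 3 * π)
    (hπ : ∀ i j, i ≠ j → a i + a j ≠ π) {i j k : Fin 5} (h : a i + a j + a k = 2 * π) :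
    i = j ∨ i = k ∨ j = k := by
  by_contra! hne
  obtain ⟨l, m, he⟩ : ∃ l m, Function.Injective ![i, j, k, l, m] := by
    clear h
    decide +revert
  have hlm : a l + a m = π := by
    have := sum_add_sum_eq_of_injective (a := a) he
    simp only [Matrix.cons_val] at this
    linarith
  exact hπ l m (fun hlm ↦ absurd (@he 3 4 hlm) (by decide)) hlm

lemma IsConvexTile.exists_eq_triple [DecidableEq ι] (hK : IsConvexTile V a K) (hT : IsTilingBy K g)
    (hπ : ∀ i j, i ≠ j → a i + a j ≠ π) (hQ : IsFullNode V K g x Q) (hcard : Q.card = 3) :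
    ∃ p q r, p ≠ q ∧ p ≠ r ∧ q ≠ r ∧ Q = {p, q, r} ∧ p.2 = q.2 ∧
      2 * a p.2 + a r.2 = 2 * π := by
  obtain ⟨p, q, r, hpq, hpr, hqr, rfl⟩ := Finset.card_eq_three.1 hcard
  have hangle : a p.2 + a q.2 + a r.2 = 2 * π := by
    rw [← hK.sum_angle_of_isFullNode hT hQ, Finset.sum_insert (by simp [hpq, hpr]),
      Finset.sum_pair hqr, add_assoc]
  have hsum : ∑ i, a i = 3 * π := hK.sum_angle.trans (by norm_num)
  obtain h | h | h := eq_or_eq_or_eq_of_add_add_eq_two_pi hsum hπ hangle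
  · exact ⟨p, q, r, hpq, hpr, hqr, rfl, h, by rw [← h] at hangle; linarith⟩
  · exact ⟨p, r, q, hpr, hpq, hqr.symm, by grind, h, by rw [← h] at hangle; linarith⟩
  · exact ⟨q, r, p, hqr, hpq.symm, hpr.symm, by grind, h, by rw [← h] at hangle; linarith⟩

theorem IsConvexTile.isNodeBalanced (hK : IsConvexTile V a K) (hT : IsTilingBy K g)
    (hπ : ∀ i j, i ≠ j → a i + a j ≠ π) : IsNodeBalanced a := by
  classical
  intro w hw0 hw
  suffices IsNodeWeight V K g fun _ ↦ w by
    have := hK.card_sub_four_le hT this fun _ ↦ le_rfl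
    norm_num at this
    exact this
  refine ⟨fun _ ↦ hw0, fun {x Q} hQ hcard ↦ ?_⟩
  obtain ⟨p, q, r, hpq, hpr, hqr, rfl, hi, hangle⟩ := hK.exists_eq_triple hT hπ hQ hcard
  rw [Finset.sum_insert (by simp [hpq, hpr]), Finset.sum_pair hqr, ← hi]
  linarith [hw _ _ hangle]

end PentagonNodes

/-! ### Edges of equilateral tiles -/

section Edges

open Filter Topology

lemma eq_of_mem_segment_of_dist_eq {E : Type*} [NormedAddCommGroup E] [NormedSpace ℝ E]
    {x y y' z : E} (hy : z ∈ segment ℝ x y) (hy' : z ∈ segment ℝ x y') (hzx : z ≠ x)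
    (h : dist x y = dist x y') : y = y' := by
  have hray : SameRay ℝ (y - x) (y' - x) :=
    (mem_segment_iff_wbtw.1 hy).sameRay_vsub_left.symm.trans
      (mem_segment_iff_wbtw.1 hy').sameRay_vsub_left
      fun h0 ↦ absurd (sub_eq_zero.1 h0) hzx
  rw [dist_comm, dist_eq_norm, dist_comm, dist_eq_norm] at h
  exact sub_left_injective ((sameRay_iff_of_norm_eq h).1 hray)

lemma exists_mem_segment_ne {E : Type*} [NormedAddCommGroup E] [NormedSpace ℝ E] {x y : E}
    (hxy : x ≠ y) {p : E → Prop} (hp : ∀ᶠ z in 𝓝 x, p z) : ∃ z ∈ segment ℝ x y, z ≠ x ∧ p z := by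
  have hlim : Tendsto (AffineMap.lineMap x y : ℝ → E) (𝓝[>] 0) (𝓝 x) :=
    (AffineMap.lineMap_continuous.tendsto' 0 x (AffineMap.lineMap_apply_zero _ _)).mono_left
      nhdsWithin_le_nhds
  obtain ⟨τ, hpτ, hτ⟩ := ((hlim.eventually hp).and (Ioo_mem_nhdsGT one_pos)).exists
  refine ⟨AffineMap.lineMap x y τ, ?_, ?_, hpτ⟩
  · exact segment_eq_image_lineMap ℝ x y ▸ mem_image_of_mem _ ⟨hτ.1.le, hτ.2.le⟩
  · rw [Ne, AffineMap.lineMap_eq_left_iff, not_or]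
    exact ⟨hxy, hτ.1.ne'⟩

lemma image_segment_isometryEquiv {E F : Type*} [NormedAddCommGroup E] [NormedSpace ℝ E]
    [NormedAddCommGroup F] [NormedSpace ℝ F] (g : E ≃ᵢ F) (x y : E) :
    g '' segment ℝ x y = segment ℝ (g x) (g y) :=
  image_segment ℝ (g.toRealAffineIsometryEquiv.toAffineEquiv : E →ᵃ[ℝ] F) x y

/-- A convex tile all of whose sides have the same length; two corners are joined by a side if
they are adjacent in `G`. -/
structure IsEquilateralTile {κ : Type*} [Fintype κ] (G : SimpleGraph κ) (V : κ → ℂ) (a : κ → ℝ)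
    (K : Set ℂ) : Prop extends IsConvexTile V a K where
  segment_subset_frontier {i j : κ} (hij : G.Adj i j) : segment ℝ (V i) (V j) ⊆ frontier K
  eventually_mem_segment (i : κ) :
    ∀ᶠ z in 𝓝 (V i), z ∈ frontier K → ∃ j, G.Adj i j ∧ z ∈ segment ℝ (V i) (V j)
  dist_eq {i j k l : κ} (hij : G.Adj i j) (hkl : G.Adj k l) : dist (V i) (V j) = dist (V k) (V l)

namespace IsEquilateralTile

variable {κ : Type*} [Fintype κ] {G : SimpleGraph κ} {V : κ → ℂ} {a : κ → ℝ} {K : Set ℂ}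

lemma eventually_mem_segment_image (hK : IsEquilateralTile G V a K) (g : ℂ ≃ᵢ ℂ) (i : κ) :
    ∀ᶠ z in 𝓝 (g (V i)), z ∈ frontier (g '' K) →
      ∃ j, G.Adj i j ∧ z ∈ segment ℝ (g (V i)) (g (V j)) := by
  rw [← g.coe_toHomeomorph, ← g.toHomeomorph.map_nhds_eq, eventually_map]
  filter_upwards [hK.eventually_mem_segment i] with z hz hzK
  rw [← g.toHomeomorph.image_frontier, g.toHomeomorph.injective.mem_set_image] at hzK
  obtain ⟨j, hij, hzj⟩ := hz hzK
  exact ⟨j, hij, image_segment_isometryEquiv g _ _ ▸ mem_image_of_mem g hzj⟩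

variable {ι : Type*} {g : ι → ℂ ≃ᵢ ℂ} {x : ℂ} {Q : Finset (ι × κ)} {t : ι} {i j : κ}

lemma exists_ne_adj_eq (hK : IsEquilateralTile G V a K) (hT : IsTilingBy K g)
    (hQ : IsFullNode V K g x Q) (hti : (t, i) ∈ Q) (hij : G.Adj i j) :
    ∃ s k l, s ≠ t ∧ (s, k) ∈ Q ∧ G.Adj k l ∧ g s (V l) = g t (V j) := by
  obtain rfl : g t (V i) = x := (hQ.isCornerSet _).1 hti
  have hsides : ∀ᶠ z in 𝓝 (g t (V i)), ∀ p ∈ Q, z ∈ frontier (g p.1 '' K) →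
      ∃ l, G.Adj p.2 l ∧ z ∈ segment ℝ (g t (V i)) (g p.1 (V l)) := by
    refine (Filter.eventually_all_finset Q).2 fun p hp ↦ ?_
    exact (hQ.isCornerSet p).1 hp ▸ hK.eventually_mem_segment_image (g p.1) p.2
  have hVij : V i ≠ V j := hK.injective.ne hij.ne
  obtain ⟨z, hz, hzne, hnear, hzsides⟩ := exists_mem_segment_ne ((g t).injective.ne hVij)
    ((hT.eventually_mem_of_mem hK.toIsConvexBody (g t (V i))).and hsides)
  have hzfr : z ∈ frontier (g t '' K) := by
    rw [← image_segment_isometryEquiv] at hz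
    rw [← (g t).coe_toHomeomorph, ← (g t).toHomeomorph.image_frontier]
    exact image_mono (hK.segment_subset_frontier hij) hz
  obtain ⟨s, hst, hzs⟩ := hT.exists_ne_mem_frontier hK.toIsConvexBody hzfr
  have hzsK : z ∈ g s '' K :=
    (hK.toIsConvexBody.image (g s)).isCompact.isClosed.frontier_subset hzs
  obtain ⟨k, hsk⟩ := hQ.exists_corner (hnear s hzsK)
  obtain ⟨l, hkl, hzl⟩ := hzsides _ hsk hzs
  refine ⟨s, k, l, hst, hsk, hkl, (eq_of_mem_segment_of_dist_eq hz hzl hzne ?_).symm⟩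
  rw [← (hQ.isCornerSet _).1 hsk, (g s).dist_eq, hK.dist_eq hkl hij,
    (hQ.isCornerSet _).1 hsk, (g t).dist_eq]

end IsEquilateralTile

end Edges

/-! ### Discharging -/

section Discharging

variable {V : Fin 5 → ℂ} {a : Fin 5 → ℝ} {K : Set ℂ} {ι : Type*} {g : ι → ℂ ≃ᵢ ℂ}

/-- The corner `C` of the tile `t` meets a corner `B` or `E`, that is, a corner adjacent to `A`,
of some tile. -/
def MeetsNeighbourOfA (V : Fin 5 → ℂ) (g : ι → ℂ ≃ᵢ ℂ) (t : ι) : Prop :=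
  ∃ s j, (SimpleGraph.cycleGraph 5).Adj 0 j ∧ g s (V j) = g t (V 2)

open Classical in
/-- The weight of the discharging argument for nodes `A²B` and `C²D`.  In a node `A²B` the side
`BC` of one tile is a side `AB` or `AE` of another, so that the corner `C` is not in a node `C²D`
and its weight can be given to `B`. -/
def dischargingWeight (V : Fin 5 → ℂ) (g : ι → ℂ ≃ᵢ ℂ) (t : ι) : Fin 5 → ℝ :=
  ![1 / 4, if MeetsNeighbourOfA V g t then 1 / 2 else 0,
    if MeetsNeighbourOfA V g t then 0 else 1 / 2, 0, 0]

lemma dischargingWeight_nonneg (t : ι) (i : Fin 5) : 0 ≤ dischargingWeight V g t i := by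
  unfold dischargingWeight
  fin_cases i <;> dsimp <;> positivity

lemma sum_dischargingWeight (t : ι) : ∑ i, dischargingWeight V g t i = 3 / 4 := by
  rw [Fin.sum_univ_five]
  simp only [dischargingWeight, Matrix.cons_val]
  split_ifs <;> norm_num

lemma meetsNeighbourOfA_of_node (hK : IsEquilateralTile (SimpleGraph.cycleGraph 5) V a K)
    (hT : IsTilingBy K g) {x : ℂ} {Q : Finset (ι × Fin 5)} (hQ : IsFullNode V K g x Q)
    {t : ι} (ht : (t, 1) ∈ Q) (hA : ∀ p ∈ Q, p.1 ≠ t → p.2 = 0) : MeetsNeighbourOfA V g t := by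
  obtain ⟨s, k, l, hst, hsk, hkl, hl⟩ :=
    hK.exists_ne_adj_eq hT hQ ht (show (SimpleGraph.cycleGraph 5).Adj 1 2 by decide)
  obtain rfl : k = 0 := hA _ hsk hst
  exact ⟨s, l, hkl, hl⟩

lemma not_meetsNeighbourOfA_of_node {x : ℂ} {Q : Finset (ι × Fin 5)} (hQ : IsCornerSet V g x Q)
    {t : ι} (ht : (t, 2) ∈ Q) (hCD : ∀ p ∈ Q, p.2 = 2 ∨ p.2 = 3) : ¬ MeetsNeighbourOfA V g t := by
  rintro ⟨s, j, hj, hsj⟩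
  have hjQ : (s, j) ∈ Q := (hQ _).2 (hsj.trans ((hQ _).1 ht))
  obtain rfl | rfl : j = 2 ∨ j = 3 := hCD _ hjQ
  all_goals exact absurd hj (by decide)

lemma isNodeWeight_dischargingWeight (hK : IsEquilateralTile (SimpleGraph.cycleGraph 5) V a K)
    (hT : IsTilingBy K g) (hπ : ∀ i j, i ≠ j → a i + a j ≠ π)
    (hnode : OnlyAABAndCCD a) :
    IsNodeWeight V K g (dischargingWeight V g) := by
  classical
  refine ⟨dischargingWeight_nonneg, fun {x Q} hQ hcard ↦ ?_⟩
  obtain ⟨⟨t₁, i⟩, ⟨t₂, j⟩, ⟨t₃, k⟩, hpq, hpr, hqr, rfl, hij, hangle⟩ :=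
    hK.exists_eq_triple hT hπ hQ hcard
  obtain rfl : i = j := hij
  rw [Finset.sum_insert (by simp [hpq, hpr]), Finset.sum_pair hqr]
  obtain ⟨rfl, rfl⟩ | ⟨rfl, rfl⟩ : i = 0 ∧ k = 1 ∨ i = 2 ∧ k = 3 := hnode i k hangle
  · have ht₃ := meetsNeighbourOfA_of_node hK hT hQ (t := t₃) (by simp) (by simp)
    simp only [dischargingWeight, Matrix.cons_val, if_pos ht₃]
    norm_num
  · have hCD {t : ι} (ht : (t, 2) ∈ ({(t₁, 2), (t₂, 2), (t₃, 3)} : Finset (ι × Fin 5))) :=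
      not_meetsNeighbourOfA_of_node hQ.isCornerSet ht (by simp)
    simp only [dischargingWeight, Matrix.cons_val, if_neg (hCD (t := t₁) (by simp)),
      if_neg (hCD (t := t₂) (by simp))]
    norm_num

theorem not_onlyAABAndCCD (hK : IsEquilateralTile (SimpleGraph.cycleGraph 5) V a K)
    (hT : IsTilingBy K g) (hπ : ∀ i j, i ≠ j → a i + a j ≠ π) : ¬ OnlyAABAndCCD a := by
  intro hnode
  have := hK.card_sub_four_le hT (isNodeWeight_dischargingWeight hK hT hπ hnode)
    fun t ↦ (sum_dischargingWeight t).le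
  norm_num at this

end Discharging

/-! ### Convex pentagons as intersections of half-planes -/

section Pentagon

open Filter Topology

/-- The height of `z` over the line through `V k` and `V (k + 1)`, signed and scaled by the length
of that side. -/
def edgeHeight {n : ℕ} [NeZero n] (V : Fin n → ℂ) (k : Fin n) (z : ℂ) : ℝ :=
  cross (V (k + 1) - V k) (z - V k)

/-- The points `V 0, V 1, …` are the corners of a strictly convex polygon in counterclockwise
order: each lies strictly to the left of all sides not ending there. -/
def IsPositivelyOriented {n : ℕ} [NeZero n] (V : Fin n → ℂ) : Prop :=
  ∀ k j, j ≠ k → j ≠ k + 1 → 0 < edgeHeight V k (V j)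

section EdgeHeight

variable {n : ℕ} [NeZero n] (V : Fin n → ℂ) (k : Fin n)

lemma edgeHeight_self : edgeHeight V k (V k) = 0 := by simp [edgeHeight, cross]

lemma edgeHeight_succ : edgeHeight V k (V (k + 1)) = 0 := by
  simp only [edgeHeight, cross]
  ring

lemma edgeHeight_add_smul {s t : ℝ} (hst : s + t = 1) (x y : ℂ) :
    edgeHeight V k (s • x + t • y) = s * edgeHeight V k x + t * edgeHeight V k y := by
  obtain rfl : s = 1 - t := by linarith
  simp [edgeHeight, cross]
  ring

lemma continuous_edgeHeight : Continuous (edgeHeight V k) := by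
  unfold edgeHeight cross
  fun_prop

lemma convex_setOf_edgeHeight_nonneg : Convex ℝ {z | 0 ≤ edgeHeight V k z} := by
  intro x hx y hy s t hs ht hst
  simp only [mem_ofPred_eq] at hx hy ⊢
  rw [edgeHeight_add_smul V k hst]
  positivity

lemma edgeHeight_sub_ofReal_mul_normal (t : ℝ) (z : ℂ) :
    edgeHeight V k (z - t * (Complex.I * (V (k + 1) - V k))) =
      edgeHeight V k z - t * Complex.normSq (V (k + 1) - V k) := by
  simp [edgeHeight, cross, Complex.normSq_apply]
  ring

lemma edgeHeight_eq_zero_of_mem_segment {z : ℂ} (hz : z ∈ segment ℝ (V k) (V (k + 1))) :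
    edgeHeight V k z = 0 := by
  obtain ⟨s, t, -, -, hst, rfl⟩ := hz
  rw [edgeHeight_add_smul V k hst, edgeHeight_self, edgeHeight_succ, mul_zero, mul_zero, add_zero]

end EdgeHeight

lemma IsPositivelyOriented.edgeHeight_nonneg {n : ℕ} [NeZero n] {V : Fin n → ℂ}
    (hV : IsPositivelyOriented V) (k j : Fin n) : 0 ≤ edgeHeight V k (V j) := by
  by_cases hjk : j = k
  · rw [hjk, edgeHeight_self]
  by_cases hjk' : j = k + 1
  · rw [hjk', edgeHeight_succ]
  exact (hV k j hjk hjk').le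

lemma mem_convexHull_triple_of_cross_nonneg {p q r z : ℂ} (hpqr : 0 < cross (q - p) (r - p))
    (hpq : 0 ≤ cross (q - p) (z - p)) (hqr : 0 ≤ cross (r - q) (z - q))
    (hrp : 0 ≤ cross (p - r) (z - r)) : z ∈ convexHull ℝ {p, q, r} := by
  set w : Fin 3 → ℝ := ![cross (r - q) (z - q), cross (p - r) (z - r), cross (q - p) (z - p)]
  have hw : ∀ i, 0 ≤ w i / cross (q - p) (r - p) := by
    intro i
    refine div_nonneg ?_ hpqr.le
    fin_cases i <;> assumption
  have hsum : ∑ i, w i / cross (q - p) (r - p) = 1 := by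
    rw [← Finset.sum_div, div_eq_one_iff_eq hpqr.ne']
    simp [w, Fin.sum_univ_three, cross]
    ring
  have hz : ∑ i, (w i / cross (q - p) (r - p)) • ![p, q, r] i = z := by
    have := hpqr.ne'
    apply Complex.ext <;>
      simp [w, Fin.sum_univ_three, -Complex.ofReal_div] <;>
      field_simp <;>
      simp only [cross, Complex.sub_re, Complex.sub_im] <;>
      ring
  rw [← hz]
  refine (convex_convexHull ℝ {p, q, r}).sum_mem (fun i _ ↦ hw i) hsum fun i _ ↦
    subset_convexHull ℝ _ ?_
  fin_cases i <;> simp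

lemma exists_eq_ofReal_mul_of_cross_eq_zero {u w : ℂ} (hu : u ≠ 0) (h : cross u w = 0) :
    ∃ r : ℝ, w = r * u := by
  rw [cross_eq_normSq_mul_im_div hu, mul_eq_zero_iff_left (Complex.normSq_pos.2 hu).ne'] at h
  have hre : ((w / u).re : ℂ) = w / u := Complex.ext rfl h.symm
  exact ⟨(w / u).re, by rw [hre, div_mul_cancel₀ w hu]⟩

lemma collinear_iff_cross_eq_zero {p q r : ℂ} :
    Collinear ℝ {p, q, r} ↔ cross (q - p) (r - p) = 0 := by
  rw [collinear_iff_of_mem (mem_insert p {q, r})]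
  constructor
  · rintro ⟨v, hv⟩
    obtain ⟨s, rfl⟩ := hv q (by simp)
    obtain ⟨t, rfl⟩ := hv r (by simp)
    simp [cross]
    ring
  · intro h
    by_cases hqp : q = p
    · refine ⟨r - p, ?_⟩
      rintro x (rfl | rfl | rfl)
      · exact ⟨0, by simp⟩
      · exact ⟨0, by simp [hqp]⟩
      · exact ⟨1, by simp⟩
    · obtain ⟨t, ht⟩ := exists_eq_ofReal_mul_of_cross_eq_zero (sub_ne_zero.2 hqp) h
      refine ⟨q - p, ?_⟩
      rintro x (rfl | rfl | rfl)
      · exact ⟨0, by simp⟩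
      · exact ⟨1, by simp⟩
      · exact ⟨t, by simp [← ht]⟩

lemma nonempty_interior_convexHull_of_cross_ne_zero {κ : Type*} {V : κ → ℂ} {i j k : κ}
    (h : cross (V j - V i) (V k - V i) ≠ 0) : (interior (convexHull ℝ (range V))).Nonempty := by
  have hindep : AffineIndependent ℝ ![V i, V j, V k] :=
    affineIndependent_iff_not_collinear_set.2 fun hcol ↦ h (collinear_iff_cross_eq_zero.1 hcol)
  have htop : affineSpan ℝ (range ![V i, V j, V k]) = ⊤ :=
    hindep.affineSpan_eq_top_iff_card_eq_finrank_add_one.2 (by simp [Complex.finrank_real_complex])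
  rw [interior_convexHull_nonempty_iff_affineSpan_eq_top, eq_top_iff, ← htop]
  refine affineSpan_mono ℝ (range_subset_iff.2 fun m ↦ ?_)
  fin_cases m <;> exact mem_range_self _

namespace IsPositivelyOriented

variable {V : Fin 5 → ℂ} {x z : ℂ} {k : Fin 5}

lemma injective (hV : IsPositivelyOriented V) : Function.Injective V := by
  intro i j hij
  by_contra hne
  have hside : ∀ i j : Fin 5, i ≠ j → ∃ k, (i = k ∨ i = k + 1) ∧ j ≠ k ∧ j ≠ k + 1 := by decide
  obtain ⟨k, hi, hj, hj'⟩ := hside i j hne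
  have hpos := hV k j hj hj'
  rw [← hij] at hpos
  rcases hi with rfl | rfl
  · exact hpos.ne' (edgeHeight_self V _)
  · exact hpos.ne' (edgeHeight_succ V _)

lemma side_ne_zero (hV : IsPositivelyOriented V) (k : Fin 5) : V (k + 1) - V k ≠ 0 :=
  sub_ne_zero.2 (hV.injective.ne (by decide +revert))

lemma edgeHeight_pred_succ_pos (hV : IsPositivelyOriented V) (k : Fin 5) :
    0 < edgeHeight V (k - 1) (V (k + 1)) :=
  hV _ _ (by decide +revert) (by decide +revert)

lemma edgeHeight_succ_self_pos (hV : IsPositivelyOriented V) (k : Fin 5) :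
    0 < edgeHeight V (k + 1) (V k) :=
  hV _ _ (by decide +revert) (by decide +revert)

lemma mem_convexHull_iff (hV : IsPositivelyOriented V) :
    z ∈ convexHull ℝ (range V) ↔ ∀ k, 0 ≤ edgeHeight V k z := by
  refine ⟨fun hz k ↦ ?_, fun hz ↦ ?_⟩
  · have hsub : range V ⊆ {z | 0 ≤ edgeHeight V k z} :=
      range_subset_iff.2 (hV.edgeHeight_nonneg k)
    exact convexHull_min hsub (convex_setOf_edgeHeight_nonneg V k) hz
  have hneg (v : ℂ) : cross (V 0 - v) (z - v) = -cross (v - V 0) (z - V 0) := by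
    simp only [cross, Complex.sub_re, Complex.sub_im]
    ring
  have hfan (j : Fin 5) (hj : 0 ≠ j) (hj' : 0 ≠ j + 1) (hleft : 0 ≤ cross (V j - V 0) (z - V 0))
      (hright : 0 ≤ cross (V 0 - V (j + 1)) (z - V (j + 1))) : z ∈ convexHull ℝ (range V) := by
    have harea : 0 < cross (V j - V 0) (V (j + 1) - V 0) := by
      convert hV j 0 hj hj' using 1
      simp only [edgeHeight, cross, Complex.sub_re, Complex.sub_im]
      ring
    refine convexHull_mono ?_ (mem_convexHull_triple_of_cross_nonneg harea hleft (hz j) hright)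
    simp [insert_subset_iff]
  rcases le_total 0 (cross (V 2 - V 0) (z - V 0)) with h2 | h2
  · rcases le_total 0 (cross (V 3 - V 0) (z - V 0)) with h3 | h3
    · exact hfan 3 (by decide) (by decide) h3 (hz 4)
    · exact hfan 2 (by decide) (by decide) h2 ((hneg _).symm ▸ neg_nonneg.2 h3)
  · exact hfan 1 (by decide) (by decide) (hz 0) ((hneg _).symm ▸ neg_nonneg.2 h2)

lemma eventually_mem_convexHull_iff (hV : IsPositivelyOriented V) {s : Set (Fin 5)}
    (hx : ∀ k ∉ s, 0 < edgeHeight V k x) :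
    ∀ᶠ z in 𝓝 x, z ∈ convexHull ℝ (range V) ↔ ∀ k ∈ s, 0 ≤ edgeHeight V k z := by
  have hpos : ∀ᶠ z in 𝓝 x, ∀ k ∉ s, 0 < edgeHeight V k z :=
    eventually_all.2 fun k ↦ eventually_imp_distrib_left.2 fun hk ↦
      (continuous_edgeHeight V k).continuousAt.eventually_const_lt (hx k hk)
  filter_upwards [hpos] with z hz
  rw [hV.mem_convexHull_iff]
  exact ⟨fun h k _ ↦ h k, fun h k ↦ (em (k ∈ s)).elim (h k) fun hk ↦ (hz k hk).le⟩

lemma notMem_interior_of_edgeHeight_eq_zero (hV : IsPositivelyOriented V)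
    (hz : edgeHeight V k z = 0) : z ∉ interior (convexHull ℝ (range V)) := by
  intro hint
  have hlim : Tendsto (fun t : ℝ ↦ z - t * (Complex.I * (V (k + 1) - V k))) (𝓝[>] 0) (𝓝 z) :=
    (Continuous.tendsto' (by fun_prop) 0 z (by simp)).mono_left nhdsWithin_le_nhds
  obtain ⟨t, hmem, ht⟩ :=
    ((hlim.eventually (mem_interior_iff_mem_nhds.1 hint)).and self_mem_nhdsWithin).exists
  have hnonneg := hV.mem_convexHull_iff.1 hmem k
  rw [edgeHeight_sub_ofReal_mul_normal, hz] at hnonneg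
  linarith [mul_pos ht (Complex.normSq_pos.2 (hV.side_ne_zero k))]

lemma mem_segment_of_edgeHeight_eq_zero (hV : IsPositivelyOriented V)
    (hz : z ∈ convexHull ℝ (range V)) (hk : edgeHeight V k z = 0) :
    z ∈ segment ℝ (V k) (V (k + 1)) := by
  obtain ⟨r, hr⟩ := exists_eq_ofReal_mul_of_cross_eq_zero (hV.side_ne_zero k) hk
  obtain rfl : z = (1 - r) • V k + r • V (k + 1) := by
    rw [eq_add_of_sub_eq hr, Complex.real_smul, Complex.real_smul]
    push_cast
    ring
  rw [hV.mem_convexHull_iff] at hz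
  have hr0 : 0 ≤ r := by
    have hzero := edgeHeight_succ V (k - 1)
    have := hz (k - 1)
    rw [sub_add_cancel] at hzero
    rw [edgeHeight_add_smul V _ (sub_add_cancel 1 r), hzero, mul_zero, zero_add] at this
    exact nonneg_of_mul_nonneg_left this (hV.edgeHeight_pred_succ_pos k)
  have hr1 : 0 ≤ 1 - r := by
    have := hz (k + 1)
    rw [edgeHeight_add_smul V _ (sub_add_cancel 1 r), edgeHeight_self, mul_zero, add_zero] at this
    exact nonneg_of_mul_nonneg_left this (hV.edgeHeight_succ_self_pos k)
  exact ⟨1 - r, r, hr1, hr0, sub_add_cancel 1 r, rfl⟩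

lemma mem_frontier_iff (hV : IsPositivelyOriented V) :
    z ∈ frontier (convexHull ℝ (range V)) ↔ ∃ k, z ∈ segment ℝ (V k) (V (k + 1)) := by
  rw [((finite_range V).isClosed_convexHull ℝ).frontier_eq, Set.mem_sdiff]
  constructor
  · rintro ⟨hz, hint⟩
    by_contra! hside
    refine hint (mem_interior_iff_mem_nhds.2 ?_)
    have hpos : ∀ k ∉ (∅ : Set (Fin 5)), 0 < edgeHeight V k z := fun k _ ↦
      (hV.mem_convexHull_iff.1 hz k).lt_of_ne' fun h ↦
        hside k (hV.mem_segment_of_edgeHeight_eq_zero hz h)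
    filter_upwards [hV.eventually_mem_convexHull_iff hpos] with y hy
    exact hy.2 (by simp)
  · rintro ⟨k, hk⟩
    exact ⟨segment_subset_convexHull (mem_range_self k) (mem_range_self (k + 1)) hk,
      hV.notMem_interior_of_edgeHeight_eq_zero (edgeHeight_eq_zero_of_mem_segment V k hk)⟩

lemma edgeHeight_pos_of_mem_segment (hV : IsPositivelyOriented V)
    (hx : x ∈ segment ℝ (V k) (V (k + 1))) (hxV : x ∉ range V) {j : Fin 5} (hjk : j ≠ k) :
    0 < edgeHeight V j x := by
  obtain ⟨s, t, hs, ht, hst, rfl⟩ := mem_openSegment_of_ne_left_right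
    (fun h ↦ hxV ⟨k, h⟩) (fun h ↦ hxV ⟨k + 1, h⟩) hx
  rw [edgeHeight_add_smul V j hst]
  have hside : ∀ j k : Fin 5, j ≠ k → k ≠ j ∧ k ≠ j + 1 ∨ k + 1 ≠ j ∧ k + 1 ≠ j + 1 := by decide
  rcases hside j k hjk with ⟨h, h'⟩ | ⟨h, h'⟩
  · exact add_pos_of_pos_of_nonneg (mul_pos hs (hV j _ h h'))
      (mul_nonneg ht.le (hV.edgeHeight_nonneg j _))
  · exact add_pos_of_nonneg_of_pos (mul_nonneg hs.le (hV.edgeHeight_nonneg j _))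
      (mul_pos ht (hV j _ h h'))

lemma hasAngleAt_side (hV : IsPositivelyOriented V) (hx : x ∈ frontier (convexHull ℝ (range V)))
    (hxV : x ∉ range V) : HasAngleAt (convexHull ℝ (range V)) x π := by
  obtain ⟨k, hk⟩ := hV.mem_frontier_iff.1 hx
  have hpos : ∀ j ∉ ({k} : Set (Fin 5)), 0 < edgeHeight V j x := fun j hj ↦
    hV.edgeHeight_pos_of_mem_segment hk hxV hj
  refine .of_halfPlane (hV.side_ne_zero k) ?_
  filter_upwards [hV.eventually_mem_convexHull_iff hpos] with z hz
  have hcross : cross (V (k + 1) - V k) (z - x) = edgeHeight V k z - edgeHeight V k x := by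
    simp only [edgeHeight, cross, Complex.sub_re, Complex.sub_im]
    ring
  rw [hz, hcross, edgeHeight_eq_zero_of_mem_segment V k hk, sub_zero]
  simp

end IsPositivelyOriented

end Pentagon

/-! ### Equilateral pentagons -/

section Equilateral

open Filter Topology

/-- The interior angle at the corner `V i` of the polygon with corners `V 0, V 1, …`. -/
def cornerAngle {n : ℕ} [NeZero n] (V : Fin n → ℂ) (i : Fin n) : ℝ :=
  EuclideanGeometry.angle (V (i - 1)) (V i) (V (i + 1))

lemma cornerAngle_eq_angle_sides {n : ℕ} [NeZero n] (V : Fin n → ℂ) (i : Fin n) :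
    cornerAngle V i = InnerProductGeometry.angle (V (i + 1) - V i) (V (i - 1) - V i) := by
  rw [cornerAngle, EuclideanGeometry.angle_comm]
  rfl

lemma pi_div_two_lt_add_div_two_of_sin_lt {x y : ℝ} (hx : x ∈ Ioo 0 π) (hy : y ∈ Ioo 0 π)
    (h : sin (x + y) < sin y) : π / 2 < y + x / 2 := by
  by_contra! hle
  have hsin : 0 < sin (x / 2) := 
    sin_pos_of_pos_of_lt_pi (by linarith [hx.1]) (by linarith [hx.2, pi_pos])
  have hcos : 0 ≤ cos (y + x / 2) :=
    cos_nonneg_of_neg_pi_div_two_le_of_le (by linarith [hx.1, hy.1, pi_pos]) hle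
  have hdiff : sin (x + y) - sin y = 2 * sin (x / 2) * cos (y + x / 2) := by
    rw [sin_sub_sin]
    ring_nf
  linarith [mul_nonneg hsin.le hcos]

lemma cross_neg_exp_neg_exp_sub_one (x y : ℝ) :
    cross (-Complex.exp ((-y : ℝ) * Complex.I)) (Complex.exp (x * Complex.I) - 1) =
      sin y - sin (x + y) := by
  simp only [cross, Complex.neg_re, Complex.neg_im, Complex.sub_re, Complex.sub_im,
    Complex.exp_ofReal_mul_I_re, Complex.exp_ofReal_mul_I_im, Complex.one_re, Complex.one_im,
    cos_neg, sin_neg, sin_add]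
  ring

lemma exp_mul_exp_neg (x y : ℝ) :
    Complex.exp (x * Complex.I) * Complex.exp ((-y : ℝ) * Complex.I) =
      Complex.exp ((x - y : ℝ) * Complex.I) := by
  rw [← Complex.exp_add, ← add_mul, ← Complex.ofReal_add, sub_eq_add_neg]

lemma cycleGraph_adj_iff {i j : Fin 5} :
    (SimpleGraph.cycleGraph 5).Adj i j ↔ i = j + 1 ∨ j = i + 1 := by
  decide +revert

namespace IsPositivelyOriented

variable {V : Fin 5 → ℂ}

lemma cross_sides_pos (hV : IsPositivelyOriented V) (i : Fin 5) :
    0 < cross (V (i + 1) - V i) (V (i - 1) - V i) :=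
  hV i (i - 1) (by decide +revert) (by decide +revert)

lemma cornerAngle_mem (hV : IsPositivelyOriented V) (i : Fin 5) : cornerAngle V i ∈ Ioo 0 π := by
  rw [cornerAngle_eq_angle_sides]
  exact angle_mem_Ioo_of_cross_pos (hV.cross_sides_pos i)

lemma edgeHeight_corner_pos (hV : IsPositivelyOriented V) {i k : Fin 5}
    (hk : k ∉ ({i - 1, i} : Set (Fin 5))) : 0 < edgeHeight V k (V i) := by
  simp only [mem_insert_iff, mem_singleton_iff, not_or] at hk
  exact hV k i (Ne.symm hk.2) fun h ↦ hk.1 (eq_sub_of_add_eq h.symm)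

lemma hasAngleAt_corner (hV : IsPositivelyOriented V) (i : Fin 5) :
    HasAngleAt (convexHull ℝ (range V)) (V i) (cornerAngle V i) := by
  rw [cornerAngle_eq_angle_sides]
  refine .of_cone (hV.cross_sides_pos i) ?_
  filter_upwards [hV.eventually_mem_convexHull_iff fun _ ↦ hV.edgeHeight_corner_pos] with z hz
  have hpred : edgeHeight V (i - 1) z = cross (z - V i) (V (i - 1) - V i) := by
    simp only [edgeHeight, sub_add_cancel, cross, Complex.sub_re, Complex.sub_im]
    ring
  rw [hz, ← hpred, and_comm]
  simp [edgeHeight]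

lemma eventually_mem_segment (hV : IsPositivelyOriented V) (i : Fin 5) :
    ∀ᶠ z in 𝓝 (V i), z ∈ frontier (convexHull ℝ (range V)) →
      ∃ j, (SimpleGraph.cycleGraph 5).Adj i j ∧ z ∈ segment ℝ (V i) (V j) := by
  have hpos : ∀ᶠ z in 𝓝 (V i), ∀ k ∉ ({i - 1, i} : Set (Fin 5)), 0 < edgeHeight V k z :=
    eventually_all.2 fun k ↦ eventually_imp_distrib_left.2 fun hk ↦
      (continuous_edgeHeight V k).continuousAt.eventually_const_lt (hV.edgeHeight_corner_pos hk)
  filter_upwards [hpos] with z hz hfr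
  obtain ⟨k, hk⟩ := hV.mem_frontier_iff.1 hfr
  have hki : k ∈ ({i - 1, i} : Set (Fin 5)) := by
    by_contra hki
    exact (hz k hki).ne' (edgeHeight_eq_zero_of_mem_segment V k hk)
  rcases hki with rfl | rfl
  · rw [sub_add_cancel, segment_symm] at hk
    exact ⟨i - 1, cycleGraph_adj_iff.2 (.inl (sub_add_cancel i 1).symm), hk⟩
  · exact ⟨k + 1, cycleGraph_adj_iff.2 (.inr rfl), hk⟩

variable (hV : IsPositivelyOriented V)
  (hside : ∀ i j, dist (V i) (V (i + 1)) = dist (V j) (V (j + 1)))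
include hV hside

lemma pred_sub_eq_mul_exp (i : Fin 5) :
    V (i - 1) - V i = (V (i + 1) - V i) * Complex.exp (cornerAngle V i * Complex.I) := by
  have hnorm : ‖V (i - 1) - V i‖ = ‖V (i + 1) - V i‖ := by
    have := hside (i - 1) i
    rwa [sub_add_cancel, dist_eq_norm, dist_comm, dist_eq_norm] at this
  have hpolar := norm_mul_exp_angle_of_cross_pos (hV.cross_sides_pos i)
  rw [hnorm, ← cornerAngle_eq_angle_sides] at hpolar
  exact mul_left_cancel₀ (by exact_mod_cast norm_ne_zero_iff.2 (hV.side_ne_zero i)) hpolar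

lemma side_succ_eq (i : Fin 5) : V (i + 1 + 1) - V (i + 1) =
    -((V (i + 1) - V i) * Complex.exp ((-cornerAngle V (i + 1) : ℝ) * Complex.I)) := by
  have h := hV.pred_sub_eq_mul_exp hside (i + 1)
  rw [add_sub_cancel_right] at h
  rw [← neg_sub (V i), h, neg_mul, neg_neg, mul_assoc, exp_mul_exp_neg, sub_self,
    Complex.ofReal_zero, zero_mul, Complex.exp_zero, mul_one]

lemma pi_div_two_lt_cornerAngle_add (i : Fin 5) :
    π / 2 < cornerAngle V (i + 1) + cornerAngle V i / 2 := by
  refine pi_div_two_lt_add_div_two_of_sin_lt (hV.cornerAngle_mem i) (hV.cornerAngle_mem _) ?_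
  have hpos := hV (i + 1) (i - 1) (by decide +revert) (by decide +revert)
  have hdiag : V (i - 1) - V (i + 1) =
      (V (i + 1) - V i) * (Complex.exp (cornerAngle V i * Complex.I) - 1) := by
    rw [mul_sub, ← hV.pred_sub_eq_mul_exp hside]
    ring
  rw [edgeHeight, hV.side_succ_eq hside, hdiag, ← mul_neg, cross_mul_mul,
    cross_neg_exp_neg_exp_sub_one] at hpos
  linarith [pos_of_mul_pos_right hpos (Complex.normSq_nonneg _)]

lemma side_succ_eq_mul_exp {i : Fin 5} {c : ℂ} {θ : ℝ}
    (h : V (i + 1) - V i = c * Complex.exp (θ * Complex.I)) :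
    V (i + 1 + 1) - V (i + 1) =
      -c * Complex.exp ((θ - cornerAngle V (i + 1) : ℝ) * Complex.I) := by
  rw [hV.side_succ_eq hside, h, mul_assoc, exp_mul_exp_neg, neg_mul]

lemma exists_sides_eq_mul_exp (φ : ℝ) : ∃ c : ℂ, c ≠ 0 ∧
    V 1 - V 0 = c * Complex.exp (φ * Complex.I) ∧
    V 2 - V 1 = -c * Complex.exp ((φ - cornerAngle V 1 : ℝ) * Complex.I) ∧
    V 3 - V 2 = c * Complex.exp ((φ - cornerAngle V 1 - cornerAngle V 2 : ℝ) * Complex.I) ∧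
    V 4 - V 3 = -c * Complex.exp
      ((φ - cornerAngle V 1 - cornerAngle V 2 - cornerAngle V 3 : ℝ) * Complex.I) ∧
    V 0 - V 4 = c * Complex.exp
      ((φ - cornerAngle V 1 - cornerAngle V 2 - cornerAngle V 3 - cornerAngle V 4 : ℝ) *
        Complex.I) := by
  have hφ : Complex.exp (φ * Complex.I) ≠ 0 := Complex.exp_ne_zero _
  set c : ℂ := (V 1 - V 0) / Complex.exp (φ * Complex.I)
  have h0 : V (0 + 1) - V 0 = c * Complex.exp (φ * Complex.I) := (div_mul_cancel₀ _ hφ).symm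
  have h1 := hV.side_succ_eq_mul_exp hside h0
  have h2 := hV.side_succ_eq_mul_exp hside h1
  rw [neg_neg] at h2
  have h3 := hV.side_succ_eq_mul_exp hside h2
  have h4 := hV.side_succ_eq_mul_exp hside h3
  rw [neg_neg] at h4
  exact ⟨c, div_ne_zero (hV.side_ne_zero 0) hφ, h0, h1, h2, h3, h4⟩

lemma sum_cornerAngle : ∑ i, cornerAngle V i = 3 * π := by
  obtain ⟨c, hc, h0, -, -, -, h4⟩ := hV.exists_sides_eq_mul_exp hside 0
  have hturn := hV.side_succ_eq_mul_exp hside (i := 4) h4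
  have hexp : Complex.exp ((0 - cornerAngle V 1 - cornerAngle V 2 - cornerAngle V 3 -
      cornerAngle V 4 - cornerAngle V 0 : ℝ) * Complex.I) = -1 := by
    refine mul_left_cancel₀ (neg_ne_zero.2 hc) (hturn.symm.trans ?_)
    simpa using h0
  have hcos : cos (∑ i, cornerAngle V i - 3 * π) = 1 := by
    have hre := congrArg Complex.re hexp
    rw [Complex.exp_ofReal_mul_I_re, Complex.neg_re, Complex.one_re] at hre
    have hturn_sum : ∑ i, cornerAngle V i - 3 * π = -((0 - cornerAngle V 1 - cornerAngle V 2 -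
        cornerAngle V 3 - cornerAngle V 4 - cornerAngle V 0) + π + 2 * π) := by
      rw [Fin.sum_univ_five]
      ring
    rw [hturn_sum, cos_neg, cos_add_two_pi, cos_add_pi, hre, neg_neg]
  have hmem := hV.cornerAngle_mem
  have hgt (i j : Fin 5) (hij : i + 1 = j) : π / 2 < cornerAngle V j + cornerAngle V i / 2 :=
    hij ▸ hV.pi_div_two_lt_cornerAngle_add hside i
  have hlt : ∑ i, cornerAngle V i < 5 * π := by
    rw [Fin.sum_univ_five]
    linarith [(hmem 0).2, (hmem 1).2, (hmem 2).2, (hmem 3).2, (hmem 4).2]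
  have hpi : π < ∑ i, cornerAngle V i := by
    rw [Fin.sum_univ_five]
    linarith [hgt 0 1 rfl, hgt 1 2 rfl, hgt 2 3 rfl, hgt 3 4 rfl, hgt 4 0 rfl, pi_pos]
  exact sub_eq_zero.1
    ((cos_eq_one_iff_of_lt_of_lt (by linarith) (by linarith)).1 hcos)

theorem equilateralAngles_cornerAngle : EquilateralAngles (cornerAngle V 0) (cornerAngle V 1)
    (cornerAngle V 2) (cornerAngle V 3) (cornerAngle V 4) where
  A_mem := hV.cornerAngle_mem 0
  B_mem := hV.cornerAngle_mem 1
  C_mem := hV.cornerAngle_mem 2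
  D_mem := hV.cornerAngle_mem 3
  E_mem := hV.cornerAngle_mem 4
  sum_eq := by rw [← hV.sum_cornerAngle hside, Fin.sum_univ_five]
  cos_closing φ := by
    obtain ⟨c, hc, h0, h1, h2, h3, h4⟩ := hV.exists_sides_eq_mul_exp hside φ
    have hsum : c * (Complex.exp (φ * Complex.I)
        - Complex.exp ((φ - cornerAngle V 1 : ℝ) * Complex.I)
        + Complex.exp ((φ - cornerAngle V 1 - cornerAngle V 2 : ℝ) * Complex.I)
        - Complex.exp ((φ - cornerAngle V 1 - cornerAngle V 2 - cornerAngle V 3 : ℝ) * Complex.I)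
        + Complex.exp ((φ - cornerAngle V 1 - cornerAngle V 2 - cornerAngle V 3 -
          cornerAngle V 4 : ℝ) * Complex.I)) = 0 := by
      linear_combination -h0 - h1 - h2 - h3 - h4
    have hre := congrArg Complex.re ((mul_eq_zero_iff_left hc).1 hsum)
    simpa only [Complex.add_re, Complex.sub_re, Complex.exp_ofReal_mul_I_re, Complex.zero_re]
      using hre

theorem isEquilateralTile : IsEquilateralTile (SimpleGraph.cycleGraph 5) V (cornerAngle V)
    (convexHull ℝ (range V)) where
  convex := convex_convexHull ℝ _
  isCompact := (finite_range V).isCompact_convexHull ℝ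
  nonempty_interior := nonempty_interior_convexHull_of_cross_ne_zero (hV.cross_sides_pos 0).ne'
  injective := hV.injective
  corner_mem i := subset_convexHull ℝ _ (mem_range_self i)
  angle_mem := hV.cornerAngle_mem
  sum_angle := by
    rw [hV.sum_cornerAngle hside, Fintype.card_fin]
    norm_num
  hasAngleAt_corner := hV.hasAngleAt_corner
  hasAngleAt_side := hV.hasAngleAt_side
  segment_subset_frontier {i j} hij := by
    intro z hz
    rw [hV.mem_frontier_iff]
    rcases cycleGraph_adj_iff.1 hij with rfl | rfl
    · exact ⟨j, segment_symm ℝ (V (j + 1)) (V j) ▸ hz⟩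
    · exact ⟨i, hz⟩
  eventually_mem_segment := hV.eventually_mem_segment
  dist_eq {i j k l} hij hkl := by
    rcases cycleGraph_adj_iff.1 hij with rfl | rfl <;>
      rcases cycleGraph_adj_iff.1 hkl with rfl | rfl
    · rw [dist_comm, hside j l, dist_comm]
    · rw [dist_comm, hside j k]
    · rw [dist_comm (V (l + 1)), hside i l]
    · exact hside i k

end IsPositivelyOriented

end Equilateral

/-! ### Orientation of a convex pentagon -/

section Orientation

lemma not_collinear_of_convexIndependent {κ E : Type*} [AddCommGroup E] [Module ℝ E] {p : κ → E}
    (hp : ConvexIndependent ℝ p) {i j k : κ} (hij : i ≠ j) (hik : i ≠ k) (hjk : j ≠ k) :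
    ¬ Collinear ℝ {p i, p j, p k} := by
  have hbtw {i j k : κ} (hij : i ≠ j) (hjk : j ≠ k) : ¬ Wbtw ℝ (p i) (p j) (p k) := by
    intro h
    rw [Wbtw, affineSegment_eq_segment, ← convexHull_pair, ← image_pair] at h
    rcases hp {i, k} j h with rfl | rfl
    exacts [hij rfl, hjk rfl]
  intro h
  rcases h.wbtw_or_wbtw_or_wbtw with h | h | h
  exacts [hbtw hij hjk h, hbtw hjk hik.symm h, hbtw hik.symm hij h]

lemma exists_strongDual_of_segment_subset_frontier {E : Type*} [NormedAddCommGroup E]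
    [NormedSpace ℝ E] {K : Set E} (hK : Convex ℝ K) (hint : (interior K).Nonempty) {x y : E}
    (hx : x ∈ K) (hy : y ∈ K) (hxy : segment ℝ x y ⊆ frontier K) :
    ∃ f : StrongDual ℝ E, f ≠ 0 ∧ f x = f y ∧ ∀ z ∈ K, f z ≤ f x := by
  have hmid := (hxy (midpoint_mem_segment x y)).2
  obtain ⟨f, hf, hle⟩ := geometric_hahn_banach_of_nonempty_interior_point hK hmid hint
  have hfmid : f (midpoint ℝ x y) = (f x + f y) / 2 := by
    rw [midpoint_eq_smul_add, map_smul, map_add, smul_eq_mul, invOf_eq_inv]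
    ring
  have hfx := hle x hx
  have hfy := hle y hy
  refine ⟨f, hf, by linarith, fun z hz ↦ (hle z hz).trans (by linarith)⟩

lemma exists_eq_mul_cross {f : ℂ →ₗ[ℝ] ℝ} {e : ℂ} (he : e ≠ 0) (hfe : f e = 0) :
    ∃ σ : ℝ, ∀ z, f z = σ * cross e z := by
  refine ⟨f (Complex.I * e) / Complex.normSq e, fun z ↦ ?_⟩
  have hN : Complex.normSq e ≠ 0 := Complex.normSq_pos.2 he |>.ne'
  have hcross : cross e (z - (cross e z / Complex.normSq e) • (Complex.I * e)) = 0 := by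
    have hsub (r : ℝ) : cross e (z - r • (Complex.I * e)) = cross e z - r * Complex.normSq e := by
      simp [cross, Complex.normSq_apply]
      ring
    rw [hsub, div_mul_cancel₀ _ hN, sub_self]
  obtain ⟨r, hr⟩ := exists_eq_ofReal_mul_of_cross_eq_zero he hcross
  have hf : f z - cross e z / Complex.normSq e * f (Complex.I * e) = 0 := by
    rw [← smul_eq_mul, ← map_smul, ← map_sub, hr, ← Complex.real_smul, map_smul, hfe, smul_zero]
  rw [sub_eq_zero.1 hf]
  ring

variable {V : Fin 5 → ℂ}

lemma exists_mul_edgeHeight_pos (hV : ConvexIndependent ℝ V) {i : Fin 5}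
    (hside : segment ℝ (V i) (V (i + 1)) ⊆ frontier (convexHull ℝ (range V))) :
    ∃ σ : ℝ, ∀ j, j ≠ i → j ≠ i + 1 → 0 < σ * edgeHeight V i (V j) := by
  have hcross {i j k : Fin 5} (hij : i ≠ j) (hik : i ≠ k) (hjk : j ≠ k) :
      cross (V j - V i) (V k - V i) ≠ 0 := fun h ↦
    not_collinear_of_convexIndependent hV hij hik hjk (collinear_iff_cross_eq_zero.2 h)
  have hmem (j : Fin 5) : V j ∈ convexHull ℝ (range V) :=
    subset_convexHull ℝ _ (mem_range_self j)
  obtain ⟨f, hf, hfside, hle⟩ := exists_strongDual_of_segment_subset_frontier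
    (convex_convexHull ℝ _) (nonempty_interior_convexHull_of_cross_ne_zero
      (hcross (i := 0) (j := 1) (k := 2) (by decide) (by decide) (by decide)))
    (hmem i) (hmem (i + 1)) hside
  have hne : V (i + 1) - V i ≠ 0 := sub_ne_zero.2 (hV.injective.ne (by simp))
  obtain ⟨σ, hσ⟩ := exists_eq_mul_cross (f := f) hne (by simp [hfside])
  have hσ0 : σ ≠ 0 := by
    rintro rfl
    exact hf (ContinuousLinearMap.ext fun z ↦ by simpa using hσ z)
  refine ⟨-σ, fun j hji hji' ↦ lt_of_le_of_ne ?_ (Ne.symm (mul_ne_zero (neg_ne_zero.2 hσ0) ?_))⟩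
  · have hval : f (V j) - f (V i) = σ * edgeHeight V i (V j) := by
      simpa [edgeHeight] using hσ (V j - V i)
    linarith [hle _ (hmem j)]
  · exact hcross (by simp) hji.symm hji'.symm

lemma edgeHeight_succ_eq (i : Fin 5) :
    edgeHeight V (i + 1) (V i) = edgeHeight V i (V (i + 1 + 1)) := by
  simp only [edgeHeight, cross, Complex.sub_re, Complex.sub_im]
  ring

lemma forall_pos_or_forall_neg_of_mul_succ_pos {n : ℕ} {σ : Fin (n + 1) → ℝ}
    (h : ∀ i, 0 < σ i * σ (i + 1)) : (∀ i, 0 < σ i) ∨ ∀ i, σ i < 0 := by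
  have hstep (i : Fin n) : 0 < σ i.castSucc * σ i.succ := by
    simpa only [Fin.coeSucc_eq_succ] using h i.castSucc
  rcases lt_or_gt_of_ne (left_ne_zero_of_mul (h 0).ne') with h0 | h0
  · exact .inr fun i ↦ i.induction h0 fun i hi ↦ neg_of_mul_pos_right (hstep i) hi.le
  · exact .inl fun i ↦ i.induction h0 fun i hi ↦ pos_of_mul_pos_right (hstep i) hi.le

theorem isPositivelyOriented_or_conj (hV : ConvexIndependent ℝ V)
    (hside : ∀ i, segment ℝ (V i) (V (i + 1)) ⊆ frontier (convexHull ℝ (range V))) :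
    IsPositivelyOriented V ∨ IsPositivelyOriented (Complex.conjLIE ∘ V) := by
  choose σ hσ using fun i ↦ exists_mul_edgeHeight_pos hV (hside i)
  have hmul (i : Fin 5) : 0 < σ i * σ (i + 1) := by
    have h := hσ i (i + 1 + 1) (by simp [add_assoc]) (by simp)
    have h' := hσ (i + 1) i (by simp) (by simp [add_assoc])
    rw [edgeHeight_succ_eq] at h'
    refine pos_of_mul_pos_left ?_ (sq_nonneg (edgeHeight V i (V (i + 1 + 1))))
    linarith [mul_pos h h']
  have hconj (k j : Fin 5) : edgeHeight (Complex.conjLIE ∘ V) k (Complex.conjLIE (V j)) =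
      -edgeHeight V k (V j) := by
    simp [edgeHeight, cross]
    ring
  refine (forall_pos_or_forall_neg_of_mul_succ_pos hmul).imp (fun hpos k j hjk hjk' ↦ ?_)
    fun hneg k j hjk hjk' ↦ ?_
  · exact pos_of_mul_pos_right (hσ k j hjk hjk') (hpos k).le
  · rw [Function.comp_apply, hconj, neg_pos]
    exact neg_of_mul_pos_right (hσ k j hjk hjk') (hneg k).le

end Orientation

/-! ### Relabeling the corners -/

section Relabel

lemma relabel_injective (k : Fin 5) (r : Bool) : Function.Injective (relabel k r) := by
  unfold Function.Injective
  decide +revert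

lemma cycleGraph_adj_relabel_iff (k : Fin 5) (r : Bool) (i j : Fin 5) :
    (SimpleGraph.cycleGraph 5).Adj (relabel k r i) (relabel k r j) ↔
      (SimpleGraph.cycleGraph 5).Adj i j := by
  simp only [cycleGraph_adj_iff]
  decide +revert

/-- Relabeling as an automorphism of the pentagon graph. -/
def relabelIso (k : Fin 5) (r : Bool) : SimpleGraph.cycleGraph 5 ≃g SimpleGraph.cycleGraph 5 where
  toEquiv := .ofBijective _ (Finite.injective_iff_bijective.1 (relabel_injective k r))
  map_rel_iff' := cycleGraph_adj_relabel_iff k r _ _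

variable {κ κ' : Type*} [Fintype κ] [Fintype κ'] {V : κ → ℂ} {a : κ → ℝ} {K : Set ℂ}

lemma IsConvexTile.comp (hK : IsConvexTile V a K) (e : κ' ≃ κ) :
    IsConvexTile (V ∘ e) (a ∘ e) K where
  toIsConvexBody := hK.toIsConvexBody
  injective := hK.injective.comp e.injective
  corner_mem i := hK.corner_mem (e i)
  angle_mem i := hK.angle_mem (e i)
  sum_angle := by
    rw [Fintype.card_congr e, ← hK.sum_angle]
    exact e.sum_comp a
  hasAngleAt_corner i := hK.hasAngleAt_corner (e i)
  hasAngleAt_side hx hxV := hK.hasAngleAt_side hx (by rwa [e.surjective.range_comp] at hxV)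

lemma IsEquilateralTile.comp {G : SimpleGraph κ} {G' : SimpleGraph κ'}
    (hK : IsEquilateralTile G V a K) (e : G' ≃g G) : IsEquilateralTile G' (V ∘ e) (a ∘ e) K where
  toIsConvexTile := hK.toIsConvexTile.comp e.toEquiv
  segment_subset_frontier hij := hK.segment_subset_frontier (e.map_adj_iff.2 hij)
  eventually_mem_segment i := by
    filter_upwards [hK.eventually_mem_segment (e i)] with z hz hfr
    obtain ⟨j, hij, hj⟩ := hz hfr
    refine ⟨e.symm j, ?_, ?_⟩
    · rwa [← e.map_adj_iff, e.apply_symm_apply]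
    · rwa [Function.comp_apply, Function.comp_apply, e.apply_symm_apply]
  dist_eq hij hkl := hK.dist_eq (e.map_adj_iff.2 hij) (e.map_adj_iff.2 hkl)

end Relabel

section TypeCondition

variable {a : Fin 5 → ℝ}

lemma EquilateralAngles.comp_relabel (h : EquilateralAngles (a 0) (a 1) (a 2) (a 3) (a 4))
    (k : Fin 5) (r : Bool) : EquilateralAngles (a (relabel k r 0)) (a (relabel k r 1))
      (a (relabel k r 2)) (a (relabel k r 3)) (a (relabel k r 4)) := by
  cases r <;> fin_cases k
  · exact h
  · exact h.rotate
  · exact h.rotate.rotate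
  · exact h.rotate.rotate.rotate
  · exact h.rotate.rotate.rotate.rotate
  · exact h.reverse
  · exact h.rotate.reverse
  · exact h.rotate.rotate.reverse
  · exact h.rotate.rotate.rotate.reverse
  · exact h.rotate.rotate.rotate.rotate.reverse

lemma relabel_zero (k : Fin 5) (r : Bool) : relabel k r 0 = k := by
  decide +revert

lemma relabel_true_eq (k : Fin 5) :
    relabel k true 2 = relabel k false 3 ∧ relabel k true 3 = relabel k false 2 := by
  decide +revert

lemma EquilateralAngles.exists_sortedAngles (h : EquilateralAngles (a 0) (a 1) (a 2) (a 3) (a 4)) :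
    ∃ k r, SortedAngles (a ∘ relabel k r) := by
  obtain ⟨k, hk⟩ := Finite.exists_max a
  have hC_le_A (r : Bool) : a (relabel k r 2) ≤ a (relabel k r 0) := by
    rw [relabel_zero]
    exact hk _
  rcases le_total (a (relabel k false 3)) (a (relabel k false 2)) with hD | hD
  · exact ⟨k, false, ⟨h.comp_relabel k false, hC_le_A false, hD⟩⟩
  · refine ⟨k, true, ⟨h.comp_relabel k true, hC_le_A true, ?_⟩⟩
    rwa [Function.comp_apply, Function.comp_apply, (relabel_true_eq k).1,
      (relabel_true_eq k).2]

/-- The angles `a 0, …, a 4` satisfy the angle condition of Type 1, 2, or 7 in the classification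
of convex pentagonal tiles. -/
def SatisfiesTypeCondition (a : Fin 5 → ℝ) : Prop :=
  a 0 + a 1 + a 2 = 2 * π ∨ a 0 + a 1 + a 3 = 2 * π ∨
    (2 * a 1 + a 0 = 2 * π ∧ 2 * a 4 + a 2 = 2 * π)

lemma exists_satisfiesTypeCondition_of_add_eq_pi (hsum : ∑ i, a i = 3 * π) {i j : Fin 5}
    (hij : i ≠ j) (h : a i + a j = π) : ∃ k r, SatisfiesTypeCondition (a ∘ relabel k r) := by
  have hperm : ∀ i j : Fin 5, i ≠ j → ∃ k,
      Function.Injective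
        ![relabel k false 0, relabel k false 1, relabel k false 2, i, j] ∨
      Function.Injective
        ![relabel k false 0, relabel k false 1, relabel k false 3, i, j] := by
    unfold Function.Injective
    decide
  obtain ⟨k, hk | hk⟩ := hperm i j hij
  · have hk_sum := sum_add_sum_eq_of_injective (a := a) hk
    simp only [Matrix.cons_val] at hk_sum
    exact ⟨k, false, .inl (by simp only [Function.comp_apply]; linarith)⟩
  · have hk_sum := sum_add_sum_eq_of_injective (a := a) hk
    simp only [Matrix.cons_val] at hk_sum
    exact ⟨k, false, .inr (.inl (by simp only [Function.comp_apply]; linarith))⟩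

lemma exists_relabel_eq_relabel_one_sub (k : Fin 5) (r : Bool) :
    ∃ k' r', ∀ i, relabel k' r' i = relabel k r (1 - i) := by
  decide +revert

theorem exists_satisfiesTypeCondition_of_isTilingBy {V : Fin 5 → ℂ} {K : Set ℂ} {ι : Type*}
    {g : ι → ℂ ≃ᵢ ℂ} (ha : EquilateralAngles (a 0) (a 1) (a 2) (a 3) (a 4))
    (hK : IsEquilateralTile (SimpleGraph.cycleGraph 5) V a K) (hT : IsTilingBy K g) :
    ∃ k r, SatisfiesTypeCondition (a ∘ relabel k r) := by
  by_cases hπ : ∀ i j, i ≠ j → a i + a j ≠ π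
  · obtain ⟨k, r, hsorted⟩ := ha.exists_sortedAngles
    have hK' := hK.comp (relabelIso k r)
    have hπ' (i j : Fin 5) (hij : i ≠ j) : (a ∘ relabel k r) i + (a ∘ relabel k r) j ≠ π :=
      hπ _ _ ((relabel_injective k r).ne hij)
    obtain ⟨hA, hC⟩ := hsorted.two_mul_A_add_B_and_two_mul_C_add_E
      (hK'.toIsConvexTile.isNodeBalanced hT hπ') hπ' (not_onlyAABAndCCD hK' hT hπ')
    obtain ⟨k', r', hrel⟩ := exists_relabel_eq_relabel_one_sub k r
    refine ⟨k', r', .inr (.inr ?_)⟩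
    simp only [Function.comp_apply, hrel]
    exact ⟨hA, hC⟩
  · push Not at hπ
    obtain ⟨i, j, hij, h⟩ := hπ
    refine exists_satisfiesTypeCondition_of_add_eq_pi ?_ hij h
    rw [Fin.sum_univ_five, ha.sum_eq]

end TypeCondition

/-! ### From the Euclidean plane to `ℂ` -/

section Transfer

lemma IsTilingBy.map {E F ι : Type*} [PseudoEMetricSpace E] [PseudoEMetricSpace F] {K : Set E}
    {g : ι → E ≃ᵢ E} (hT : IsTilingBy K g) (Φ : E ≃ᵢ F) :
    IsTilingBy (Φ '' K) fun t ↦ Φ.symm.trans ((g t).trans Φ) := by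
  have himage (t : ι) : Φ.symm.trans ((g t).trans Φ) '' (Φ '' K) = Φ '' (g t '' K) := by
    simp [image_image]
  constructor
  · intro x
    obtain ⟨t, ht⟩ := hT.exists_mem (Φ.symm x)
    exact ⟨t, himage t ▸ ⟨_, ht, Φ.apply_symm_apply x⟩⟩
  · intro s t hst
    have hint (S : Set E) : interior (Φ '' S) = Φ '' interior S :=
      (Φ.toHomeomorph.image_interior S).symm
    rw [himage, himage, hint, hint]
    exact (disjoint_image_iff Φ.injective).2 (hT.disjoint_interior hst)

lemma exists_isTilingBy {K : Set Plane} {T : Set (Set Plane)} (hT : IsMonohedralTiling K T) :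
    ∃ g : T → Plane ≃ᵢ Plane, IsTilingBy K g := by
  obtain ⟨hcopy, hcover, hdisj⟩ := hT
  choose g hg using fun t : T ↦ hcopy t t.2
  refine ⟨g, fun x ↦ ?_, fun {s t} hst ↦ ?_⟩
  · obtain ⟨t, ht, hx⟩ := mem_sUnion.1 (hcover ▸ mem_univ x)
    exact ⟨⟨t, ht⟩, hg ⟨t, ht⟩ ▸ hx⟩
  · rw [← hg, ← hg, disjoint_iff_inter_eq_empty]
    exact hdisj s.2 t.2 (Subtype.coe_ne_coe.2 hst)

lemma image_convexHull_range {κ : Type*} (Φ : Plane ≃ₗᵢ[ℝ] ℂ) (V : κ → Plane) :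
    Φ '' convexHull ℝ (range V) = convexHull ℝ (range (Φ ∘ V)) := by
  rw [range_comp]
  exact (Φ.toLinearEquiv : Plane →ₗ[ℝ] ℂ).image_convexHull (range V)

lemma cornerAngle_comp (Φ : Plane ≃ₗᵢ[ℝ] ℂ) (P : ConvexPentagon) :
    cornerAngle (Φ ∘ P.V) = P.angle :=
  funext fun _ ↦ Φ.toLinearIsometry.toAffineIsometry.angle_map _ _ _

lemma convexIndependent_vertices (P : ConvexPentagon) : ConvexIndependent ℝ P.V := by
  refine convexIndependent_iff_notMem_convexHull_sdiff.2 fun i s hi ↦ P.strictlyConvex i ?_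
  exact convexHull_mono (image_mono fun j hj ↦ hj.2) hi

lemma convexIndependent_comp {κ E F : Type*} [AddCommGroup E] [Module ℝ E] [AddCommGroup F]
    [Module ℝ F] {p : κ → E} (hp : ConvexIndependent ℝ p) {f : E →ₗ[ℝ] F}
    (hf : Function.Injective f) : ConvexIndependent ℝ (f ∘ p) := by
  intro s i hi
  rw [image_comp, ← f.image_convexHull] at hi
  exact hp s i ((hf.mem_set_image).1 hi)

theorem exists_isPositivelyOriented (P : ConvexPentagon) :
    ∃ Φ : Plane ≃ₗᵢ[ℝ] ℂ, IsPositivelyOriented (Φ ∘ P.V) := by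
  let Φ : Plane ≃ₗᵢ[ℝ] ℂ := Complex.orthonormalBasisOneI.repr.symm
  have hside (i : Fin 5) : segment ℝ (Φ (P.V i)) (Φ (P.V (i + 1))) ⊆
      frontier (convexHull ℝ (range (Φ ∘ P.V))) := by
    have hfrontier := Φ.toHomeomorph.image_frontier (convexHull ℝ (range P.V))
    have hsegment := image_segment_isometryEquiv Φ.toIsometryEquiv (P.V i) (P.V (i + 1))
    rw [← image_convexHull_range]
    exact hsegment.symm.subset.trans ((image_mono (P.cyclic i)).trans hfrontier.subset)
  have hindep := convexIndependent_comp (convexIndependent_vertices P)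
    (f := (Φ.toLinearEquiv : Plane →ₗ[ℝ] ℂ)) Φ.injective
  rcases isPositivelyOriented_or_conj hindep hside with h | h
  · exact ⟨Φ, h⟩
  · exact ⟨Φ.trans Complex.conjLIE, h⟩

end Transfer

end EquilateralTiling

/-- an equilateral convex pentagon admitting a monohedral tiling
satisfies, for some cyclic relabeling (possibly orientation-reversed) of its
angles, the Type 1, Type 2, or Type 7 angle conditions. -/
theorem statement_1 (P : ConvexPentagon) (hequi : ∀ i j : Fin 5, P.side i = P.side j)
    (T : Set (Set Plane)) (hT : IsMonohedralTiling P.carrier T) :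
    ∃ (k : Fin 5) (r : Bool),
      (P.angle (relabel k r 0) + P.angle (relabel k r 1) + P.angle (relabel k r 2)
          = 2 * Real.pi) ∨
      (P.angle (relabel k r 0) + P.angle (relabel k r 1) + P.angle (relabel k r 3)
          = 2 * Real.pi) ∨
      (2 * P.angle (relabel k r 1) + P.angle (relabel k r 0) = 2 * Real.pi ∧
        2 * P.angle (relabel k r 4) + P.angle (relabel k r 2) = 2 * Real.pi) := by
  obtain ⟨g, hg⟩ := EquilateralTiling.exists_isTilingBy hT
  obtain ⟨Φ, hΦ⟩ := EquilateralTiling.exists_isPositivelyOriented P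
  have hside (i j : Fin 5) : dist ((Φ ∘ P.V) i) ((Φ ∘ P.V) (i + 1)) =
      dist ((Φ ∘ P.V) j) ((Φ ∘ P.V) (j + 1)) := by
    simpa only [Function.comp_apply, Φ.dist_map, ConvexPolygon.side] using hequi i j
  have hangles := hΦ.equilateralAngles_cornerAngle hside
  have htile := hΦ.isEquilateralTile hside
  rw [EquilateralTiling.cornerAngle_comp] at hangles htile
  rw [← EquilateralTiling.image_convexHull_range] at htile
  exact EquilateralTiling.exists_satisfiesTypeCondition_of_isTilingBy hangles htile
    (hg.map Φ.toIsometryEquiv)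
end
end

section
/- Every convex pentagon in which some three consecutive interior angles sum to 360° (the Type 1 condition) admits a periodic monohedral tiling of the plane in which every tile is the image of the pentagon under a direct (orientation-preserving) isometry, i.e., a tiling using no reflected copies. -/
open EuclideanGeometry

noncomputable section

/-!
If the angles at the consecutive vertices `A`, `B`, `C` of the pentagon `ABCDE` sum to `2π`, the
turning angles there sum to `π`, so the sides `EA` and `CD` are parallel. In affine coordinates in
which the midpoint of `DE` is the origin, `DE` is horizontal of length `1` and `CD` is vertical, the
pentagon is the region between the axis and the two segments `CB` and `BA`. Together with its
half-turn image about the origin it fills the part of the unit strip between the arc `CBA` and the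
half-turn image of this arc.

Repeating the arc `CBA` under the translation `(1, c)` that takes `C` to `A` gives a curve `Γ`.
A half-turn about the midpoint of a segment preserves it, so the half-turn about the midpoint of
`CB` swaps the ends of `CB`, takes `BA` to the translate of `BA` that ends at `C`, and preserves
`Γ`. Hence `-Γ` is a translate of `Γ` by some `-(α, h)`: the translates of the pair of pentagons by
multiples of `(1, c)` fill the band between `-Γ` and `Γ`, and translating this band by multiples of
`(α, h)` fills the plane.
-/

section AreaForm

variable {V : Type*} [NormedAddCommGroup V] [InnerProductSpace ℝ V]
  [Fact (Module.finrank ℝ V = 2)] (o : Orientation ℝ V (Fin 2))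

lemma sign_oangle_eq_sign_areaForm (x y : V) :
    (o.oangle x y).sign = SignType.sign (o.areaForm x y) := by
  rcases eq_or_ne x 0 with rfl | hx
  · simp
  rcases eq_or_ne y 0 with rfl | hy
  · simp
  have hnorm : 0 < ‖o.kahler x y‖ := norm_pos_iff.2 (o.kahler_ne_zero hx hy)
  rw [Orientation.oangle, Real.Angle.sign, Real.Angle.sin_coe, Complex.sin_arg, div_eq_mul_inv,
    sign_mul, sign_pos (inv_pos.2 hnorm), mul_one]
  simp [Orientation.kahler_apply_apply]

lemma areaForm_eq_zero_iff {x y : V} : o.areaForm x y = 0 ↔ x = 0 ∨ ∃ r : ℝ, y = r • x := by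
  rw [← o.oangle_eq_zero_or_eq_pi_iff_right_eq_smul, ← Real.Angle.sign_eq_zero_iff,
    sign_oangle_eq_sign_areaForm, sign_eq_zero_iff]

lemma areaForm_sub_sub_rotate (x y z : V) :
    o.areaForm (y - x) (z - x) = o.areaForm (z - y) (x - y) := by
  simp only [map_sub, LinearMap.sub_apply, o.areaForm_apply_self, o.areaForm_swap y x,
    o.areaForm_swap z x, o.areaForm_swap z y]
  ring

lemma areaForm_smul_add_smul (a b c d : ℝ) (x y : V) :
    o.areaForm (a • x + b • y) (c • x + d • y) = (a * d - b * c) * o.areaForm x y := by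
  simp only [map_add, map_smul, LinearMap.add_apply, LinearMap.smul_apply, smul_eq_mul,
    o.areaForm_apply_self, o.areaForm_swap y x]
  ring

lemma collinear_of_areaForm_sub_sub_eq_zero {x y z : V} (h : o.areaForm (y - x) (z - x) = 0) :
    Collinear ℝ {x, y, z} := by
  rcases (areaForm_eq_zero_iff o).1 h with hxy | ⟨r, hr⟩
  · rw [sub_eq_zero.1 hxy, Set.insert_eq_of_mem (Set.mem_insert x {z})]
    exact collinear_pair ℝ x z
  · refine (collinear_iff_of_mem (Set.mem_insert x {y, z})).2 ⟨y - x, ?_⟩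
    rintro p (rfl | rfl | rfl)
    · exact ⟨0, by simp⟩
    · exact ⟨1, by simp⟩
    · exact ⟨r, by simp [← hr]⟩

lemma linearIndependent_pair_of_areaForm_ne_zero {x y : V} (h : o.areaForm x y ≠ 0) :
    LinearIndependent ℝ ![x, y] := by
  refine LinearIndependent.pair_iff.2 fun s t hst => ⟨?_, ?_⟩
  · simpa [h] using congrArg (fun z => o.areaForm z y) hst
  · simpa [h] using congrArg (o.areaForm x) hst

lemma exists_norm_sq_mul_eq_mul_areaForm (f : StrongDual ℝ V) {x : V} (hf : f x = 0) :
    ∃ c : ℝ, ∀ y, ‖x‖ ^ 2 * f y = c * o.areaForm x y := by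
  have : FiniteDimensional ℝ V := .of_fact_finrank_eq_two
  have : CompleteSpace V := FiniteDimensional.complete ℝ V
  set n := (InnerProductSpace.toDual ℝ V).symm f
  have hn (y : V) : inner ℝ n y = f y := InnerProductSpace.toDual_symm_apply
  refine ⟨o.areaForm x n, fun y => ?_⟩
  have hxn : inner ℝ x n = 0 := by rw [real_inner_comm, hn, hf]
  have h := o.inner_mul_inner_add_areaForm_mul_areaForm x n y
  rw [hxn, zero_mul, zero_add, hn] at h
  exact h.symm

lemma oangle_eq_angle_of_areaForm_pos {x y : V} (h : 0 < o.areaForm x y) :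
    o.oangle x y = InnerProductGeometry.angle x y :=
  o.oangle_eq_angle_of_sign_eq_one <| by rw [sign_oangle_eq_sign_areaForm, sign_pos h]

lemma sameRay_neg_of_angle_add_angle_add_angle_eq_pi {x y z w : V}
    (hxy : 0 < o.areaForm x y) (hyz : 0 < o.areaForm y z) (hzw : 0 < o.areaForm z w)
    (h : InnerProductGeometry.angle x y + InnerProductGeometry.angle y z +
      InnerProductGeometry.angle z w = Real.pi) :
    x ≠ 0 ∧ w ≠ 0 ∧ SameRay ℝ x (-w) := by
  have hx : x ≠ 0 := by rintro rfl; simp at hxy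
  have hy : y ≠ 0 := by rintro rfl; simp at hyz
  have hz : z ≠ 0 := by rintro rfl; simp at hzw
  have hw : w ≠ 0 := by rintro rfl; simp at hzw
  rw [← o.oangle_eq_pi_iff_sameRay_neg, ← o.oangle_add hx hz hw, ← o.oangle_add hx hy hz,
    oangle_eq_angle_of_areaForm_pos o hxy, oangle_eq_angle_of_areaForm_pos o hyz,
    oangle_eq_angle_of_areaForm_pos o hzw]
  exact_mod_cast congrArg ((↑) : ℝ → Real.Angle) h

end AreaForm

lemma exists_dual_eq_and_le_of_segment_subset_frontier {E : Type*} [AddCommGroup E] [Module ℝ E]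
    [TopologicalSpace E] [IsTopologicalAddGroup E] [ContinuousSMul ℝ E] {K : Set E}
    (hK : Convex ℝ K) (hint : (interior K).Nonempty) {x y : E} (hx : x ∈ K) (hy : y ∈ K)
    (hxy : segment ℝ x y ⊆ frontier K) :
    ∃ f : StrongDual ℝ E, f ≠ 0 ∧ f x = f y ∧ ∀ z ∈ K, f z ≤ f x := by
  have hdisj : Disjoint (interior K) (segment ℝ x y) :=
    disjoint_interior_frontier.mono_right hxy
  obtain ⟨f, u, hf, hle, hge⟩ := geometric_hahn_banach_of_nonempty_interior hK
    (convex_segment x y) hdisj hint ⟨x, left_mem_segment ℝ x y⟩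
  have hfx : f x = u := (hle x hx).antisymm (hge x (left_mem_segment ℝ x y))
  have hfy : f y = u := (hle y hy).antisymm (hge y (right_mem_segment ℝ x y))
  exact ⟨f, hf, hfx.trans hfy.symm, fun z hz => hfx ▸ hle z hz⟩

lemma add_smul_mem_of_le_of_le {E : Type*} [AddCommGroup E] [Module ℝ E] {K : Set E}
    (hK : Convex ℝ K) {x v : E} {r₁ r₂ r : ℝ} (h₁ : x + r₁ • v ∈ K) (h₂ : x + r₂ • v ∈ K)
    (hr₁ : r₁ ≤ r) (hr₂ : r ≤ r₂) : x + r • v ∈ K := by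
  have hline (t : ℝ) : AffineMap.lineMap x (x + v) t = x + t • v := by
    simp [AffineMap.lineMap_apply, add_comm]
  have hord : (AffineMap.lineMap x (x + v) ⁻¹' K : Set ℝ).OrdConnected :=
    (hK.affine_preimage _).ordConnected
  simpa only [Set.mem_preimage, hline] using
    hord.out (by simpa [hline] using h₁) (by simpa [hline] using h₂) ⟨hr₁, hr₂⟩

lemma fin_add_one_ne {n : ℕ} [NeZero n] (hn : 2 ≤ n) (i : Fin n) : i + 1 ≠ i := by
  simp [Fin.ext_iff, Nat.mod_eq_of_lt hn]

lemma fin_add_one_add_one_ne {n : ℕ} [NeZero n] (hn : 3 ≤ n) (i : Fin n) : i + 1 + 1 ≠ i := by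
  rw [add_assoc, Ne, add_eq_left]
  simp [Fin.ext_iff, Fin.val_add, Nat.mod_eq_of_lt (show 1 < n by lia),
    Nat.mod_eq_of_lt (show 2 < n by lia)]

lemma fin_forall_of_forall_add_one {n : ℕ} [NeZero n] {p : Fin n → Prop} (h0 : p 0)
    (hstep : ∀ i, p i → p (i + 1)) (i : Fin n) : p i := by
  obtain ⟨m, hm⟩ := i
  induction m with
  | zero => exact h0
  | succ m ih =>
    convert hstep _ (ih (by lia))
    simp [Fin.val_add, Nat.mod_eq_of_lt hm, Nat.mod_eq_of_lt (show 1 < n by lia)]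

instance : Fact (Module.finrank ℝ Plane = 2) := ⟨finrank_euclideanSpace_fin⟩

namespace ConvexPolygon

variable {n : ℕ} [NeZero n] (P : ConvexPolygon n)

lemma V_mem_carrier (i : Fin n) : P.V i ∈ P.carrier :=
  subset_convexHull ℝ _ (Set.mem_range_self i)

lemma convex_carrier : Convex ℝ P.carrier := convex_convexHull ℝ _

lemma not_wbtw {i j l : Fin n} (hij : i ≠ j) (hlj : l ≠ j) :
    ¬ Wbtw ℝ (P.V i) (P.V j) (P.V l) := fun h =>
  P.strictlyConvex j <| segment_subset_convexHull (Set.mem_image_of_mem _ hij)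
    (Set.mem_image_of_mem _ hlj) (mem_segment_iff_wbtw.2 h)

lemma not_collinear {i j l : Fin n} (hij : i ≠ j) (hlj : l ≠ j) (hil : i ≠ l) :
    ¬ Collinear ℝ {P.V i, P.V j, P.V l} := by
  intro h
  rcases h.wbtw_or_wbtw_or_wbtw with h | h | h
  · exact P.not_wbtw hij hlj h
  · exact P.not_wbtw hlj.symm hil h
  · exact P.not_wbtw hil.symm hij.symm h

lemma areaForm_ne_zero (o : Orientation ℝ Plane (Fin 2)) {i j l : Fin n} (hij : i ≠ j)
    (hlj : l ≠ j) (hil : i ≠ l) : o.areaForm (P.V j - P.V i) (P.V l - P.V i) ≠ 0 := fun h =>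
  P.not_collinear hij hlj hil (collinear_of_areaForm_sub_sub_eq_zero o h)

lemma interior_carrier_nonempty (hn : 3 ≤ n) : (interior P.carrier).Nonempty := by
  have hind : AffineIndependent ℝ ![P.V 0, P.V (0 + 1), P.V (0 + 1 + 1)] :=
    affineIndependent_iff_not_collinear_set.2 <| P.not_collinear
      (fin_add_one_ne (by lia) 0).symm (fin_add_one_ne (by lia) _)
      (fin_add_one_add_one_ne hn 0).symm
  have hspan : affineSpan ℝ (Set.range ![P.V 0, P.V (0 + 1), P.V (0 + 1 + 1)]) = ⊤ := by
    rw [hind.affineSpan_eq_top_iff_card_eq_finrank_add_one]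
    simp
  rw [carrier, interior_convexHull_nonempty_iff_affineSpan_eq_top, eq_top_iff, ← hspan]
  refine affineSpan_mono ℝ (Set.range_subset_iff.2 fun i => ?_)
  fin_cases i <;> exact Set.mem_range_self _

lemma sign_areaForm_eq (hn : 3 ≤ n) (o : Orientation ℝ Plane (Fin 2)) {i j l : Fin n}
    (hj : j ≠ i) (hj' : j ≠ i + 1) (hl : l ≠ i) (hl' : l ≠ i + 1) :
    SignType.sign (o.areaForm (P.V (i + 1) - P.V i) (P.V j - P.V i)) =
      SignType.sign (o.areaForm (P.V (i + 1) - P.V i) (P.V l - P.V i)) := by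
  have hi : i ≠ i + 1 := (fin_add_one_ne (by lia) i).symm
  obtain ⟨f, hf, hfi, hfle⟩ := exists_dual_eq_and_le_of_segment_subset_frontier
    P.convex_carrier (P.interior_carrier_nonempty hn) (P.V_mem_carrier i)
    (P.V_mem_carrier (i + 1)) (P.cyclic i)
  have hedge : P.V (i + 1) - P.V i ≠ 0 := fun h => by
    simpa [h] using P.areaForm_ne_zero o hi hj' hj.symm
  obtain ⟨c, hc⟩ := exists_norm_sq_mul_eq_mul_areaForm o f
    (x := P.V (i + 1) - P.V i) (by rw [map_sub, hfi, sub_self])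
  have hc0 : c ≠ 0 := by
    rintro rfl
    exact hf (ContinuousLinearMap.ext fun y => by simpa [hedge] using hc y)
  have hmul (m : Fin n) : c * o.areaForm (P.V (i + 1) - P.V i) (P.V m - P.V i) ≤ 0 := by
    rw [← hc, map_sub]
    exact mul_nonpos_of_nonneg_of_nonpos (sq_nonneg _)
      (sub_nonpos.2 (hfle _ (P.V_mem_carrier m)))
  have hsign {m : Fin n} (hm : m ≠ i) (hm' : m ≠ i + 1) :
      SignType.sign (o.areaForm (P.V (i + 1) - P.V i) (P.V m - P.V i)) = -SignType.sign c := by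
    have hm0 := P.areaForm_ne_zero o hi hm' hm.symm
    rcases hc0.lt_or_gt with h | h
    · have := lt_of_le_of_ne (nonneg_of_mul_nonpos_right (hmul m) h) hm0.symm
      rw [sign_neg h, sign_pos this, neg_neg]
    · have := lt_of_le_of_ne (nonpos_of_mul_nonpos_right (hmul m) h) hm0
      rw [sign_pos h, sign_neg this]
  rw [hsign hj hj', hsign hl hl']

/-- The vertices occur in counterclockwise order with respect to the orientation `o`. -/
def IsCounterclockwise (o : Orientation ℝ Plane (Fin 2)) : Prop :=
  ∀ i : Fin n, 0 < o.areaForm (P.V (i + 1) - P.V i) (P.V (i + 1 + 1) - P.V i)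

lemma exists_isCounterclockwise (hn : 3 ≤ n) : ∃ o, P.IsCounterclockwise o := by
  have hne (i : Fin n) : i + 1 ≠ i := fin_add_one_ne (by lia) i
  have hne' (i : Fin n) : i + 1 + 1 ≠ i := fin_add_one_add_one_ne hn i
  obtain ⟨o, ho⟩ : ∃ o : Orientation ℝ Plane (Fin 2),
      0 < o.areaForm (P.V (0 + 1) - P.V 0) (P.V (0 + 1 + 1) - P.V 0) := by
    let o : Orientation ℝ Plane (Fin 2) := (EuclideanSpace.basisFun (Fin 2) ℝ).toBasis.orientation
    rcases (P.areaForm_ne_zero o (hne 0).symm (hne _) (hne' 0).symm).lt_or_gt with h | h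
    · exact ⟨-o, by simpa [o.areaForm_neg_orientation] using h⟩
    · exact ⟨o, h⟩
  refine ⟨o, fin_forall_of_forall_add_one ho fun i hi => ?_⟩
  rw [areaForm_sub_sub_rotate, ← sign_eq_one_iff] at hi
  rwa [← sign_eq_one_iff, P.sign_areaForm_eq hn o (hne' (i + 1)) (hne _) (hne i).symm
    (hne' i).symm]

variable {P}

lemma IsCounterclockwise.areaForm_side_pos {o : Orientation ℝ Plane (Fin 2)}
    (ho : P.IsCounterclockwise o) (i : Fin n) :
    0 < o.areaForm (P.V (i + 1) - P.V i) (P.V (i + 1 + 1) - P.V (i + 1)) := by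
  rw [← sub_sub_sub_cancel_right (P.V (i + 1 + 1)) (P.V (i + 1)) (P.V i), map_sub,
    o.areaForm_apply_self, sub_zero]
  exact ho i

/-- The turning angles at the three vertices sum to `π`, so the sides before the first of them and
after the last are antiparallel. -/
lemma IsCounterclockwise.exists_side_eq_smul {o : Orientation ℝ Plane (Fin 2)}
    (ho : P.IsCounterclockwise o) {k : Fin n}
    (hk : P.angle k + P.angle (k + 1) + P.angle (k + 1 + 1) = 2 * Real.pi) :
    ∃ q : ℝ, 0 < q ∧
      P.V k - P.V (k - 1) = q • (P.V (k + 1 + 1) - P.V (k + 1 + 1 + 1)) := by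
  have hangle (X Y Z : Plane) : EuclideanGeometry.angle X Y Z =
      Real.pi - InnerProductGeometry.angle (Y - X) (Z - Y) := by
    rw [← InnerProductGeometry.angle_neg_left, neg_sub]
    rfl
  have hpos := ho.areaForm_side_pos (k - 1)
  rw [sub_add_cancel] at hpos
  simp only [ConvexPolygon.angle, hangle, add_sub_cancel_right] at hk
  obtain ⟨hne, hne', hray⟩ := sameRay_neg_of_angle_add_angle_add_angle_eq_pi o hpos
    (ho.areaForm_side_pos k) (ho.areaForm_side_pos (k + 1)) (by linarith)
  obtain ⟨q, hq, hside⟩ := hray.exists_pos_right hne (neg_ne_zero.2 hne')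
  exact ⟨q, hq, by rw [hside, neg_sub]⟩

lemma carrier_eq_convexHull (P : ConvexPentagon) (k : Fin 5) : P.carrier =
    convexHull ℝ {P.V k, P.V (k + 1), P.V (k + 1 + 1), P.V (k + 1 + 1 + 1), P.V (k - 1)} := by
  have hindices : (Set.univ : Set (Fin 5)) = {k, k + 1, k + 1 + 1, k + 1 + 1 + 1, k - 1} := by
    refine (Set.eq_univ_of_forall fun i => ?_).symm
    simp only [Set.mem_insert_iff, Set.mem_singleton_iff]
    decide +revert
  rw [carrier, ← Set.image_univ, hindices]
  simp only [Set.image_insert_eq, Set.image_singleton]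

end ConvexPolygon

open scoped Pointwise

lemma exists_int_le_lt_of_add_le {U : ℤ → ℝ} {δ : ℝ} (hδ : 0 < δ) (hU : ∀ k, U k + δ ≤ U (k + 1))
    (t : ℝ) : ∃ k, U k ≤ t ∧ t < U (k + 1) := by
  have hmono : Monotone fun k : ℤ => U k - k * δ :=
    monotone_int_of_le_succ fun k => by push_cast; linarith [hU k]
  obtain ⟨N, hN⟩ := exists_nat_gt (|t - U 0| / δ)
  rw [div_lt_iff₀ hδ, abs_lt] at hN
  have hUmono : Monotone U := monotone_int_of_le_succ fun k => by linarith [hU k]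
  have hlow : U (-N) ≤ t := by
    have := hmono (show -(N : ℤ) ≤ 0 by lia)
    push_cast at this
    linarith [hN.1]
  have hbdd (k : ℤ) (hk : U k ≤ t) : k ≤ N := by
    by_contra! h
    have h₁ := hmono (show (0 : ℤ) ≤ N by lia)
    have h₂ := hUmono h.le
    push_cast at h₁
    linarith [hN.2]
  obtain ⟨k, hk, hmax⟩ := Int.exists_greatest_of_bdd ⟨N, hbdd⟩ ⟨-N, hlow⟩
  exact ⟨k, hk, lt_of_not_ge fun h => by have := hmax _ h; lia⟩

lemma exists_pos_add_smul_mem_of_mem_interior {E : Type*} [AddCommGroup E] [Module ℝ E]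
    [TopologicalSpace E] [ContinuousAdd E] [ContinuousSMul ℝ E] {S : Set E} {x : E}
    (hx : x ∈ interior S) (v : E) : ∃ r : ℝ, 0 < r ∧ x + r • v ∈ S := by
  have hcont : ContinuousAt (fun r : ℝ => x + r • v) 0 := by fun_prop
  have hev : ∀ᶠ r in nhds (0 : ℝ), x + r • v ∈ S :=
    hcont (by simpa using mem_interior_iff_mem_nhds.1 hx)
  obtain ⟨r, hr, hr0⟩ :=
    ((hev.filter_mono nhdsWithin_le_nhds).and self_mem_nhdsWithin : ∀ᶠ r in nhdsWithin (0 : ℝ)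
      (Set.Ioi 0), x + r • v ∈ S ∧ 0 < r).exists
  exact ⟨r, hr0, hr⟩

section CentralTranslates

variable {E : Type*} [AddCommGroup E]

/-- The translates by vectors of `Λ` of the set `S` and of its half-turn image `-S`. -/
def centralTranslates (Λ : AddSubgroup E) (S : Set E) : Set (Set E) :=
  {t | ∃ w ∈ Λ, t = w +ᵥ S ∨ t = w +ᵥ -S}

lemma vadd_mem_centralTranslates {Λ : AddSubgroup E} {S t : Set E} {v : E} (hv : v ∈ Λ)
    (ht : t ∈ centralTranslates Λ S) : v +ᵥ t ∈ centralTranslates Λ S := by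
  obtain ⟨w, hw, rfl | rfl⟩ := ht
  · exact ⟨v + w, add_mem hv hw, .inl (vadd_vadd v w S)⟩
  · exact ⟨v + w, add_mem hv hw, .inr (vadd_vadd v w (-S))⟩

lemma centralTranslates_map {F : Type*} [AddCommGroup F] (φ : E →+ F) (Λ : AddSubgroup E)
    (S : Set E) :
    centralTranslates (Λ.map φ) (φ '' S) = Set.image φ '' centralTranslates Λ S := by
  have himage (w : E) (A : Set E) : φ '' (w +ᵥ A) = φ w +ᵥ φ '' A := by
    simp only [← Set.image_vadd, Set.image_image, vadd_eq_add, map_add]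
  have hneg : φ '' (-S) = -(φ '' S) := Set.image_neg φ S
  ext t
  constructor
  · rintro ⟨_, ⟨w, hw, rfl⟩, rfl | rfl⟩
    · exact ⟨_, ⟨w, hw, .inl rfl⟩, himage w S⟩
    · exact ⟨_, ⟨w, hw, .inr rfl⟩, by rw [himage, hneg]⟩
  · rintro ⟨_, ⟨w, hw, rfl | rfl⟩, rfl⟩
    · exact ⟨φ w, ⟨w, hw, rfl⟩, .inl (himage w S)⟩
    · exact ⟨φ w, ⟨w, hw, rfl⟩, .inr (by rw [himage, hneg])⟩

end CentralTranslates

section Profile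

/-- The closed region between the horizontal axis and the graph of `f` over `[-1/2, 1/2]`. -/
def regionUnder (f : ℝ → ℝ) : Set (ℝ × ℝ) := {p | |p.1| ≤ 1 / 2 ∧ 0 ≤ p.2 ∧ p.2 ≤ f p.1}

lemma convex_regionUnder {f : ℝ → ℝ} (hf : ConcaveOn ℝ (Set.Icc (-1 / 2) (1 / 2)) f) :
    Convex ℝ (regionUnder f) := by
  have hregion : regionUnder f = {p : ℝ × ℝ | p.1 ∈ Set.Icc (-1 / 2) (1 / 2) ∧ p.2 ≤ f p.1} ∩
      LinearMap.snd ℝ ℝ ℝ ⁻¹' Set.Ici 0 := by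
    ext p
    simp only [regionUnder, abs_le, neg_div, Set.mem_ofPred_eq, Set.mem_inter_iff, Set.mem_Icc,
      Set.mem_preimage, LinearMap.snd_apply, Set.mem_Ici]
    tauto
  rw [hregion]
  exact hf.convex_hypograph.inter ((convex_Ici 0).linear_preimage _)

/-- The graph of `f` is invariant under the translation by `(1, c)` and under the half-turn about
`(α / 2, h / 2)`, and `f` is bounded below by a positive constant over `[-1/2, 1/2]`. The graph is
then the upper boundary of a row of tiles. -/
structure IsProfile (f : ℝ → ℝ) (c α h : ℝ) : Prop where
  map_add_one : ∀ s, f (s + 1) = f s + c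
  map_add_map_sub : ∀ s, f s + f (α - s) = h
  exists_pos_le : ∃ m > 0, ∀ s, |s| ≤ 1 / 2 → m ≤ f s

/-- The upper boundary of the `k`-th row of tiles: the graph of `f` translated by `k (α, h)`. -/
def rowTop (f : ℝ → ℝ) (α h s : ℝ) (k : ℤ) : ℝ := f (s - k * α) + k * h

/-- The translation lattice of the tiling by the region under a profile and its half-turn images. -/
def profileLattice (c α h : ℝ) : AddSubgroup (ℝ × ℝ) := .closure {(1, c), (α, h)}

lemma mem_profileLattice {c α h : ℝ} {w : ℝ × ℝ} :
    w ∈ profileLattice c α h ↔ ∃ j k : ℤ, w = (j + k * α, j * c + k * h) := by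
  simp [profileLattice, AddSubgroup.mem_closure_pair, eq_comm]

namespace IsProfile

variable {f : ℝ → ℝ} {c α h : ℝ}

lemma map_add_intCast (hf : IsProfile f c α h) (s : ℝ) (n : ℤ) : f (s + n) = f s + n * c := by
  simpa using AddConstMapClass.map_add_int' (⟨f, hf.map_add_one⟩ : AddConstMap ℝ ℝ 1 c) s n

lemma map_eq_map_sub_round_add (hf : IsProfile f c α h) (s : ℝ) :
    f s = f (s - round s) + round s * c := by
  rw [← hf.map_add_intCast, sub_add_cancel]

lemma map_neg_eq_sub_round (hf : IsProfile f c α h) (s : ℝ) :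
    f (-s) = f (-(s - round s)) - round s * c := by
  rw [eq_sub_iff_add_eq, ← hf.map_add_intCast, neg_sub, neg_add_eq_sub]

-- The half-turn symmetry of the graph turns the top of one row into the bottom of the next.
lemma rowTop_eq_sub_map_neg (hf : IsProfile f c α h) (s : ℝ) (k : ℤ) :
    rowTop f α h s k = (k + 1) * h - f (-(s - (k + 1) * α)) := by
  have := hf.map_add_map_sub (s - k * α)
  rw [rowTop, show -(s - (k + 1) * α) = α - (s - k * α) by ring]
  linarith

lemma exists_rowTop_add_le (hf : IsProfile f c α h) (s : ℝ) :
    ∃ δ > 0, ∀ k, rowTop f α h s k + δ ≤ rowTop f α h s (k + 1) := by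
  obtain ⟨m, hm, hfm⟩ := hf.exists_pos_le
  refine ⟨m + m, by positivity, fun k => ?_⟩
  set y := s - (k + 1) * α with hy
  have hround := abs_sub_round y
  have hpos := hfm _ hround
  have hneg := hfm _ ((abs_neg _).trans_le hround)
  rw [hf.rowTop_eq_sub_map_neg, rowTop, Int.cast_add, Int.cast_one, ← hy,
    hf.map_eq_map_sub_round_add y, hf.map_neg_eq_sub_round y]
  linarith

lemma strictMono_rowTop (hf : IsProfile f c α h) (s : ℝ) : StrictMono (rowTop f α h s) := by
  obtain ⟨δ, hδ, hrow⟩ := hf.exists_rowTop_add_le s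
  exact strictMono_int_of_lt_succ fun k => by linarith [hrow k]

lemma sUnion_centralTranslates (hf : IsProfile f c α h) :
    ⋃₀ centralTranslates (profileLattice c α h) (regionUnder f) = Set.univ := by
  refine Set.eq_univ_of_forall fun ⟨s, t⟩ => ?_
  obtain ⟨δ, hδ, hrow⟩ := hf.exists_rowTop_add_le s
  obtain ⟨k, hkt, htk⟩ := exists_int_le_lt_of_add_le hδ hrow t
  rw [hf.rowTop_eq_sub_map_neg] at hkt
  rw [rowTop, Int.cast_add, Int.cast_one] at htk
  set y := s - (k + 1) * α with hy
  have hround := abs_sub_round y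
  rw [hf.map_neg_eq_sub_round] at hkt
  rw [hf.map_eq_map_sub_round_add] at htk
  set w : ℝ × ℝ := (round y + (k + 1 : ℤ) * α, round y * c + (k + 1 : ℤ) * h) with hw
  have hsub : -w + (s, t) = (y - round y, t - round y * c - (k + 1) * h) := by
    rw [hw, hy, Prod.neg_mk, Prod.mk_add_mk, Int.cast_add, Int.cast_one]
    congr 1 <;> ring
  have hwΛ : w ∈ profileLattice c α h := mem_profileLattice.2 ⟨_, _, rfl⟩
  rcases le_total 0 (t - round y * c - (k + 1) * h) with ht | ht
  · refine ⟨w +ᵥ regionUnder f, ⟨w, hwΛ, .inl rfl⟩, Set.mem_vadd_set_iff_neg_vadd_mem.2 ?_⟩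
    rw [vadd_eq_add, hsub]
    exact ⟨hround, ht, by linarith⟩
  · refine ⟨w +ᵥ -regionUnder f, ⟨w, hwΛ, .inr rfl⟩, Set.mem_vadd_set_iff_neg_vadd_mem.2 ?_⟩
    rw [vadd_eq_add, hsub]
    exact ⟨(abs_neg _).trans_le hround, neg_nonneg.2 ht, by dsimp; linarith⟩

end IsProfile

/-- The region strictly between the graph of `f` and its half-turn image over `(-1/2, 1/2)`: the
union of a tile and its half-turn image, without boundary. Its lattice translates are disjoint. -/
def doubleRegion (f : ℝ → ℝ) : Set (ℝ × ℝ) := {p | |p.1| < 1 / 2 ∧ -f (-p.1) < p.2 ∧ p.2 < f p.1}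

lemma mem_interior_regionUnder {f : ℝ → ℝ} {p : ℝ × ℝ} (hp : p ∈ interior (regionUnder f)) :
    |p.1| < 1 / 2 ∧ 0 < p.2 ∧ p.2 < f p.1 := by
  obtain ⟨r₁, hr₁, h₁, -⟩ := exists_pos_add_smul_mem_of_mem_interior hp (1, 0)
  obtain ⟨r₂, hr₂, h₂, -⟩ := exists_pos_add_smul_mem_of_mem_interior hp (-1, 0)
  obtain ⟨r₃, hr₃, -, -, h₃⟩ := exists_pos_add_smul_mem_of_mem_interior hp (0, 1)
  obtain ⟨r₄, hr₄, -, h₄, -⟩ := exists_pos_add_smul_mem_of_mem_interior hp (0, -1)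
  simp only [Prod.fst_add, Prod.smul_fst, Prod.snd_add, Prod.smul_snd, smul_eq_mul, mul_one,
    mul_neg, mul_zero, add_zero, abs_le] at h₁ h₂ h₃ h₄
  exact ⟨abs_lt.2 ⟨by linarith, by linarith⟩, by linarith, by linarith⟩

namespace IsProfile

variable {f : ℝ → ℝ} {c α h : ℝ}

lemma pos (hf : IsProfile f c α h) {s : ℝ} (hs : |s| ≤ 1 / 2) : 0 < f s :=
  let ⟨_, hm, hfm⟩ := hf.exists_pos_le
  hm.trans_le (hfm s hs)

lemma mem_doubleRegion_of_mem_interior (hf : IsProfile f c α h) {p : ℝ × ℝ}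
    (hp : p ∈ interior (regionUnder f)) : p ∈ doubleRegion f := by
  obtain ⟨hs, h0, hlt⟩ := mem_interior_regionUnder hp
  have := hf.pos ((abs_neg p.1).trans_le hs.le)
  exact ⟨hs, by linarith, hlt⟩

lemma rowTop_lt_and_lt_and_round_eq (hf : IsProfile f c α h) {p : ℝ × ℝ} {j k : ℤ}
    (hp : p - (j + k * α, j * c + k * h) ∈ doubleRegion f) :
    rowTop f α h p.1 (k - 1) < p.2 ∧ p.2 < rowTop f α h p.1 k ∧ round (p.1 - k * α) = j := by
  obtain ⟨hs, hlow, hupp⟩ := hp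
  simp only [Prod.fst_sub, Prod.snd_sub] at hs hlow hupp
  have hround : round (p.1 - k * α) = j := by
    rw [← sub_eq_zero, ← round_sub_intCast, round_eq_zero_iff]
    rw [abs_lt] at hs
    constructor <;> linarith
  have heq : p.1 - (j + k * α) = p.1 - k * α - round (p.1 - k * α) := by rw [hround]; ring
  refine ⟨?_, ?_, hround⟩
  · rw [hf.rowTop_eq_sub_map_neg, Int.cast_sub, Int.cast_one, sub_add_cancel,
      hf.map_neg_eq_sub_round, ← heq, hround]
    linarith
  · rw [rowTop, hf.map_eq_map_sub_round_add, ← heq, hround]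
    linarith

lemma eq_of_sub_mem_doubleRegion (hf : IsProfile f c α h) {p w w' : ℝ × ℝ}
    (hw : w ∈ profileLattice c α h) (hw' : w' ∈ profileLattice c α h)
    (hp : p - w ∈ doubleRegion f) (hp' : p - w' ∈ doubleRegion f) : w = w' := by
  obtain ⟨j, k, rfl⟩ := mem_profileLattice.1 hw
  obtain ⟨j', k', rfl⟩ := mem_profileLattice.1 hw'
  obtain ⟨hlow, hupp, hj⟩ := hf.rowTop_lt_and_lt_and_round_eq hp
  obtain ⟨hlow', hupp', hj'⟩ := hf.rowTop_lt_and_lt_and_round_eq hp'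
  have hmono := hf.strictMono_rowTop p.1
  have h₁ := hmono.lt_iff_lt.1 (hlow.trans hupp')
  have h₂ := hmono.lt_iff_lt.1 (hlow'.trans hupp)
  obtain rfl : k = k' := by lia
  rw [← hj, ← hj']

lemma sub_mem_doubleRegion_of_mem_interior_vadd (hf : IsProfile f c α h) {p w : ℝ × ℝ}
    (hp : p ∈ interior (w +ᵥ regionUnder f)) : p - w ∈ doubleRegion f ∧ 0 < (p - w).2 := by
  rw [interior_vadd, Set.mem_vadd_set_iff_neg_vadd_mem, vadd_eq_add, neg_add_eq_sub] at hp
  exact ⟨hf.mem_doubleRegion_of_mem_interior hp, (mem_interior_regionUnder hp).2.1⟩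

lemma sub_mem_doubleRegion_of_mem_interior_vadd_neg (hf : IsProfile f c α h) {p w : ℝ × ℝ}
    (hp : p ∈ interior (w +ᵥ -regionUnder f)) : p - w ∈ doubleRegion f ∧ (p - w).2 < 0 := by
  rw [interior_vadd, Set.mem_vadd_set_iff_neg_vadd_mem, vadd_eq_add, neg_add_eq_sub] at hp
  replace hp : -(p - w) ∈ interior (regionUnder f) :=
    ((Homeomorph.neg (ℝ × ℝ)).preimage_interior (regionUnder f)).ge hp
  obtain ⟨hs, hlow, hupp⟩ := hf.mem_doubleRegion_of_mem_interior hp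
  refine ⟨⟨(abs_neg _).symm.trans_lt hs, ?_, ?_⟩, neg_pos.1 (mem_interior_regionUnder hp).2.1⟩
  · simpa using neg_lt_neg hupp
  · simpa using neg_lt_neg hlow

lemma pairwise_disjoint_interior (hf : IsProfile f c α h) :
    (centralTranslates (profileLattice c α h) (regionUnder f)).Pairwise
      fun t s => interior t ∩ interior s = ∅ := by
  have hmixed {p w w' : ℝ × ℝ} (hw : w ∈ profileLattice c α h) (hw' : w' ∈ profileLattice c α h)
      (hp : p ∈ interior (w +ᵥ regionUnder f)) : p ∉ interior (w' +ᵥ -regionUnder f) := by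
    intro hp'
    obtain ⟨hmem, hpos⟩ := hf.sub_mem_doubleRegion_of_mem_interior_vadd hp
    obtain ⟨hmem', hneg⟩ := hf.sub_mem_doubleRegion_of_mem_interior_vadd_neg hp'
    rw [hf.eq_of_sub_mem_doubleRegion hw hw' hmem hmem'] at hpos
    exact hpos.not_gt hneg
  intro t ht s hs hts
  contrapose! hts
  obtain ⟨p, hpt, hps⟩ := hts
  obtain ⟨w, hw, rfl | rfl⟩ := ht <;> obtain ⟨w', hw', rfl | rfl⟩ := hs
  · rw [hf.eq_of_sub_mem_doubleRegion hw hw' (hf.sub_mem_doubleRegion_of_mem_interior_vadd hpt).1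
      (hf.sub_mem_doubleRegion_of_mem_interior_vadd hps).1]
  · exact absurd hps (hmixed hw hw' hpt)
  · exact absurd hpt (hmixed hw' hw hps)
  · rw [hf.eq_of_sub_mem_doubleRegion hw hw'
      (hf.sub_mem_doubleRegion_of_mem_interior_vadd_neg hpt).1
      (hf.sub_mem_doubleRegion_of_mem_interior_vadd_neg hps).1]

end IsProfile

/-- The extension of `g` from `[-1/2, 1/2]` to a function that increases by `g (1/2) - g (-1/2)`
over each unit interval. -/
def quasiperiodicExtension (g : ℝ → ℝ) (s : ℝ) : ℝ :=
  g (s - round s) + round s * (g (1 / 2) - g (-1 / 2))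

lemma quasiperiodicExtension_add_intCast (g : ℝ → ℝ) (s : ℝ) (n : ℤ) :
    quasiperiodicExtension g (s + n) =
      quasiperiodicExtension g s + n * (g (1 / 2) - g (-1 / 2)) := by
  simp only [quasiperiodicExtension, round_add_intCast, Int.cast_add, add_sub_add_right_eq_sub]
  ring

lemma quasiperiodicExtension_eq (g : ℝ → ℝ) {s : ℝ} (hs : |s| ≤ 1 / 2) :
    quasiperiodicExtension g s = g s := by
  rw [abs_le] at hs
  rcases hs.2.lt_or_eq with h | rfl
  · simp [quasiperiodicExtension, round_eq_zero_iff.2 ⟨by linarith, h⟩]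
  · have hround : round (1 / 2 : ℝ) = 1 := by norm_num [round_eq]
    simp only [quasiperiodicExtension, hround]
    norm_num

lemma regionUnder_congr {f g : ℝ → ℝ} (hfg : ∀ s, |s| ≤ 1 / 2 → f s = g s) :
    regionUnder f = regionUnder g :=
  Set.ext fun p => and_congr_right fun hp => by rw [hfg p.1 hp]

/-- The half-turns about the midpoints of the two arcs swap the ends of each arc. -/
lemma isProfile_quasiperiodicExtension {g : ℝ → ℝ} {b : ℝ} (hb : |b| ≤ 1 / 2)
    (hpos : ∃ m > 0, ∀ s, |s| ≤ 1 / 2 → m ≤ g s)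
    (hleft : ∀ s, -1 / 2 ≤ s → s ≤ b → g s + g (b - 1 / 2 - s) = g b + g (-1 / 2))
    (hright : ∀ s, b ≤ s → s ≤ 1 / 2 → g s + g (b + 1 / 2 - s) = g b + g (1 / 2)) :
    IsProfile (quasiperiodicExtension g) (g (1 / 2) - g (-1 / 2)) (b - 1 / 2)
      (g b + g (-1 / 2)) where
  map_add_one s := by simpa using quasiperiodicExtension_add_intCast g s 1
  exists_pos_le := by
    obtain ⟨m, hm, hgm⟩ := hpos
    exact ⟨m, hm, fun s hs => (hgm s hs).trans_eq (quasiperiodicExtension_eq g hs).symm⟩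
  map_add_map_sub s := by
    rw [abs_le] at hb
    set x := s - round s with hx
    have hxle := abs_sub_round s
    have hs : quasiperiodicExtension g s = g x + round s * (g (1 / 2) - g (-1 / 2)) := rfl
    have hs' : quasiperiodicExtension g (b - 1 / 2 - s) =
        quasiperiodicExtension g (b - 1 / 2 - x) - round s * (g (1 / 2) - g (-1 / 2)) := by
      rw [eq_sub_iff_add_eq, ← quasiperiodicExtension_add_intCast]
      congr 1
      rw [hx]; ring
    rw [hs, hs']
    obtain ⟨hx₁, hx₂⟩ := abs_le.1 hxle
    rcases le_total x b with hxb | hbx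
    · rw [quasiperiodicExtension_eq g (abs_le.2 ⟨by linarith, by linarith⟩)]
      linarith [hleft x (by linarith) hxb]
    · have hshift := quasiperiodicExtension_add_intCast g (b - 1 / 2 - x) 1
      rw [show b - 1 / 2 - x + (1 : ℤ) = b + 1 / 2 - x by push_cast; ring,
        quasiperiodicExtension_eq g (abs_le.2 ⟨by linarith, by linarith⟩)] at hshift
      push_cast at hshift
      linarith [hright x hbx hx₂]

end Profile

section Tent

/-- The function with peak `β` at `b`, of slope `l` to the left of `b` and of slope `r` to its
right, when `r ≤ l`. -/
def tent (b β l r s : ℝ) : ℝ := β + min (l * (s - b)) (r * (s - b))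

variable {b β l r : ℝ}

lemma tent_of_le (hrl : r ≤ l) {s : ℝ} (hs : s ≤ b) : tent b β l r s = β + l * (s - b) := by
  rw [tent, min_eq_left (mul_le_mul_of_nonpos_right hrl (sub_nonpos.2 hs))]

lemma tent_of_ge (hrl : r ≤ l) {s : ℝ} (hs : b ≤ s) : tent b β l r s = β + r * (s - b) := by
  rw [tent, min_eq_right (mul_le_mul_of_nonneg_right hrl (sub_nonneg.2 hs))]

lemma concaveOn_tent {S : Set ℝ} (hS : Convex ℝ S) : ConcaveOn ℝ S (tent b β l r) := by
  have hline (m : ℝ) : ConcaveOn ℝ S fun s => m * (s - b) :=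
    ⟨hS, fun x _ y _ μ ν _ _ hμν => by
      obtain rfl : μ = 1 - ν := by linarith
      simp only [smul_eq_mul]
      apply le_of_eq
      ring⟩
  exact (concaveOn_const β hS).add ((hline l).inf (hline r))

lemma isProfile_quasiperiodicExtension_tent (hrl : r ≤ l) (hb : |b| ≤ 1 / 2)
    (hp : 0 < tent b β l r (-1 / 2)) (hq : 0 < tent b β l r (1 / 2)) :
    IsProfile (quasiperiodicExtension (tent b β l r))
      (tent b β l r (1 / 2) - tent b β l r (-1 / 2)) (b - 1 / 2) (β + tent b β l r (-1 / 2)) := by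
  have hb' := abs_le.1 hb
  have hpeak : tent b β l r b = β := by simp [tent]
  have hprofile := isProfile_quasiperiodicExtension (g := tent b β l r) hb
    ⟨_, lt_min hp hq, fun s hs => ?_⟩ (fun s hs hsb => ?_) (fun s hbs hs => ?_)
  · rwa [hpeak] at hprofile
  · exact (concaveOn_tent (convex_Icc (-1 / 2) (1 / 2))).min_le_of_mem_Icc
      (by norm_num) (by norm_num) ⟨by linarith [(abs_le.1 hs).1], (abs_le.1 hs).2⟩
  · rw [hpeak, tent_of_le hrl hsb, tent_of_le hrl (by linarith), tent_of_le hrl (by linarith)]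
    ring
  · rw [hpeak, tent_of_ge hrl hbs, tent_of_ge hrl (by linarith), tent_of_ge hrl (by linarith)]
    ring

lemma regionUnder_tent_subset (hrl : r ≤ l) {K : Set (ℝ × ℝ)} (hK : Convex ℝ K)
    (hA : (1 / 2, tent b β l r (1 / 2)) ∈ K) (hB : (b, β) ∈ K)
    (hC : (-1 / 2, tent b β l r (-1 / 2)) ∈ K) (hD : (-1 / 2, 0) ∈ K) (hE : (1 / 2, 0) ∈ K) :
    regionUnder (tent b β l r) ⊆ K := by
  rintro ⟨s, t⟩ ⟨hs, ht₀, ht⟩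
  obtain ⟨hs₁, hs₂⟩ := abs_le.1 hs
  have hbase : (s, (0 : ℝ)) ∈ K := by
    simpa using add_smul_mem_of_le_of_le hK (x := 0) (v := (1, 0)) (r₁ := -1 / 2) (r₂ := 1 / 2)
      (r := s) (by simpa using hD) (by simpa using hE) (by linarith) hs₂
  have htop : (s, tent b β l r s) ∈ K := by
    rcases le_total s b with hsb | hbs
    · rw [tent_of_le hrl (by linarith)] at hC
      rw [tent_of_le hrl hsb]
      simpa [mul_comm l] using add_smul_mem_of_le_of_le hK (x := (b, β)) (v := (1, l))
        (r₁ := -1 / 2 - b) (r₂ := 0) (r := s - b) (by simpa [mul_comm l] using hC)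
        (by simpa using hB) (by linarith) (by linarith)
    · rw [tent_of_ge hrl (by linarith)] at hA
      rw [tent_of_ge hrl hbs]
      simpa [mul_comm r] using add_smul_mem_of_le_of_le hK (x := (b, β)) (v := (1, r)) (r₁ := 0)
        (r₂ := 1 / 2 - b) (r := s - b) (by simpa using hB) (by simpa [mul_comm r] using hA)
        (by linarith) (by linarith)
  simpa using add_smul_mem_of_le_of_le hK (x := (s, 0)) (v := (0, 1)) (r₁ := 0)
    (r₂ := tent b β l r s) (r := t) (by simpa using hbase) (by simpa using htop) ht₀ ht

lemma regionUnder_tent (hrl : r ≤ l) (hb : |b| ≤ 1 / 2)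
    (hp : 0 ≤ tent b β l r (-1 / 2)) (hq : 0 ≤ tent b β l r (1 / 2)) :
    regionUnder (tent b β l r) = convexHull ℝ {(1 / 2, tent b β l r (1 / 2)), (b, β),
      (-1 / 2, tent b β l r (-1 / 2)), (-1 / 2, 0), (1 / 2, 0)} := by
  apply subset_antisymm
  · apply regionUnder_tent_subset hrl (convex_convexHull ℝ _) <;>
      exact subset_convexHull ℝ _ (by simp)
  · have hconcave := concaveOn_tent (b := b) (β := β) (l := l) (r := r)
      (convex_Icc (-1 / 2) (1 / 2))
    have hpeak : tent b β l r b = β := by simp [tent]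
    have hβ : 0 ≤ β := hpeak ▸ (le_min hp hq).trans
      (hconcave.min_le_of_mem_Icc (by norm_num) (by norm_num)
        ⟨by linarith [(abs_le.1 hb).1], (abs_le.1 hb).2⟩)
    refine convexHull_min ?_ (convex_regionUnder hconcave)
    simp only [Set.insert_subset_iff, Set.singleton_subset_iff]
    refine ⟨?_, ?_, ?_, ?_, ?_⟩
    · exact ⟨by norm_num [abs_le], hq, le_rfl⟩
    · exact ⟨hb, hβ, hpeak.ge⟩
    · exact ⟨by norm_num [abs_le], hp, le_rfl⟩
    · exact ⟨by norm_num [abs_le], le_rfl, hp⟩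
    · exact ⟨by norm_num [abs_le], le_rfl, hq⟩

end Tent

section Tiling

/-- The set `P` admits a periodic monohedral tiling of the plane by images of `P` under direct
isometries. -/
def HasDirectPeriodicTiling (P : Set Plane) : Prop :=
  ∃ T : Set (Set Plane), IsMonohedralTiling P T ∧ IsPeriodic T ∧
    ∀ t ∈ T, ∃ g : Plane ≃ᵢ Plane, IsDirectIsometry g ∧ t = g '' P

lemma isDirectIsometry_addRight (w : Plane) : IsDirectIsometry (IsometryEquiv.addRight w) :=
  ⟨.refl ℝ Plane, w, by
    rw [show ((LinearIsometryEquiv.refl ℝ Plane).toLinearEquiv : Plane →ₗ[ℝ] Plane) =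
      LinearMap.id from rfl, LinearMap.det_id]
    exact one_pos, fun _ => rfl⟩

lemma isDirectIsometry_subLeft (w : Plane) : IsDirectIsometry (IsometryEquiv.subLeft w) := by
  refine ⟨.neg ℝ, w, ?_, fun x => sub_eq_neg_add w x⟩
  rw [show ((LinearIsometryEquiv.neg ℝ : Plane ≃ₗᵢ[ℝ] Plane).toLinearEquiv : Plane →ₗ[ℝ] Plane) =
    (-1 : ℝ) • LinearMap.id by ext; simp, LinearMap.det_smul]
  simp

lemma hasDirectPeriodicTiling_of_centralTranslates {Λ : AddSubgroup Plane} {S : Set Plane}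
    (hcover : ⋃₀ centralTranslates Λ S = Set.univ)
    (hdisj : (centralTranslates Λ S).Pairwise fun t s => interior t ∩ interior s = ∅)
    {u v : Plane} (hu : u ∈ Λ) (hv : v ∈ Λ) (huv : LinearIndependent ℝ ![u, v]) (M : Plane) :
    HasDirectPeriodicTiling (M +ᵥ S) := by
  have hdirect : ∀ t ∈ centralTranslates Λ S,
      ∃ g : Plane ≃ᵢ Plane, IsDirectIsometry g ∧ t = g '' (M +ᵥ S) := by
    rintro _ ⟨w, -, rfl | rfl⟩
    · refine ⟨.addRight (w - M), isDirectIsometry_addRight _, ?_⟩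
      rw [← Set.image_vadd, ← Set.image_vadd, Set.image_image]
      exact Set.image_congr fun x _ => by
        simp only [vadd_eq_add, IsometryEquiv.addRight_apply]; abel
    · refine ⟨.subLeft (w + M), isDirectIsometry_subLeft _, ?_⟩
      rw [← Set.image_vadd, ← Set.image_vadd, ← Set.image_neg_eq_neg, Set.image_image,
        Set.image_image]
      exact Set.image_congr fun x _ => by
        simp only [vadd_eq_add, IsometryEquiv.subLeft_apply]; abel
  have hshift {z : Plane} (hz : z ∈ Λ) (t : Set Plane) (ht : t ∈ centralTranslates Λ S) :
      (fun x => x + z) '' t ∈ centralTranslates Λ S := by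
    simpa only [← Set.image_vadd, vadd_eq_add, add_comm z] using vadd_mem_centralTranslates hz ht
  exact ⟨centralTranslates Λ S, ⟨fun t ht => (hdirect t ht).imp fun _ => And.right, hcover, hdisj⟩,
    ⟨u, v, huv, hshift hu, hshift hv⟩, hdirect⟩

lemma linearIndependent_one_prod_pair {c α h : ℝ} (hdet : h - α * c ≠ 0) :
    LinearIndependent ℝ ![((1 : ℝ), c), (α, h)] := by
  refine LinearIndependent.pair_iff.2 fun x y hxy => ?_
  simp only [Prod.smul_mk, Prod.mk_add_mk, smul_eq_mul, mul_one, Prod.mk_eq_zero] at hxy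
  obtain ⟨h₁, h₂⟩ := hxy
  have hy : y = 0 := (mul_eq_zero.1 (show y * (h - α * c) = 0 by
    linear_combination h₂ - c * h₁)).resolve_right hdet
  exact ⟨by simpa [hy] using h₁, hy⟩

lemma IsProfile.hasDirectPeriodicTiling {f : ℝ → ℝ} {c α h : ℝ} (hf : IsProfile f c α h)
    (hdet : h - α * c ≠ 0) (φ : (ℝ × ℝ) ≃L[ℝ] Plane) (M : Plane) :
    HasDirectPeriodicTiling (M +ᵥ φ '' regionUnder f) := by
  have htiles : centralTranslates ((profileLattice c α h).map (φ : ℝ × ℝ →+ Plane))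
      (φ '' regionUnder f) =
      Set.image φ '' centralTranslates (profileLattice c α h) (regionUnder f) :=
    centralTranslates_map (φ : ℝ × ℝ →+ Plane) _ _
  have hmem {w : ℝ × ℝ} (hw : w ∈ ({(1, c), (α, h)} : Set (ℝ × ℝ))) :
      φ w ∈ (profileLattice c α h).map (φ : ℝ × ℝ →+ Plane) :=
    AddSubgroup.mem_map_of_mem _ (AddSubgroup.subset_closure hw)
  have hind : LinearIndependent ℝ ![φ (1, c), φ (α, h)] := by
    have hcomp : ![φ (1, c), φ (α, h)] = (φ : ℝ × ℝ →ₗ[ℝ] Plane) ∘ ![(1, c), (α, h)] := by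
      ext1 i
      fin_cases i <;> rfl
    rw [hcomp]
    exact (linearIndependent_one_prod_pair hdet).map' _ φ.toLinearEquiv.ker
  refine hasDirectPeriodicTiling_of_centralTranslates ?_ ?_ (hmem (.inl rfl)) (hmem (.inr rfl))
    hind M
  · rw [htiles, ← Set.image_sUnion, hf.sUnion_centralTranslates, Set.image_univ,
      φ.surjective.range_eq]
  · rw [htiles]
    rintro _ ⟨t, ht, rfl⟩ _ ⟨s, hs, rfl⟩ hts
    have himage (A : Set (ℝ × ℝ)) : interior (φ '' A) = φ '' interior A :=
      (φ.toHomeomorph.image_interior A).symm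
    rw [himage, himage, ← Set.image_inter φ.injective,
      hf.pairwise_disjoint_interior ht hs (ne_of_apply_ne _ hts), Set.image_empty]

lemma hasDirectPeriodicTiling_convexHull_image (φ : (ℝ × ℝ) ≃L[ℝ] Plane) (M : Plane)
    {b β p q : ℝ} (hb : |b| < 1 / 2) (hp : 0 < p) (hq : 0 < q)
    (hβ : p * (1 / 2 - b) + q * (1 / 2 + b) ≤ β) :
    HasDirectPeriodicTiling (convexHull ℝ {M + φ (1 / 2, q), M + φ (b, β), M + φ (-1 / 2, p),
      M + φ (-1 / 2, 0), M + φ (1 / 2, 0)}) := by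
  obtain ⟨hb₁, hb₂⟩ := abs_lt.1 hb
  have hleft : 0 < b + 1 / 2 := by linarith
  have hright : 0 < 1 / 2 - b := by linarith
  obtain ⟨l, hl⟩ : ∃ l, l * (b + 1 / 2) = β - p := ⟨_, div_mul_cancel₀ _ hleft.ne'⟩
  obtain ⟨r, hr⟩ : ∃ r, r * (1 / 2 - b) = q - β := ⟨_, div_mul_cancel₀ _ hright.ne'⟩
  have hrl : r ≤ l := by
    refine le_of_mul_le_mul_right ?_ (mul_pos hleft hright)
    linear_combination hβ + (b + 1 / 2) * hr - (1 / 2 - b) * hl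
  have htent_left : tent b β l r (-1 / 2) = p := by
    rw [tent_of_le hrl (by linarith)]
    linarith
  have htent_right : tent b β l r (1 / 2) = q := by
    rw [tent_of_ge hrl hb₂.le]
    linarith
  have hprofile := isProfile_quasiperiodicExtension_tent (β := β) hrl hb.le
    (htent_left.symm ▸ hp) (htent_right.symm ▸ hq)
  rw [htent_left, htent_right] at hprofile
  have hregion := regionUnder_tent (β := β) hrl hb.le (htent_left.symm ▸ hp.le)
    (htent_right.symm ▸ hq.le)
  rw [htent_left, htent_right] at hregion
  have himage : M +ᵥ φ '' regionUnder (tent b β l r) =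
      convexHull ℝ {M + φ (1 / 2, q), M + φ (b, β), M + φ (-1 / 2, p), M + φ (-1 / 2, 0),
        M + φ (1 / 2, 0)} := by
    rw [hregion, ← ContinuousLinearEquiv.coe_coe, ← ContinuousLinearMap.coe_coe,
      LinearMap.image_convexHull, ← convexHull_vadd]
    simp only [Set.image_insert_eq, Set.image_singleton, ← Set.image_vadd, vadd_eq_add]
  rw [← himage, ← regionUnder_congr fun s => quasiperiodicExtension_eq (tent b β l r)]
  refine hprofile.hasDirectPeriodicTiling (ne_of_gt ?_) φ M
  linarith

lemma exists_continuousLinearEquiv_prod_apply_eq {V : Type*} [NormedAddCommGroup V]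
    [NormedSpace ℝ V] [Fact (Module.finrank ℝ V = 2)] {e u : V}
    (hind : LinearIndependent ℝ ![e, u]) :
    ∃ φ : (ℝ × ℝ) ≃L[ℝ] V, ∀ s t, φ (s, t) = s • e + t • u := by
  have : FiniteDimensional ℝ V := .of_fact_finrank_eq_two
  let B := basisOfLinearIndependentOfCardEqFinrank hind
    ((Fintype.card_fin 2).trans (Fact.out (p := Module.finrank ℝ V = 2)).symm)
  refine ⟨((LinearEquiv.finTwoArrow ℝ ℝ).symm.trans B.equivFun.symm).toContinuousLinearEquiv,
    fun s t => ?_⟩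
  simp [B, Module.Basis.equivFun_symm_apply, Fin.sum_univ_two]

lemma hasDirectPeriodicTiling_convexHull_of_parallel (o : Orientation ℝ Plane (Fin 2))
    {A B C D E : Plane} {q : ℝ} (hq : 0 < q) (hpar : A - E = q • (C - D))
    (hABC : 0 < o.areaForm (B - A) (C - A)) (hBCD : 0 < o.areaForm (C - B) (D - B))
    (hCDE : 0 < o.areaForm (D - C) (E - C)) (hEAB : 0 < o.areaForm (A - E) (B - E)) :
    HasDirectPeriodicTiling (convexHull ℝ {A, B, C, D, E}) := by
  rw [areaForm_sub_sub_rotate] at hCDE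
  obtain ⟨φ, hφ⟩ := exists_continuousLinearEquiv_prod_apply_eq
    (linearIndependent_pair_of_areaForm_ne_zero o hCDE.ne')
  set M := midpoint ℝ D E with hM
  obtain ⟨⟨b, β⟩, hbβ⟩ := φ.surjective (B - M)
  have hmid : M = (1 / 2 : ℝ) • (D + E) := by rw [hM, midpoint_eq_smul_add, one_div, invOf_eq_inv]
  have hD : D = M + φ (-1 / 2, 0) := by rw [hφ, hmid]; module
  have hE : E = M + φ (1 / 2, 0) := by rw [hφ, hmid]; module
  have hC : C = M + φ (-1 / 2, 1) := by rw [hφ, hmid]; module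
  have hA : A = M + φ (1 / 2, q) := by
    rw [sub_eq_iff_eq_add.1 hpar, hφ, hmid]
    module
  have hB : B = M + φ (b, β) := by rw [hbβ]; abel
  have hφarea (p₁ p₂ p₃ : ℝ × ℝ) :
      o.areaForm (M + φ p₂ - (M + φ p₁)) (M + φ p₃ - (M + φ p₁)) =
        ((p₂ - p₁).1 * (p₃ - p₁).2 - (p₂ - p₁).2 * (p₃ - p₁).1) *
          o.areaForm (E - D) (C - D) := by
    rw [add_sub_add_left_eq_sub, add_sub_add_left_eq_sub, ← map_sub, ← map_sub,
      ← areaForm_smul_add_smul, ← hφ, ← hφ]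
  rw [hB, hC, hD, hφarea, mul_pos_iff_of_pos_right hCDE] at hBCD
  rw [hA, hE, hB, hφarea, mul_pos_iff_of_pos_right hCDE] at hEAB
  rw [hA, hB, hC, hφarea, mul_pos_iff_of_pos_right hCDE] at hABC
  simp only [Prod.mk_sub_mk] at hBCD hEAB hABC
  have hb₁ : -(1 / 2) < b := by linarith
  have hb₂ : b < 1 / 2 := by
    have := pos_of_mul_pos_right (show 0 < q * (1 / 2 - b) by linarith) hq.le
    linarith
  rw [hA, hB, hC, hD, hE]
  exact hasDirectPeriodicTiling_convexHull_image φ M (abs_lt.2 ⟨hb₁, hb₂⟩) one_pos hq (by linarith)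

end Tiling

/-- every convex pentagon with three consecutive angles summing to
360° (Type 1) admits a periodic monohedral tiling using only direct isometric
copies (no reflected tiles). -/
theorem statement_2 (P : ConvexPentagon)
    (h1 : ∃ k : Fin 5, P.angle k + P.angle (k + 1) + P.angle (k + 2) = 2 * Real.pi) :
    ∃ T : Set (Set Plane), IsMonohedralTiling P.carrier T ∧ IsPeriodic T ∧
      ∀ t ∈ T, ∃ g : Plane ≃ᵢ Plane, IsDirectIsometry g ∧ t = g '' P.carrier := by
  obtain ⟨k, hk⟩ := h1
  obtain ⟨o, ho⟩ := P.exists_isCounterclockwise (by norm_num)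
  obtain ⟨htwo, hfour⟩ : k + 2 = k + 1 + 1 ∧ k - 1 = k + 1 + 1 + 1 + 1 := by
    clear hk
    decide +revert
  rw [htwo] at hk
  obtain ⟨q, hq, hparallel⟩ := ho.exists_side_eq_smul hk
  have hbase := ho (k + 1 + 1)
  have hside := ho (k - 1)
  rw [← hfour] at hbase
  rw [sub_add_cancel] at hside
  rw [P.carrier_eq_convexHull k]
  exact hasDirectPeriodicTiling_convexHull_of_parallel o hq hparallel (ho k) (ho (k + 1)) hbase
    hside
end
end
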